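/- arXiv:1109.0320 — 4 statements merged into one kernel-verified Lean document; each statement's English description precedes it below -/
import Mathlib

section
/- Under conditions (A.1)–(A.7), for any given η = (βᵀ,θᵀ)ᵀ ∈ ℝ^p × Ω, when the data are generated from the model with parameter η (i.e., y ~ N(Xβ, Γ(θ))), the score and Hessian of the log-likelihood satisfy, as n → ∞: N_n^{−1/2} ℓ'(η) converges in distribution to N(0, J(η)) and N_n^{−1} ℓ''(η) converges in probability to −J(η), where J(η) = diag{J(β), J(θ)}. -/
open MeasureTheory ProbabilityTheory Filter Matrix
open scoped ENNReal NNReal Topology BigOperators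

noncomputable section

/-- A probability measure on `ι → ℝ` is the (possibly degenerate) multivariate Gaussian with
mean vector `m` and covariance matrix `S` if every linear functional of it is a real Gaussian
with the corresponding mean and variance. -/
def IsGaussianVector {ι : Type*} [Fintype ι] (μ : Measure (ι → ℝ)) (m : ι → ℝ)
    (S : Matrix ι ι ℝ) : Prop :=
  IsProbabilityMeasure μ ∧
    ∀ a : ι → ℝ,
      μ.map (fun x => ∑ i, a i * x i) =
        gaussianReal (∑ i, a i * m i) (Real.toNNReal (a ⬝ᵥ S.mulVec a))

/-- Convergence in distribution (weak convergence of the laws) of a sequence of random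
elements `Z n` to a limiting law `μ`. -/
def TendstoInDistribution {Ωs : Type*} [MeasurableSpace Ωs] (P : Measure Ωs)
    {E : Type*} [MeasurableSpace E] [TopologicalSpace E]
    (Z : ℕ → Ωs → E) (μ : Measure E) : Prop :=
  ∀ f : BoundedContinuousFunction E ℝ,
    Tendsto (fun n => ∫ ω, f (Z n ω) ∂P) atTop (𝓝 (∫ x, f x ∂μ))

/-- `Z n = O_p(r n)` : for every `ε > 0` there is a constant `C` such that eventually
`P(Z n > C * r n) < ε`. -/
def IsBigOp {Ωs : Type*} [MeasurableSpace Ωs] (P : Measure Ωs)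
    (Z : ℕ → Ωs → ℝ) (r : ℕ → ℝ) : Prop :=
  ∀ ε : ℝ, 0 < ε → ∃ C : ℝ, ∀ᶠ n in atTop, (P {ω | C * r n < Z n ω}).toReal < ε

/-- Entrywise convergence in probability of a sequence of random matrices to a constant
matrix. -/
def TendstoInProbMatrix {Ωs : Type*} [MeasurableSpace Ωs] (P : Measure Ωs)
    {ι κ : Type*} (Z : ℕ → Ωs → Matrix ι κ ℝ) (c : Matrix ι κ ℝ) : Prop :=
  ∀ ε : ℝ, 0 < ε → ∀ i j,
    Tendsto (fun n => (P {ω | ε ≤ |Z n ω i j - c i j|}).toReal) atTop (𝓝 0)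

/-- The Frobenius norm of a real square matrix. -/
def frobNorm {ι : Type*} [Fintype ι] (A : Matrix ι ι ℝ) : ℝ :=
  Real.sqrt (∑ i, ∑ j, (A i j) ^ 2)

/-- Spatial linear model under increasing-domain asymptotics: at stage `n` there are `N n`
sampling sites in `ℝ^d`, a nonrandom `N n × p` design matrix `X n`, a covariance function
`γ` depending on a `q`-dimensional parameter ranging over an open set `Θ`, true regression
coefficients `β0` and true covariance parameter `θ0`, and data `y n` defined on a common
probability space. -/
structure SpatialModel (d p q : ℕ) where
  /-- sample sizes -/
  N : ℕ → ℕ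
  hN : Tendsto N atTop atTop
  /-- sampling sites -/
  sites : ∀ n, Fin (N n) → EuclideanSpace ℝ (Fin d)
  /-- design matrices -/
  X : ∀ n, Matrix (Fin (N n)) (Fin p) ℝ
  /-- covariance parameter space -/
  Θ : Set (Fin q → ℝ)
  hΘ : IsOpen Θ
  /-- covariance function -/
  γ : EuclideanSpace ℝ (Fin d) → EuclideanSpace ℝ (Fin d) → (Fin q → ℝ) → ℝ
  /-- true regression coefficients -/
  β0 : Fin p → ℝ
  /-- true covariance parameter -/
  θ0 : Fin q → ℝ
  hθ0 : θ0 ∈ Θ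
  /-- sample space -/
  Ωs : Type
  mΩ : MeasurableSpace Ωs
  P : @Measure Ωs mΩ
  hP : @IsProbabilityMeasure Ωs mΩ P
  /-- observed responses -/
  y : ∀ n, Ωs → Fin (N n) → ℝ

attribute [instance] SpatialModel.mΩ
attribute [instance] SpatialModel.hP

namespace SpatialModel

variable {d p q : ℕ} (M : SpatialModel d p q)

/-- The covariance matrix `Γ(θ)` at stage `n`. -/
def Γ (n : ℕ) (θ : Fin q → ℝ) : Matrix (Fin (M.N n)) (Fin (M.N n)) ℝ :=
  Matrix.of fun i j => M.γ (M.sites n i) (M.sites n j) θ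

/-- The entrywise partial derivative `Γ_k = ∂Γ/∂θ_k`. -/
def Γd (n : ℕ) (k : Fin q) (θ : Fin q → ℝ) : Matrix (Fin (M.N n)) (Fin (M.N n)) ℝ :=
  Matrix.of fun i j =>
    fderiv ℝ (fun t => M.γ (M.sites n i) (M.sites n j) t) θ (Pi.single k 1)

/-- The entrywise second partial derivative `Γ_{kk'} = ∂²Γ/∂θ_k∂θ_{k'}`. -/
def Γdd (n : ℕ) (k k' : Fin q) (θ : Fin q → ℝ) : Matrix (Fin (M.N n)) (Fin (M.N n)) ℝ :=
  Matrix.of fun i j =>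
    fderiv ℝ (fun t =>
      fderiv ℝ (fun t' => M.γ (M.sites n i) (M.sites n j) t') t (Pi.single k' 1))
      θ (Pi.single k 1)

/-- `t_{kk'} = tr(Γ⁻¹ Γ_k Γ⁻¹ Γ_{k'})` at the true parameter. -/
def tmat (n : ℕ) (k k' : Fin q) : ℝ :=
  ((M.Γ n M.θ0)⁻¹ * M.Γd n k M.θ0 * (M.Γ n M.θ0)⁻¹ * M.Γd n k' M.θ0).trace

/-- The Gaussian log-likelihood `ℓ(η)` at stage `n`. -/
def loglik (n : ℕ) (η : (Fin p → ℝ) × (Fin q → ℝ)) (ω : M.Ωs) : ℝ :=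
  -((M.N n : ℝ) / 2) * Real.log (2 * Real.pi)
    - (1 / 2) * Real.log ((M.Γ n η.2).det)
    - (1 / 2) * ((M.y n ω - (M.X n).mulVec η.1) ⬝ᵥ
        ((M.Γ n η.2)⁻¹.mulVec (M.y n ω - (M.X n).mulVec η.1)))

/-- The Fisher information for `β`: `I(β) = Xᵀ Γ⁻¹ X`. -/
def Iβ (n : ℕ) : Matrix (Fin p) (Fin p) ℝ := (M.X n)ᵀ * (M.Γ n M.θ0)⁻¹ * M.X n

/-- The Fisher information for `θ`: `I(θ)_{kk'} = t_{kk'}/2`. -/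
def Iθ (n : ℕ) : Matrix (Fin q) (Fin q) ℝ := Matrix.of fun k k' => M.tmat n k k' / 2

/-- The data are Gaussian: `y ∼ N(X β0, Γ(θ0))`. -/
def GaussianData : Prop :=
  (∀ n, Measurable (M.y n)) ∧
    ∀ n, IsGaussianVector ((M.P).map (M.y n)) ((M.X n).mulVec M.β0) (M.Γ n M.θ0)

/-- `β0 = (β10ᵀ, β20ᵀ)ᵀ` where the first `s` entries are nonzero and the rest are zero. -/
def SparseTruth (s : ℕ) : Prop :=
  (∀ j : Fin p, (j : ℕ) < s → M.β0 j ≠ 0) ∧ (∀ j : Fin p, s ≤ (j : ℕ) → M.β0 j = 0)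

/-- (A.1) The covariance function is twice continuously differentiable in `θ` and positive
definite. -/
def A1 : Prop :=
  (∀ n (i j : Fin (M.N n)),
      ContDiffOn ℝ 2 (fun θ => M.γ (M.sites n i) (M.sites n j) θ) M.Θ) ∧
    ∀ n, ∀ θ ∈ M.Θ, (M.Γ n θ).PosDef

/-- (A.2) The largest eigenvalue of `Γ` and the largest absolute eigenvalues of `Γ_k`,
`Γ_{kk'}` converge to finite constants. -/
def A2 : Prop :=
  (∃ C : ℝ, Tendsto (fun n => sSup (spectrum ℝ (M.Γ n M.θ0))) atTop (𝓝 C)) ∧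
    (∀ k, ∃ Ck : ℝ,
      Tendsto (fun n => sSup ((fun x => |x|) '' spectrum ℝ (M.Γd n k M.θ0))) atTop (𝓝 Ck)) ∧
    ∀ k k', ∃ Ckk : ℝ,
      Tendsto (fun n => sSup ((fun x => |x|) '' spectrum ℝ (M.Γdd n k k' M.θ0))) atTop (𝓝 Ckk)

/-- (A.3) Growth of the Frobenius norms of the derivative matrices, with exponent `δ`. -/
def A3With (δ : ℝ) : Prop :=
  0 < δ ∧
    (∀ k, ∃ D : ℝ, 0 < D ∧ ∀ n,
      (frobNorm (M.Γd n k M.θ0))⁻¹ ^ 2 = D * (M.N n : ℝ) ^ (-(1 / 2) - δ : ℝ)) ∧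
    ∀ k k', k ≠ k' →
      (∃ D : ℝ, 0 < D ∧ ∀ n,
        (frobNorm (M.Γd n k M.θ0 + M.Γd n k' M.θ0))⁻¹ ^ 2 =
          D * (M.N n : ℝ) ^ (-(1 / 2) - δ : ℝ)) ∨
      (∃ D : ℝ, 0 < D ∧ ∀ n,
        (frobNorm (M.Γd n k M.θ0 - M.Γd n k' M.θ0))⁻¹ ^ 2 =
          D * (M.N n : ℝ) ^ (-(1 / 2) - δ : ℝ))

/-- (A.3) -/
def A3 : Prop := ∃ δ : ℝ, M.A3With δ

/-- (A.4) The normalized information cross-terms converge to a nonsingular matrix, and the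
diagonal ratios are bounded. -/
def A4 : Prop :=
  (∃ A : Matrix (Fin q) (Fin q) ℝ, A.det ≠ 0 ∧ ∀ k k',
    Tendsto (fun n => M.tmat n k k' / Real.sqrt (M.tmat n k k * M.tmat n k' k'))
      atTop (𝓝 (A k k'))) ∧
    ∀ k k', ∃ B : ℝ, ∀ n, |M.tmat n k k / M.tmat n k' k'| ≤ B

/-- (A.5) The design matrices have full rank `p`, uniformly bounded entries, and
`(XᵀX)⁻¹ → 0`. -/
def A5 : Prop :=
  (∀ n, (M.X n).rank = p) ∧
    (∃ B : ℝ, ∀ n i j, |M.X n i j| ≤ B) ∧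
    Tendsto (fun n => ((M.X n)ᵀ * M.X n)⁻¹) atTop (𝓝 0)

/-- (A.6) The spectral norm of `Γ⁻¹` is bounded. -/
def A6 : Prop :=
  ∃ C0 : ℝ, ∀ n, ∀ x ∈ spectrum ℝ ((M.Γ n M.θ0)⁻¹), |x| < C0

/-- (A.7) The normalized information matrices converge to positive definite limits
`J(β)` and `J(θ)`. -/
def A7 (Jβ : Matrix (Fin p) (Fin p) ℝ) (Jθ : Matrix (Fin q) (Fin q) ℝ) : Prop :=
  Jβ.PosDef ∧ Jθ.PosDef ∧
    Tendsto (fun n => (M.N n : ℝ)⁻¹ • M.Iβ n) atTop (𝓝 Jβ) ∧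
    Tendsto (fun n => (M.N n : ℝ)⁻¹ • M.Iθ n) atTop (𝓝 Jθ)

end SpatialModel

/-- A penalty function family `p_λ` with tuning parameter sequence `λ_n`. -/
structure Penalty where
  /-- the penalty function: `pen l t = p_l(t)` -/
  pen : ℝ → ℝ → ℝ
  /-- the tuning parameter sequence -/
  lam : ℕ → ℝ
  pen_zero : ∀ l, pen l 0 = 0
  pen_nonneg : ∀ l t, 0 ≤ pen l t

namespace Penalty

/-- `p'_λ` -/
def d1 (Pn : Penalty) (l t : ℝ) : ℝ := deriv (Pn.pen l) t

/-- `p''_λ` -/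
def d2 (Pn : Penalty) (l t : ℝ) : ℝ := deriv (deriv (Pn.pen l)) t

/-- (A.9) Local Lipschitz continuity of `p''_{λ_n}` beyond `c₁ λ_n`. -/
def A9 (Pn : Penalty) : Prop :=
  ∃ c1 c2 : ℝ, 0 < c1 ∧ 0 < c2 ∧ ∀ n (b1 b2 : ℝ), c1 * Pn.lam n < b1 → c1 * Pn.lam n < b2 →
    |Pn.d2 (Pn.lam n) b1 - Pn.d2 (Pn.lam n) b2| ≤ c2 * |b1 - b2|

/-- (A.11) -/
def A11 (Pn : Penalty) : Prop :=
  0 < Filter.liminf (fun n =>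
    Filter.liminf (fun b => (Pn.lam n)⁻¹ * Pn.d1 (Pn.lam n) b) (𝓝[>] (0 : ℝ))) atTop

end Penalty

namespace SpatialModel

variable {d p q : ℕ} (M : SpatialModel d p q)

/-- `a_n = max{|p'_{λ_n}(|β_{j0}|)| : β_{j0} ≠ 0}`. -/
def aseq (Pn : Penalty) (n : ℕ) : ℝ :=
  sSup {x | ∃ j : Fin p, M.β0 j ≠ 0 ∧ x = |Pn.d1 (Pn.lam n) (abs (M.β0 j))|}

/-- `b_n = max{|p''_{λ_n}(|β_{j0}|)| : β_{j0} ≠ 0}`. -/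
def bseq (Pn : Penalty) (n : ℕ) : ℝ :=
  sSup {x | ∃ j : Fin p, M.β0 j ≠ 0 ∧ x = |Pn.d2 (Pn.lam n) (abs (M.β0 j))|}

/-- The penalized log-likelihood `Q(η) = ℓ(η) - N_n ∑_j p_{λ_n}(|β_j|)`. -/
def Q (Pn : Penalty) (n : ℕ) (η : (Fin p → ℝ) × (Fin q → ℝ)) (ω : M.Ωs) : ℝ :=
  M.loglik n η ω - (M.N n : ℝ) * ∑ j, Pn.pen (Pn.lam n) |η.1 j|

/-- (A.8) `a_n = O(N_n^{-1/2})` and `b_n → 0`. -/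
def A8 (Pn : Penalty) : Prop :=
  (∃ C : ℝ, ∀ᶠ n in atTop, M.aseq Pn n ≤ C * (Real.sqrt (M.N n))⁻¹) ∧
    Tendsto (M.bseq Pn) atTop (𝓝 0)

/-- (A.10) `λ_n → 0` and `N_n^{1/2} λ_n → ∞`. -/
def A10 (Pn : Penalty) : Prop :=
  Tendsto Pn.lam atTop (𝓝 0) ∧
    Tendsto (fun n => Real.sqrt (M.N n) * Pn.lam n) atTop atTop

end SpatialModel

/-- The coordinate directions in the parameter space `ℝ^p × ℝ^q`. -/
def paramBasis (p q : ℕ) : (Fin p ⊕ Fin q) → (Fin p → ℝ) × (Fin q → ℝ)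
  | Sum.inl j => (Pi.single j 1, 0)
  | Sum.inr k => (0, Pi.single k 1)

namespace SpatialModel

variable {d p q : ℕ} (M : SpatialModel d p q)

/-- The score `ℓ'(η)`, i.e. the gradient of the log-likelihood in `η = (β, θ)`. -/
def score (n : ℕ) (η : (Fin p → ℝ) × (Fin q → ℝ)) (ω : M.Ωs) : (Fin p ⊕ Fin q) → ℝ :=
  fun i => fderiv ℝ (fun η' => M.loglik n η' ω) η (paramBasis p q i)

/-- The Hessian `ℓ''(η)` of the log-likelihood in `η = (β, θ)`. -/
def hess (n : ℕ) (η : (Fin p → ℝ) × (Fin q → ℝ)) (ω : M.Ωs) :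
    Matrix (Fin p ⊕ Fin q) (Fin p ⊕ Fin q) ℝ :=
  Matrix.of fun i i' =>
    fderiv ℝ (fun η' => fderiv ℝ (fun η'' => M.loglik n η'' ω) η' (paramBasis p q i'))
      η (paramBasis p q i)

end SpatialModel

open MeasureTheory ProbabilityTheory Filter Matrix SpatialModel
open scoped ENNReal NNReal Topology BigOperators


lemma aux_gauss_char (v lam : ℝ) :
    ∫ x : ℝ, Complex.exp (Complex.I * ((v * x + lam / 2 * (x ^ 2 - 1) : ℝ) : ℂ)) ∂(gaussianReal 0 1)
      = Complex.exp (-(1 / 2) * Complex.log (1 - Complex.I * lam) - Complex.I * lam / 2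
          - v ^ 2 / (2 * (1 - Complex.I * lam))) := by
  rw [integral_gaussianReal_eq_integral_smul (by norm_num)]
  set b : ℂ := -(1 / 2) + Complex.I * lam / 2 with hb
  have hbre : b.re < 0 := by simp [hb]
  have h1 : ∀ x : ℝ, gaussianPDFReal 0 1 x • Complex.exp (Complex.I * ((v * x + lam / 2 * (x ^ 2 - 1) : ℝ) : ℂ))
      = ((Real.sqrt (2 * Real.pi))⁻¹ : ℂ) * Complex.exp (b * x ^ 2 + (Complex.I * v) * x + (-(Complex.I * lam / 2))) := by
    intro x
    rw [gaussianPDFReal, Complex.real_smul]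
    push_cast
    rw [mul_assoc, ← Complex.exp_add]
    congr 2
    · simp
    · rw [hb]; ring
  simp_rw [h1]
  rw [integral_const_mul, integral_cexp_quadratic hbre]
  have hz : (1 - Complex.I * lam) ≠ 0 := by
    intro h
    have := congrArg Complex.re h
    simp at this
  have hpi : (0 : ℝ) < 2 * Real.pi := by positivity
  have harg : (1 - Complex.I * (lam : ℂ)).arg ≠ Real.pi := by
    intro h
    rw [Complex.arg_eq_pi_iff] at h
    have := h.1
    simp at this
    linarith
  have h2 : (Real.pi / -b : ℂ) = ((2 * Real.pi : ℝ) : ℂ) * (1 - Complex.I * lam)⁻¹ := by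
    have : -b = (1 - Complex.I * lam) / 2 := by rw [hb]; ring
    rw [this]; push_cast; field_simp
  have h3 : (Real.pi / -b : ℂ) ^ (1 / 2 : ℂ) = (Real.sqrt (2 * Real.pi) : ℂ) *
      Complex.exp (-(1 / 2) * Complex.log (1 - Complex.I * lam)) := by
    rw [h2, Complex.cpow_def_of_ne_zero (mul_ne_zero (by exact_mod_cast hpi.ne') (inv_ne_zero hz)),
      Complex.log_ofReal_mul hpi (inv_ne_zero hz), add_mul, Complex.exp_add, Complex.log_inv _ harg]
    congr 1
    · rw [Real.sqrt_eq_rpow, Complex.ofReal_cpow hpi.le, Complex.cpow_def_of_ne_zero (by exact_mod_cast hpi.ne'),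
        Complex.ofReal_log hpi.le]
      norm_num
    · congr 1; ring
  rw [h3]
  have hs : (Real.sqrt (2 * Real.pi) : ℂ) ≠ 0 := by
    exact_mod_cast (Real.sqrt_pos.mpr hpi).ne'
  rw [← mul_assoc, ← mul_assoc, inv_mul_cancel₀ hs, one_mul, ← Complex.exp_add]
  congr 1
  have : 4 * b = -(2 * (1 - Complex.I * lam)) := by rw [hb]; ring
  rw [this, mul_pow, Complex.I_sq]
  field_simp
  ring

lemma aux_log_bound (v lam : ℝ) (h : |lam| ≤ 1 / 2) :
    ‖(-(1 / 2) * Complex.log (1 - Complex.I * lam) - Complex.I * lam / 2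
          - v ^ 2 / (2 * (1 - Complex.I * lam)) : ℂ) - ((-(lam ^ 2 / 4) - v ^ 2 / 2 : ℝ) : ℂ)‖
      ≤ (lam ^ 2 + v ^ 2) * |lam| := by
  set z : ℂ := Complex.I * lam with hz
  have hzn : ‖z‖ = |lam| := by simp [hz]
  have hz2 : z ^ 2 = -((lam : ℂ) ^ 2) := by rw [hz, mul_pow, Complex.I_sq]; ring
  have hz1 : ‖-z‖ < 1 := by rw [norm_neg, hzn]; linarith
  have h1 := Complex.norm_log_sub_logTaylor_le 2 hz1
  have h2 : Complex.logTaylor (2 + 1) (-z) = -z - z ^ 2 / 2 := by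
    simp [Complex.logTaylor, Finset.sum_range_succ]; ring
  rw [h2, norm_neg, hzn] at h1
  have hinv : (1 - |lam|)⁻¹ ≤ 2 := by
    rw [inv_le_comm₀ (by linarith) (by norm_num)]; linarith
  have h1' : ‖Complex.log (1 + -z) - (-z - z ^ 2 / 2)‖ ≤ |lam| ^ 3 := by
    refine h1.trans ?_
    have : |lam| ^ (2 + 1) * (1 - |lam|)⁻¹ ≤ |lam| ^ 3 * 2 := by gcongr
    norm_num at this ⊢
    have h0 : 0 ≤ |lam| ^ 3 := by positivity
    linarith
  have hne : (1 - z) ≠ 0 := by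
    intro h
    have := congrArg Complex.re h
    simp [hz] at this
  have hn1 : 1 / 2 ≤ ‖1 - z‖ := by
    have := norm_sub_norm_le (1 : ℂ) z
    rw [norm_one, hzn] at this
    linarith
  have h3 : ‖(v : ℂ) ^ 2 / (2 * (1 - z)) - v ^ 2 / 2‖ ≤ v ^ 2 * |lam| := by
    have : (v : ℂ) ^ 2 / (2 * (1 - z)) - v ^ 2 / 2 = v ^ 2 * z / (2 * (1 - z)) := by
      field_simp; ring
    rw [this, norm_div, norm_mul _ z, norm_mul 2, norm_pow, Complex.norm_real, hzn]
    rw [Real.norm_eq_abs, sq_abs, div_le_iff₀ (by simp only [Complex.norm_ofNat]; linarith)]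
    have : 0 ≤ v ^ 2 * |lam| := by positivity
    simp only [Complex.norm_ofNat]
    nlinarith
  have h4 : (-(1 / 2) * Complex.log (1 - z) - z / 2
          - v ^ 2 / (2 * (1 - z)) : ℂ) - ((-(lam ^ 2 / 4) - v ^ 2 / 2 : ℝ) : ℂ)
      = -(1 / 2) * (Complex.log (1 + -z) - (-z - z ^ 2 / 2)) - ((v : ℂ) ^ 2 / (2 * (1 - z)) - v ^ 2 / 2) := by
    push_cast
    rw [hz2, sub_eq_add_neg 1 z]; ring
  rw [h4]
  refine (norm_sub_le _ _).trans ?_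
  have h5 : ‖(-(1 / 2) : ℂ) * (Complex.log (1 + -z) - (-z - z ^ 2 / 2))‖ ≤ |lam| ^ 3 := by
    rw [norm_mul]
    have : ‖(-(1 / 2) : ℂ)‖ = 1 / 2 := by simp
    rw [this]
    have h0 : 0 ≤ |lam| ^ 3 := by positivity
    linarith
  have h6 : |lam| ^ 3 = lam ^ 2 * |lam| := by rw [← sq_abs]; ring
  rw [h6] at h5
  linarith

lemma aux_char_limit {N : ℕ → ℕ} (v lam : ∀ n, Fin (N n) → ℝ) (m : ℕ → ℝ)
    (hm : Tendsto m atTop (𝓝 0)) (hlam : ∀ᶠ n in atTop, ∀ i, |lam n i| ≤ m n) (s r : ℝ)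
    (hs : Tendsto (fun n => ∑ i, lam n i ^ 2) atTop (𝓝 (2 * s)))
    (hr : Tendsto (fun n => ∑ i, v n i ^ 2) atTop (𝓝 r)) :
    Tendsto (fun n => ∏ i, Complex.exp (-(1 / 2) * Complex.log (1 - Complex.I * lam n i) - Complex.I * lam n i / 2
          - v n i ^ 2 / (2 * (1 - Complex.I * lam n i)))) atTop
      (𝓝 (Complex.exp ((-((s + r) / 2) : ℝ) : ℂ))) := by
  simp_rw [← Complex.exp_sum]
  refine (Complex.continuous_exp.tendsto _).comp ?_
  have hmain : Tendsto (fun n => ((-((∑ i, lam n i ^ 2) / 4) - (∑ i, v n i ^ 2) / 2 : ℝ) : ℂ)) atTop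
      (𝓝 ((-((s + r) / 2) : ℝ) : ℂ)) := by
    refine (Complex.continuous_ofReal.tendsto _).comp ?_
    have := ((hs.div_const 4).neg).sub (hr.div_const 2)
    convert this using 2
    ring
  have hdiff : Tendsto (fun n => ∑ i, (-(1 / 2) * Complex.log (1 - Complex.I * lam n i) - Complex.I * lam n i / 2
          - v n i ^ 2 / (2 * (1 - Complex.I * lam n i))) -
        ((-((∑ i, lam n i ^ 2) / 4) - (∑ i, v n i ^ 2) / 2 : ℝ) : ℂ)) atTop (𝓝 0) := by
    have hb : Tendsto (fun n => ((∑ i, lam n i ^ 2) + ∑ i, v n i ^ 2) * m n) atTop (𝓝 0) := by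
      simpa using (hs.add hr).mul hm
    refine squeeze_zero_norm' ?_ hb
    have hm' : ∀ᶠ n in atTop, m n ≤ 1 / 2 := hm.eventually_le_const (by norm_num)
    filter_upwards [hlam, hm'] with n h1 h2
    have : ((-((∑ i, lam n i ^ 2) / 4) - (∑ i, v n i ^ 2) / 2 : ℝ) : ℂ) =
        ∑ i, ((-(lam n i ^ 2 / 4) - v n i ^ 2 / 2 : ℝ) : ℂ) := by
      rw [← Complex.ofReal_sum, Finset.sum_sub_distrib, Finset.sum_neg_distrib, Finset.sum_div,
        Finset.sum_div]
    rw [this, ← Finset.sum_sub_distrib]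
    refine (norm_sum_le _ _).trans ?_
    rw [← Finset.sum_add_distrib, Finset.sum_mul]
    refine Finset.sum_le_sum fun i _ => ?_
    refine (aux_log_bound _ _ ((h1 i).trans h2)).trans ?_
    gcongr
    exact h1 i
  simpa using hdiff.add hmain


section gaussred
open scoped Matrix.Norms.L2Operator

lemma aux_spectral {m : Type*} [Fintype m] [DecidableEq m] (A : Matrix m m ℝ) (hA : A.IsHermitian) :
    ∃ (U : Matrix m m ℝ), U * Uᵀ = 1 ∧ Uᵀ * U = 1 ∧ A = U * diagonal hA.eigenvalues * Uᵀ := by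
  refine ⟨hA.eigenvectorUnitary, ?_, ?_, ?_⟩
  · exact Unitary.coe_mul_star_self hA.eigenvectorUnitary
  · exact Unitary.coe_star_mul_self hA.eigenvectorUnitary
  · have := hA.spectral_theorem
    rw [Unitary.conjStarAlgAut_apply] at this
    rw [Matrix.star_eq_conjTranspose, conjTranspose_eq_transpose_of_trivial] at this
    exact this

lemma aux_sqrt {m : Type*} [Fintype m] [DecidableEq m] (A : Matrix m m ℝ) (hA : A.PosSemidef) :
    ∃ B : Matrix m m ℝ, B * Bᵀ = A := by
  obtain ⟨U, h1, h2, h3⟩ := aux_spectral A hA.1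
  refine ⟨U * diagonal (fun i => Real.sqrt (hA.1.eigenvalues i)), ?_⟩
  conv_rhs => rw [h3]
  rw [transpose_mul, diagonal_transpose, Matrix.mul_assoc, ← Matrix.mul_assoc (diagonal _) (diagonal _),
    diagonal_mul_diagonal, ← Matrix.mul_assoc]
  congr 3
  ext i
  exact Real.mul_self_sqrt (hA.eigenvalues_nonneg i)

lemma aux_pi_char {m : Type*} [Fintype m] (v lam : m → ℝ) :
    ∫ w : m → ℝ, Complex.exp (Complex.I * ((∑ i, (v i * w i + lam i / 2 * (w i ^ 2 - 1)) : ℝ) : ℂ))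
      ∂(Measure.pi fun _ => gaussianReal 0 1)
      = ∏ i, Complex.exp (-(1 / 2) * Complex.log (1 - Complex.I * lam i) - Complex.I * lam i / 2
          - v i ^ 2 / (2 * (1 - Complex.I * lam i))) := by
  simp_rw [Complex.ofReal_sum, Finset.mul_sum, Complex.exp_sum]
  rw [integral_fintype_prod_eq_prod (𝕜 := ℂ)
    (fun i x => Complex.exp (Complex.I * ((v i * x + lam i / 2 * (x ^ 2 - 1) : ℝ) : ℂ)))]
  exact Finset.prod_congr rfl fun i _ => aux_gauss_char _ _

lemma aux_reduction {m : Type*} [Fintype m] [DecidableEq m] (ν : Measure (m → ℝ)) (μ0 : m → ℝ)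
    (Γ A : Matrix m m ℝ) (hν : IsGaussianVector ν μ0 Γ) (hΓ : Γ.PosSemidef) (hA : A.IsHermitian) :
    ∃ (C : Matrix m m ℝ) (lam : m → ℝ), C * Cᵀ = Γ ∧ Cᵀ * A * C = diagonal lam ∧
      ν = (Measure.pi fun _ => gaussianReal 0 1).map (fun w => μ0 + C *ᵥ w) := by
  obtain ⟨B, hB⟩ := aux_sqrt Γ hΓ
  have hA' : (Bᵀ * A * B).IsHermitian := by
    have := isHermitian_conjTranspose_mul_mul B hA
    rwa [conjTranspose_eq_transpose_of_trivial] at this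
  obtain ⟨U, h1, h2, h3⟩ := aux_spectral _ hA'
  have hC : (B * U) * (B * U)ᵀ = Γ := by
    rw [transpose_mul, Matrix.mul_assoc, ← Matrix.mul_assoc U, h1, Matrix.one_mul, hB]
  refine ⟨B * U, hA'.eigenvalues, hC, ?_, ?_⟩
  · have : (B * U)ᵀ * A * (B * U) = Uᵀ * (Bᵀ * A * B) * U := by
      rw [transpose_mul]; simp only [Matrix.mul_assoc]
    rw [this]
    conv_lhs => rw [h3]
    simp only [Matrix.mul_assoc]
    rw [h2, Matrix.mul_one, ← Matrix.mul_assoc, h2, Matrix.one_mul]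
  · set C := B * U with hCdef
    have := hν.1
    have hmeas : Measurable (fun w : m → ℝ => μ0 + C *ᵥ w) := by
      apply Continuous.measurable
      fun_prop
    have : IsProbabilityMeasure ((Measure.pi fun _ : m => gaussianReal 0 1).map (fun w => μ0 + C *ᵥ w)) :=
      Measure.isProbabilityMeasure_map hmeas.aemeasurable
    apply Measure.ext_of_charFunDual
    ext L
    have hL : ∀ x : m → ℝ, L x = ∑ i, L (Pi.single i 1) * x i := by
      intro x
      conv_lhs => rw [pi_eq_sum_univ' x]
      rw [map_sum]
      refine Finset.sum_congr rfl fun i _ => ?_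
      rw [map_smul, smul_eq_mul, mul_comm]
    set a : m → ℝ := fun i => L (Pi.single i 1) with ha
    have hL' : ∀ x : m → ℝ, L x = a ⬝ᵥ x := fun x => hL x
    rw [charFunDual_apply, charFunDual_apply]
    rw [integral_map hmeas.aemeasurable (by
      apply Continuous.aestronglyMeasurable; fun_prop)]
    have hlhs : ∫ x, Complex.exp (L x * Complex.I) ∂ν = ∫ t : ℝ, Complex.exp (t * Complex.I)
        ∂(ν.map (fun x => ∑ i, a i * x i)) := by
      clear_value a
      rw [integral_map (Measurable.aemeasurable (Continuous.measurable (by fun_prop))) (by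
        apply Continuous.aestronglyMeasurable; fun_prop)]
      congr 1
      ext x
      rw [hL' x]
      rfl
    rw [hlhs, hν.2 a]
    have h5 := charFun_gaussianReal (μ := ∑ i, a i * μ0 i) (v := (a ⬝ᵥ Γ.mulVec a).toNNReal) 1
    rw [charFun_apply_real] at h5
    simp only [Complex.ofReal_one, one_mul] at h5
    rw [h5]
    have h6 := aux_pi_char (Cᵀ *ᵥ a) 0
    have h7 : ∀ w : m → ℝ, Complex.exp ((L (μ0 + C *ᵥ w) : ℂ) * Complex.I) =
       Complex.exp (((∑ i, a i * μ0 i : ℝ) : ℂ) * Complex.I) *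
       Complex.exp (Complex.I * ((∑ i, ((Cᵀ *ᵥ a) i * w i + (0 : m → ℝ) i / 2 * (w i ^ 2 - 1)) : ℝ) : ℂ)) := by
      intro w
      rw [← Complex.exp_add, hL', dotProduct_add, dotProduct_mulVec, ← mulVec_transpose]
      congr 1
      simp only [dotProduct, Pi.zero_apply, zero_div, zero_mul, add_zero]
      push_cast
      ring
    simp_rw [h7]
    rw [integral_const_mul, h6, ← Complex.exp_sum, ← Complex.exp_add]
    congr 1
    have h8 : a ⬝ᵥ Γ *ᵥ a = ∑ i, (Cᵀ *ᵥ a) i ^ 2 := by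
      rw [← hC, ← mulVec_mulVec, dotProduct_mulVec, ← mulVec_transpose]
      simp [dotProduct, sq]
    have h9 : 0 ≤ a ⬝ᵥ Γ *ᵥ a := by rw [h8]; positivity
    rw [Real.coe_toNNReal _ h9, h8]
    simp only [Pi.zero_apply, Complex.ofReal_zero, mul_zero, sub_zero, Complex.log_one, zero_div, mul_one]
    push_cast
    rw [sub_eq_add_neg, one_pow, mul_one, Finset.sum_div, ← Finset.sum_neg_distrib]
    congr 1
    refine Finset.sum_congr rfl fun i _ => ?_
    ring

lemma aux_package {m : Type*} [Fintype m] [DecidableEq m] (ν : Measure (m → ℝ)) (μ0 : m → ℝ)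
    (Γ A : Matrix m m ℝ) (hν : IsGaussianVector ν μ0 Γ) (hΓ : Γ.PosSemidef) (hA : A.IsHermitian)
    (u : m → ℝ) :
    ∃ v lam : m → ℝ, ∑ i, v i ^ 2 = u ⬝ᵥ Γ *ᵥ u ∧ ∑ i, lam i ^ 2 = (A * Γ * A * Γ).trace ∧
      (∀ i, |lam i| ≤ ‖A‖ * ‖Γ‖) ∧
      ν.map (fun y => u ⬝ᵥ (y - μ0) + 1 / 2 * ((y - μ0) ⬝ᵥ A *ᵥ (y - μ0) - (A * Γ).trace)) =
      (Measure.pi fun _ : m => gaussianReal 0 1).map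
        (fun w => ∑ i, (v i * w i + lam i / 2 * (w i ^ 2 - 1))) := by
  obtain ⟨C, lam, hC, hd, hlaw⟩ := aux_reduction ν μ0 Γ A hν hΓ hA
  refine ⟨Cᵀ *ᵥ u, lam, ?_, ?_, ?_, ?_⟩
  · rw [← hC, ← mulVec_mulVec, dotProduct_mulVec, ← mulVec_transpose]
    simp [dotProduct, sq]
  · have : (A * Γ * A * Γ).trace = (diagonal lam * diagonal lam).trace := by
      rw [← hC, ← hd, show A * (C * Cᵀ) * A * (C * Cᵀ) = (A * (C * Cᵀ) * A * C) * Cᵀ by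
        simp only [Matrix.mul_assoc], trace_mul_comm]
      simp only [Matrix.mul_assoc]
    rw [this, diagonal_mul_diagonal, trace_diagonal]
    simp [sq]
  · intro i
    have h1 : |lam i| ≤ ‖diagonal lam‖ := by
      rw [l2_opNorm_diagonal]; exact norm_le_pi_norm lam i
    have h2 : ‖Cᵀ‖ * ‖C‖ = ‖Γ‖ := by
      have e1 := l2_opNorm_conjTranspose_mul_self Cᵀ
      have e2 := l2_opNorm_conjTranspose C
      rw [conjTranspose_eq_transpose_of_trivial] at e1 e2
      rw [transpose_transpose, hC] at e1
      rw [e1, e2]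
    rw [← hd] at h1
    refine h1.trans ?_
    calc ‖Cᵀ * A * C‖ ≤ ‖Cᵀ‖ * ‖A‖ * ‖C‖ :=
          (l2_opNorm_mul _ _).trans (mul_le_mul_of_nonneg_right (l2_opNorm_mul _ _) (norm_nonneg _))
      _ = ‖A‖ * (‖Cᵀ‖ * ‖C‖) := by ring
      _ = _ := by rw [h2]
  · have hmeas : Measurable (fun w : m → ℝ => μ0 + C *ᵥ w) := by
      apply Continuous.measurable
      fun_prop
    rw [hlaw, Measure.map_map (by apply Continuous.measurable; fun_prop) hmeas]
    congr 1
    ext w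
    have htr : (A * Γ).trace = ∑ i, lam i := by
      rw [← hC, ← Matrix.mul_assoc, trace_mul_comm, ← Matrix.mul_assoc, hd, trace_diagonal]
    simp only [Function.comp, add_sub_cancel_left]
    have hq : C *ᵥ w ⬝ᵥ A *ᵥ (C *ᵥ w) = ∑ i, lam i * w i ^ 2 := by
      rw [dotProduct_comm, dotProduct_mulVec, ← mulVec_transpose, mulVec_mulVec, mulVec_mulVec,
        hd]
      simp only [mulVec_diagonal, dotProduct]
      exact Finset.sum_congr rfl fun i _ => by ring
    rw [hq, htr, dotProduct_mulVec, ← mulVec_transpose, ← Finset.sum_sub_distrib, Finset.mul_sum,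
      dotProduct, ← Finset.sum_add_distrib]
    exact Finset.sum_congr rfl fun i _ => by ring

lemma aux_char {m : Type*} [Fintype m] [DecidableEq m] (ν : Measure (m → ℝ)) (μ0 : m → ℝ)
    (Γ A : Matrix m m ℝ) (hν : IsGaussianVector ν μ0 Γ) (hΓ : Γ.PosSemidef) (hA : A.IsHermitian)
    (u : m → ℝ) :
    ∃ v lam : m → ℝ, ∑ i, v i ^ 2 = u ⬝ᵥ Γ *ᵥ u ∧ ∑ i, lam i ^ 2 = (A * Γ * A * Γ).trace ∧
      (∀ i, |lam i| ≤ ‖A‖ * ‖Γ‖) ∧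
      ∫ y, Complex.exp (Complex.I * ((u ⬝ᵥ (y - μ0) +
        1 / 2 * ((y - μ0) ⬝ᵥ A *ᵥ (y - μ0) - (A * Γ).trace) : ℝ) : ℂ)) ∂ν
      = ∏ i, Complex.exp (-(1 / 2) * Complex.log (1 - Complex.I * lam i) - Complex.I * lam i / 2
          - v i ^ 2 / (2 * (1 - Complex.I * lam i))) := by
  obtain ⟨v, lam, h1, h2, h3, h4⟩ := aux_package ν μ0 Γ A hν hΓ hA u
  refine ⟨v, lam, h1, h2, h3, ?_⟩
  rw [← aux_pi_char]
  have hc : Continuous (fun t : ℝ => Complex.exp (Complex.I * (t : ℂ))) := by fun_prop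
  have e1 := integral_map (μ := ν) (φ := (fun y => u ⬝ᵥ (y - μ0) + 1 / 2 * ((y - μ0) ⬝ᵥ A *ᵥ (y - μ0) - (A * Γ).trace)))
    (f := fun t : ℝ => Complex.exp (Complex.I * (t : ℂ)))
    (by apply Measurable.aemeasurable; apply Continuous.measurable; fun_prop) hc.aestronglyMeasurable
  have e2 := integral_map (μ := (Measure.pi fun _ : m => gaussianReal 0 1))
    (φ := (fun w => ∑ i, (v i * w i + lam i / 2 * (w i ^ 2 - 1))))
    (f := fun t : ℝ => Complex.exp (Complex.I * (t : ℂ)))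
    (by apply Measurable.aemeasurable; apply Continuous.measurable; fun_prop) hc.aestronglyMeasurable
  rw [← e1, h4, e2]

lemma aux_memLp_sq : MemLp (fun x : ℝ => x ^ 2 - 1) 2 (gaussianReal 0 1) := by
  have h : MemLp (fun x : ℝ => x ^ 2) 2 (gaussianReal 0 1) := by
    have h4 := memLp_id_gaussianReal' (μ := 0) (v := 1) 4 (by norm_num)
    have := h4.norm_rpow_div (q := 2)
    have e : (4 : ℝ≥0∞) / 2 = 2 := by
      rw [show (4 : ℝ≥0∞) = 2 * 2 by norm_num, ENNReal.mul_div_cancel_right (by norm_num) (by norm_num)]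
    rw [e] at this
    simpa using this
  exact h.sub (memLp_const 1)

lemma aux_int_sq : ∫ x : ℝ, (x ^ 2 - 1) ∂(gaussianReal 0 1) = 0 := by
  have h2 : MemLp (fun x : ℝ => x) 2 (gaussianReal 0 1) := memLp_id_gaussianReal' 2 (by norm_num)
  have hv := variance_fun_id_gaussianReal (μ := 0) (v := 1)
  rw [variance_eq_integral measurable_id'.aemeasurable] at hv
  simp only [integral_id_gaussianReal, sub_zero, NNReal.coe_one] at hv
  rw [integral_sub h2.integrable_sq (integrable_const _)]
  simp [hv]

lemma aux_cheb {m : Type*} [Fintype m] [DecidableEq m] (ν : Measure (m → ℝ)) (μ0 : m → ℝ)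
    (Γ A : Matrix m m ℝ) (hν : IsGaussianVector ν μ0 Γ) (hΓ : Γ.PosSemidef) (hA : A.IsHermitian)
    (u : m → ℝ) (c : ℝ) (hc : 0 < c) :
    (ν {y | c ≤ |u ⬝ᵥ (y - μ0) + 1 / 2 * ((y - μ0) ⬝ᵥ A *ᵥ (y - μ0) - (A * Γ).trace)|}).toReal ≤
      (2 * (u ⬝ᵥ Γ *ᵥ u) + (∫ x : ℝ, (x ^ 2 - 1) ^ 2 ∂(gaussianReal 0 1)) *
        (Fintype.card m * (‖A‖ * ‖Γ‖) ^ 2)) / c ^ 2 := by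
  obtain ⟨v, lam, h1, h2, h3, h4⟩ := aux_package ν μ0 Γ A hν hΓ hA u
  set K := ∫ x : ℝ, (x ^ 2 - 1) ^ 2 ∂(gaussianReal 0 1) with hK
  have hK0 : 0 ≤ K := integral_nonneg fun x => sq_nonneg _
  set f : (m → ℝ) → ℝ := fun y => u ⬝ᵥ (y - μ0) + 1 / 2 * ((y - μ0) ⬝ᵥ A *ᵥ (y - μ0) - (A * Γ).trace) with hf
  have hfm : Measurable f := by apply Continuous.measurable; fun_prop
  set g : m → ℝ → ℝ := fun i x => v i * x + lam i / 2 * (x ^ 2 - 1) with hg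
  have hgm : Measurable (fun w : m → ℝ => ∑ i, g i (w i)) := by
    apply Continuous.measurable; fun_prop
  have hS : MeasurableSet {t : ℝ | c ≤ |t|} := (isClosed_le continuous_const continuous_abs).measurableSet
  have e1 : ν {y | c ≤ |f y|} = (Measure.pi fun _ : m => gaussianReal 0 1) {w | c ≤ |∑ i, g i (w i)|} := by
    have a1 := Measure.map_apply (μ := ν) hfm hS
    have a2 := Measure.map_apply (μ := (Measure.pi fun _ : m => gaussianReal 0 1)) hgm hS
    rw [h4] at a1
    exact a1.symm.trans a2
  rw [e1]
  have hid : MemLp (fun x : ℝ => x) 2 (gaussianReal 0 1) := memLp_id_gaussianReal' 2 (by norm_num)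
  have hgL : ∀ i, MemLp (g i) 2 (gaussianReal 0 1) := fun i =>
    (hid.const_mul (v i)).add (aux_memLp_sq.const_mul (lam i / 2))
  have hgi : ∀ i, ∫ x, g i x ∂(gaussianReal 0 1) = 0 := by
    intro i
    simp only [hg]
    rw [integral_add ((hid.const_mul (v i)).integrable (by norm_num))
      ((aux_memLp_sq.const_mul (lam i / 2)).integrable (by norm_num)), integral_const_mul,
      integral_const_mul, aux_int_sq, integral_id_gaussianReal]
    simp
  have hgpi : ∀ i, MemLp (fun w : m → ℝ => g i (w i)) 2 (Measure.pi fun _ : m => gaussianReal 0 1) := fun i =>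
    (hgL i).comp_measurePreserving (measurePreserving_eval (fun _ : m => gaussianReal 0 1) i)
  have hgpi0 : ∀ i, ∫ w : m → ℝ, g i (w i) ∂(Measure.pi fun _ : m => gaussianReal 0 1) = 0 := by
    intro i
    have := (measurePreserving_eval (fun _ : m => gaussianReal 0 1) i)
    have e := integral_map (μ := Measure.pi fun _ : m => gaussianReal 0 1) this.aemeasurable (f := g i)
      (by rw [this.map_eq]; exact (hgL i).1)
    rw [this.map_eq, hgi i] at e
    exact e.symm
  have hvar : Var[∑ i, fun w : m → ℝ => g i (w i); Measure.pi fun _ : m => gaussianReal 0 1]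
      = ∑ i, Var[g i; gaussianReal 0 1] := variance_sum_pi hgL
  have hE : ∫ w, (∑ i, fun w : m → ℝ => g i (w i)) w ∂(Measure.pi fun _ : m => gaussianReal 0 1) = 0 := by
    simp only [Finset.sum_apply]
    rw [integral_finsetSum _ fun i _ => (hgpi i).integrable (by norm_num)]
    simp [hgpi0]
  have hch := meas_ge_le_variance_div_sq (μ := Measure.pi fun _ : m => gaussianReal 0 1)
    (X := ∑ i, fun w : m → ℝ => g i (w i)) (memLp_finsetSum' _ fun i _ => hgpi i) hc
  rw [hE, hvar] at hch
  simp only [sub_zero, Finset.sum_apply] at hch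
  have hvb : ∀ i, Var[g i; gaussianReal 0 1] ≤ 2 * v i ^ 2 + K * (‖A‖ * ‖Γ‖) ^ 2 := by
    intro i
    rw [variance_eq_integral (hgL i).1.aemeasurable, hgi i]
    simp only [sub_zero]
    have hid2 : ∫ x : ℝ, x ^ 2 ∂(gaussianReal 0 1) = 1 := by
      have := aux_int_sq
      rw [integral_sub hid.integrable_sq (integrable_const _)] at this
      simp at this
      linarith
    calc ∫ x, g i x ^ 2 ∂(gaussianReal 0 1)
        ≤ ∫ x, (2 * v i ^ 2 * x ^ 2 + lam i ^ 2 / 2 * (x ^ 2 - 1) ^ 2) ∂(gaussianReal 0 1) := by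
          refine integral_mono (hgL i).integrable_sq ?_ ?_
          · exact (hid.integrable_sq.const_mul _).add (aux_memLp_sq.integrable_sq.const_mul _)
          · intro x
            simp only [hg]
            nlinarith [sq_nonneg (v i * x - lam i / 2 * (x ^ 2 - 1))]
      _ = 2 * v i ^ 2 + lam i ^ 2 / 2 * K := by
          rw [integral_add (hid.integrable_sq.const_mul _) (aux_memLp_sq.integrable_sq.const_mul _),
            integral_const_mul, integral_const_mul, hid2, mul_one]
      _ ≤ _ := by
          have : lam i ^ 2 ≤ (‖A‖ * ‖Γ‖) ^ 2 := by
            rw [← sq_abs]; exact pow_le_pow_left₀ (abs_nonneg _) (h3 i) 2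
          nlinarith [sq_nonneg (lam i)]
  refine ENNReal.toReal_le_of_le_ofReal ?_ (hch.trans (ENNReal.ofReal_le_ofReal ?_))
  · rw [← h1]; positivity
  · gcongr
    refine (Finset.sum_le_sum fun i _ => hvb i).trans ?_
    rw [Finset.sum_add_distrib, ← Finset.mul_sum, h1, Finset.sum_const, Finset.card_univ, nsmul_eq_mul]
    apply le_of_eq
    ring

lemma aux_norm_le {m : Type*} [Fintype m] [DecidableEq m] (A : Matrix m m ℝ) (hA : A.IsHermitian)
    (c : ℝ) (hc : 0 ≤ c) (h : ∀ x ∈ spectrum ℝ A, |x| ≤ c) : ‖A‖ ≤ c := by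
  obtain ⟨U, h1, h2, h3⟩ := aux_spectral A hA
  have hone : ‖(1 : Matrix m m ℝ)‖ ≤ 1 := by
    rw [← diagonal_one, l2_opNorm_diagonal]
    exact (pi_norm_le_iff_of_nonneg zero_le_one).2 fun i => by simp
  have hU : ‖U‖ * ‖U‖ ≤ 1 := by
    have := l2_opNorm_conjTranspose_mul_self U
    rw [conjTranspose_eq_transpose_of_trivial, h2] at this
    rw [← this]; exact hone
  have hU2 : ‖Uᵀ‖ = ‖U‖ := by
    rw [← conjTranspose_eq_transpose_of_trivial]; exact l2_opNorm_conjTranspose U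
  have hd : ‖diagonal hA.eigenvalues‖ ≤ c := by
    rw [l2_opNorm_diagonal]
    exact (pi_norm_le_iff_of_nonneg hc).2 fun i => h _ (hA.eigenvalues_mem_spectrum_real i)
  calc ‖A‖ = ‖U * diagonal hA.eigenvalues * Uᵀ‖ := by rw [← h3]
    _ ≤ ‖U‖ * ‖diagonal hA.eigenvalues‖ * ‖Uᵀ‖ :=
      (l2_opNorm_mul _ _).trans (mul_le_mul_of_nonneg_right (l2_opNorm_mul _ _) (norm_nonneg _))
    _ = (‖U‖ * ‖U‖) * ‖diagonal hA.eigenvalues‖ := by rw [hU2]; ring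
    _ ≤ 1 * c := mul_le_mul hU hd (norm_nonneg _) zero_le_one
    _ = c := one_mul c

lemma aux_mulVec_sq {m k : Type*} [Fintype m] [DecidableEq m] [Fintype k] [DecidableEq k] (A : Matrix m k ℝ) (x : k → ℝ) :
    (A *ᵥ x) ⬝ᵥ (A *ᵥ x) ≤ ‖A‖ ^ 2 * (x ⬝ᵥ x) := by
  have h := l2_opNorm_mulVec A (WithLp.toLp 2 x)
  have h2 := pow_le_pow_left₀ (norm_nonneg _) h 2
  rw [mul_pow, EuclideanSpace.real_norm_sq_eq, EuclideanSpace.real_norm_sq_eq] at h2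
  simpa [dotProduct, sq] using h2

end gaussred


section calcm
open scoped Matrix.Norms.L2Operator

/-- `f` is differentiable at `x` with directional derivative `w` in direction `v`. -/
def AuxHD {E F : Type*} [NormedAddCommGroup E] [NormedSpace ℝ E] [NormedAddCommGroup F]
    [NormedSpace ℝ F] (f : E → F) (x v : E) (w : F) : Prop :=
  ∃ L : E →L[ℝ] F, HasFDerivAt f L x ∧ L v = w

namespace AuxHD
variable {E F : Type*} [NormedAddCommGroup E] [NormedSpace ℝ E] [NormedAddCommGroup F]
    [NormedSpace ℝ F] {x v : E} {m : Type*} [Fintype m] [DecidableEq m]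

lemma fderiv_eq {f : E → F} {w : F} (h : AuxHD f x v w) : fderiv ℝ f x v = w := by
  obtain ⟨L, h1, h2⟩ := h
  rw [h1.fderiv, h2]

lemma congr {f : E → F} {w w' : F} (h : AuxHD f x v w) (e : w = w') : AuxHD f x v w' := e ▸ h

lemma of_diff {f : E → F} (h : DifferentiableAt ℝ f x) : AuxHD f x v (fderiv ℝ f x v) :=
  ⟨_, h.hasFDerivAt, rfl⟩

lemma const (c : F) : AuxHD (fun _ : E => c) x v 0 := ⟨0, hasFDerivAt_const c x, rfl⟩

lemma clm (T : E →L[ℝ] F) : AuxHD (fun y => T y) x v (T v) := ⟨T, T.hasFDerivAt, rfl⟩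

lemma add {f g : E → F} {w z : F} (hf : AuxHD f x v w) (hg : AuxHD g x v z) :
    AuxHD (fun y => f y + g y) x v (w + z) := by
  obtain ⟨L, h1, rfl⟩ := hf
  obtain ⟨L', h1', rfl⟩ := hg
  exact ⟨_, h1.add h1', rfl⟩

lemma sub {f g : E → F} {w z : F} (hf : AuxHD f x v w) (hg : AuxHD g x v z) :
    AuxHD (fun y => f y - g y) x v (w - z) := by
  obtain ⟨L, h1, rfl⟩ := hf
  obtain ⟨L', h1', rfl⟩ := hg
  exact ⟨_, h1.sub h1', rfl⟩

lemma sum {ι : Type*} {s : Finset ι} {f : ι → E → F} {w : ι → F} (hf : ∀ i ∈ s, AuxHD (f i) x v (w i)) :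
    AuxHD (fun y => ∑ i ∈ s, f i y) x v (∑ i ∈ s, w i) := by
  classical
  induction s using Finset.induction_on with
  | empty => simpa using const (x := x) (v := v) (0 : F)
  | insert a s ha ih =>
    simp_rw [Finset.sum_insert ha]
    exact (hf a (Finset.mem_insert_self _ _)).add (ih fun i hi => hf i (Finset.mem_insert_of_mem hi))

lemma comp {G : Type*} [NormedAddCommGroup G] [NormedSpace ℝ G] {f : E → F} {g : F → G} {w : F} {z : G}
    (hg : AuxHD g (f x) w z) (hf : AuxHD f x v w) : AuxHD (fun y => g (f y)) x v z := by
  obtain ⟨L, h1, rfl⟩ := hf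
  obtain ⟨L', h1', rfl⟩ := hg
  exact ⟨_, h1'.comp x h1, rfl⟩

lemma mul {R : Type*} [NormedRing R] [NormedAlgebra ℝ R] {f g : E → R} {w z : R}
    (hf : AuxHD f x v w) (hg : AuxHD g x v z) :
    AuxHD (fun y => f y * g y) x v (w * g x + f x * z) := by
  obtain ⟨L, h1, rfl⟩ := hf
  obtain ⟨L', h1', rfl⟩ := hg
  refine ⟨_, h1.mul' h1', ?_⟩
  simp [add_comm]

lemma const_mul {f : E → ℝ} {w : ℝ} (c : ℝ) (hf : AuxHD f x v w) :
    AuxHD (fun y => c * f y) x v (c * w) :=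
  ((const c).mul hf).congr (by simp)

lemma smul_const {f : E → ℝ} {w : ℝ} (hf : AuxHD f x v w) (c : F) :
    AuxHD (fun y => f y • c) x v (w • c) := by
  obtain ⟨L, h1, rfl⟩ := hf
  exact ⟨_, h1.smul_const c, rfl⟩

lemma matrix {A : E → Matrix m m ℝ} {A' : Matrix m m ℝ} (h : ∀ i j, AuxHD (fun y => A y i j) x v (A' i j)) :
    AuxHD A x v A' := by
  have e : A = fun y => ∑ i, ∑ j, A y i j • Matrix.single i j (1 : ℝ) := by
    ext1 y
    conv_lhs => rw [matrix_eq_sum_single (A y)]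
    simp
  have e' : A' = ∑ i, ∑ j, A' i j • Matrix.single i j (1 : ℝ) := by
    conv_lhs => rw [matrix_eq_sum_single A']
    simp
  rw [e, e']
  exact sum fun i _ => sum fun j _ => (h i j).smul_const _

lemma linear {A : E → Matrix m m ℝ} {A' : Matrix m m ℝ} (h : AuxHD A x v A') (T : Matrix m m ℝ →ₗ[ℝ] F) :
    AuxHD (fun y => T (A y)) x v (T A') :=
  comp (f := A) (g := fun B => T B) (z := T A') (clm (LinearMap.toContinuousLinearMap T)) h

lemma entry {A : E → Matrix m m ℝ} {A' : Matrix m m ℝ} (h : AuxHD A x v A') (i j : m) :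
    AuxHD (fun y => A y i j) x v (A' i j) := h.linear (Matrix.entryLinearMap ℝ ℝ i j)

lemma trace {A : E → Matrix m m ℝ} {A' : Matrix m m ℝ} (h : AuxHD A x v A') :
    AuxHD (fun y => (A y).trace) x v A'.trace := h.linear (Matrix.traceLinearMap m ℝ ℝ)

lemma inv {A : E → Matrix m m ℝ} {A' : Matrix m m ℝ} (h : AuxHD A x v A') (hu : IsUnit (A x).det) :
    AuxHD (fun y => (A y)⁻¹) x v (-((A x)⁻¹ * A' * (A x)⁻¹)) := by
  have hu' : IsUnit (A x) := (Matrix.isUnit_iff_isUnit_det _).2 hu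
  obtain ⟨U, hU⟩ := hu'
  have h1 := hasFDerivAt_ringInverse (𝕜 := ℝ) U
  have h2 : AuxHD (fun B : Matrix m m ℝ => Ring.inverse B) (A x) A' (-((A x)⁻¹ * A' * (A x)⁻¹)) := by
    rw [← hU]
    refine ⟨_, h1, ?_⟩
    simp [Matrix.coe_units_inv]
  have h3 := comp (f := A) h2 h
  simpa only [Matrix.nonsing_inv_eq_ringInverse] using h3

lemma det_diff : Differentiable ℝ (fun A : Matrix m m ℝ => A.det) := by
  have h : ∀ i j, Differentiable ℝ (fun A : Matrix m m ℝ => A i j) := fun i j =>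
    (LinearMap.toContinuousLinearMap (Matrix.entryLinearMap ℝ ℝ i j)).differentiable
  simp_rw [Matrix.det_apply]
  refine Differentiable.fun_sum fun σ _ => Differentiable.const_smul ?_ _
  intro A
  exact (HasFDerivAt.finsetProd (g := fun i (A : Matrix m m ℝ) => A (σ i) i) fun i _ => (h (σ i) i A).hasFDerivAt).differentiableAt

lemma logdet {A : E → Matrix m m ℝ} {A' : Matrix m m ℝ} (h : AuxHD A x v A') (hu : (A x).det ≠ 0) :
    AuxHD (fun y => Real.log (A y).det) x v ((A x)⁻¹ * A').trace := by
  have hA : (fderiv ℝ (fun B : Matrix m m ℝ => B.det) (A x)) A' = (A x).det * ((A x)⁻¹ * A').trace := by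
    have h1 : HasDerivAt (fun t : ℝ => (A x + t • A').det)
        ((fderiv ℝ (fun B : Matrix m m ℝ => B.det) (A x)) A') 0 := by
      have h2 : HasDerivAt (fun t : ℝ => A x + t • A') A' 0 := by
        simpa using ((hasDerivAt_id (0 : ℝ)).smul_const A').const_add (A x)
      have h3 : HasFDerivAt (fun B : Matrix m m ℝ => B.det) (fderiv ℝ (fun B : Matrix m m ℝ => B.det) (A x))
        (A x + (0 : ℝ) • A') := by
          simpa using (det_diff (A x)).hasFDerivAt
      exact h3.comp_hasDerivAt (0 : ℝ) h2
    have h2 : HasDerivAt (fun t : ℝ => (A x + t • A').det) ((A x).det * ((A x)⁻¹ * A').trace) 0 := by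
      have e : ∀ t : ℝ, (A x + t • A').det = (A x).det * (1 + ((A x)⁻¹ * A').trace * t +
          ((1 + (Polynomial.X : Polynomial ℝ) • ((A x)⁻¹ * A').map Polynomial.C).det.divX.divX).eval t * t ^ 2) := by
        intro t
        rw [← Matrix.det_one_add_smul, ← Matrix.det_mul]
        congr 1
        rw [Matrix.mul_add, Matrix.mul_smul, ← Matrix.mul_assoc,
          Matrix.mul_nonsing_inv _ (isUnit_iff_ne_zero.2 hu), Matrix.one_mul, Matrix.mul_one]
      simp_rw [e]
      set Q := ((1 + (Polynomial.X : Polynomial ℝ) • ((A x)⁻¹ * A').map Polynomial.C).det.divX.divX)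
      have := (((hasDerivAt_id (0 : ℝ)).const_mul ((A x)⁻¹ * A').trace).const_add 1).add
        ((Q.hasDerivAt 0).mul ((hasDerivAt_id (0 : ℝ)).pow 2))
      have := this.const_mul (A x).det
      simpa using this
    exact h1.unique h2
  have h2 : AuxHD (fun B : Matrix m m ℝ => B.det) (A x) A' ((A x).det * ((A x)⁻¹ * A').trace) :=
    ⟨_, (det_diff (A x)).hasFDerivAt, hA⟩
  obtain ⟨L, h3, h4⟩ := comp (f := A) h2 h
  refine ⟨_, h3.log hu, ?_⟩
  simp [h4, hu]

lemma bilin {B : E → Matrix m m ℝ} {B' : Matrix m m ℝ} {r s : E → m → ℝ} {r' s' : m → ℝ}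
    (hB : AuxHD B x v B') (hr : ∀ i, AuxHD (fun y => r y i) x v (r' i))
    (hs : ∀ i, AuxHD (fun y => s y i) x v (s' i)) :
    AuxHD (fun y => r y ⬝ᵥ B y *ᵥ s y) x v (r' ⬝ᵥ B x *ᵥ s x + r x ⬝ᵥ B' *ᵥ s x + r x ⬝ᵥ B x *ᵥ s') := by
  simp only [dotProduct, mulVec]
  refine (sum fun i _ => (hr i).mul (sum fun j _ => (hB.entry i j).mul (hs j))).congr ?_
  simp only [Finset.sum_add_distrib, mul_add, add_assoc]

end AuxHD
end calcm


section likm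
open scoped Matrix.Norms.L2Operator

/-- Directional derivative of a matrix function. -/
def auxGd {q : ℕ} {m : Type*} (G : (Fin q → ℝ) → Matrix m m ℝ) (c : Fin q → ℝ) (θ : Fin q → ℝ) :
    Matrix m m ℝ := Matrix.of fun i j => fderiv ℝ (fun t => G t i j) θ c

/-- Second directional derivative of a matrix function. -/
def auxGdd {q : ℕ} {m : Type*} (G : (Fin q → ℝ) → Matrix m m ℝ) (c2 c : Fin q → ℝ) (θ : Fin q → ℝ) :
    Matrix m m ℝ := Matrix.of fun i j => fderiv ℝ (fun t => fderiv ℝ (fun t' => G t' i j) t c) θ c2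

/-- Log-likelihood, generic form. -/
def auxL {p q : ℕ} {m : Type*} [Fintype m] [DecidableEq m] (k0 : ℝ) (G : (Fin q → ℝ) → Matrix m m ℝ)
    (X : Matrix m (Fin p) ℝ) (y : m → ℝ) (η : (Fin p → ℝ) × (Fin q → ℝ)) : ℝ :=
  k0 - (1 / 2) * Real.log ((G η.2).det) - (1 / 2) * ((y - X *ᵥ η.1) ⬝ᵥ ((G η.2)⁻¹ *ᵥ (y - X *ᵥ η.1)))

/-- First directional derivative of the log-likelihood. -/
def auxF {p q : ℕ} {m : Type*} [Fintype m] [DecidableEq m] (G : (Fin q → ℝ) → Matrix m m ℝ)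
    (X : Matrix m (Fin p) ℝ) (y : m → ℝ) (b : Fin p → ℝ) (c : Fin q → ℝ)
    (η : (Fin p → ℝ) × (Fin q → ℝ)) : ℝ :=
  -(1 / 2) * ((G η.2)⁻¹ * auxGd G c η.2).trace + (X *ᵥ b) ⬝ᵥ (G η.2)⁻¹ *ᵥ (y - X *ᵥ η.1)
   + (1 / 2) * ((y - X *ᵥ η.1) ⬝ᵥ ((G η.2)⁻¹ * auxGd G c η.2 * (G η.2)⁻¹) *ᵥ (y - X *ᵥ η.1))

lemma aux_symm_dot {m : Type*} [Fintype m] {S : Matrix m m ℝ} (hS : Sᵀ = S) (x z : m → ℝ) :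
    x ⬝ᵥ S *ᵥ z = z ⬝ᵥ S *ᵥ x := by
  rw [dotProduct_mulVec, ← mulVec_transpose, hS, dotProduct_comm]

variable {p q : ℕ} {m : Type*} [Fintype m] [DecidableEq m] {G : (Fin q → ℝ) → Matrix m m ℝ}
    {Θ : Set (Fin q → ℝ)}

lemma aux_Gd_symm (hΘ : IsOpen Θ) (hpd : ∀ θ ∈ Θ, (G θ).PosDef) (c : Fin q → ℝ) {θ : Fin q → ℝ} (hθ : θ ∈ Θ) :
    (auxGd G c θ)ᵀ = auxGd G c θ := by
  ext i j
  simp only [auxGd, transpose_apply, of_apply]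
  congr 1
  apply Filter.EventuallyEq.fderiv_eq
  filter_upwards [hΘ.mem_nhds hθ] with t ht
  simpa using (hpd t ht).1.apply i j

lemma aux_Gdd_symm (hΘ : IsOpen Θ) (hpd : ∀ θ ∈ Θ, (G θ).PosDef) (c2 c : Fin q → ℝ) {θ : Fin q → ℝ} (hθ : θ ∈ Θ) :
    (auxGdd G c2 c θ)ᵀ = auxGdd G c2 c θ := by
  ext i j
  simp only [auxGdd, transpose_apply, of_apply]
  congr 1
  apply Filter.EventuallyEq.fderiv_eq
  filter_upwards [hΘ.mem_nhds hθ] with t ht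
  exact congrFun (congrFun (aux_Gd_symm hΘ hpd c ht) i) j

lemma aux_HD_G (hΘ : IsOpen Θ) (hC : ∀ i j, ContDiffOn ℝ 2 (fun θ => G θ i j) Θ)
    (β b : Fin p → ℝ) (c : Fin q → ℝ) {θ : Fin q → ℝ} (hθ : θ ∈ Θ) :
    AuxHD (fun η : (Fin p → ℝ) × (Fin q → ℝ) => G η.2) (β, θ) (b, c) (auxGd G c θ) := by
  apply AuxHD.matrix
  intro i j
  have h : DifferentiableAt ℝ (fun t => G t i j) θ :=
    ((hC i j).contDiffAt (hΘ.mem_nhds hθ)).differentiableAt (by norm_num)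
  have hs : AuxHD (fun η : (Fin p → ℝ) × (Fin q → ℝ) => η.2) (β, θ) (b, c) c :=
    AuxHD.clm (ContinuousLinearMap.snd ℝ (Fin p → ℝ) (Fin q → ℝ))
  exact AuxHD.comp (AuxHD.of_diff (x := θ) h) hs

lemma aux_HD_Gd (hΘ : IsOpen Θ) (hC : ∀ i j, ContDiffOn ℝ 2 (fun θ => G θ i j) Θ)
    (β b2 : Fin p → ℝ) (c2 c : Fin q → ℝ) {θ : Fin q → ℝ} (hθ : θ ∈ Θ) :
    AuxHD (fun η : (Fin p → ℝ) × (Fin q → ℝ) => auxGd G c η.2) (β, θ) (b2, c2) (auxGdd G c2 c θ) := by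
  apply AuxHD.matrix
  intro i j
  have h : DifferentiableAt ℝ (fun t => fderiv ℝ (fun t' => G t' i j) t c) θ := by
    have h1 : ContDiffAt ℝ 1 (fderiv ℝ (fun t' => G t' i j)) θ :=
      ((hC i j).contDiffAt (hΘ.mem_nhds hθ)).fderiv_right (by norm_num)
    exact (h1.differentiableAt (by norm_num)).clm_apply (differentiableAt_const c)
  have hs : AuxHD (fun η : (Fin p → ℝ) × (Fin q → ℝ) => η.2) (β, θ) (b2, c2) c2 :=
    AuxHD.clm (ContinuousLinearMap.snd ℝ (Fin p → ℝ) (Fin q → ℝ))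
  exact AuxHD.comp (AuxHD.of_diff (x := θ) h) hs

lemma aux_HD_r (X : Matrix m (Fin p) ℝ) (y : m → ℝ) (β b : Fin p → ℝ) (θ c : Fin q → ℝ) (i : m) :
    AuxHD (fun η : (Fin p → ℝ) × (Fin q → ℝ) => (y - X *ᵥ η.1) i) (β, θ) (b, c) ((-(X *ᵥ b)) i) := by
  have h : AuxHD (fun η : (Fin p → ℝ) × (Fin q → ℝ) => ∑ j, X i j * η.1 j) (β, θ) (b, c) (∑ j, X i j * b j) :=
    AuxHD.sum fun j _ => AuxHD.const_mul _
      (AuxHD.clm ((ContinuousLinearMap.proj j).comp (ContinuousLinearMap.fst ℝ (Fin p → ℝ) (Fin q → ℝ))))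
  have h2 := (AuxHD.const (x := (β, θ)) (v := (b, c)) (y i)).sub h
  exact h2.congr (by simp [mulVec, dotProduct])

lemma aux_det_ne {θ : Fin q → ℝ} (hpd : (G θ).PosDef) : (G θ).det ≠ 0 := hpd.det_pos.ne'

lemma aux_HD_L (hΘ : IsOpen Θ) (hC : ∀ i j, ContDiffOn ℝ 2 (fun θ => G θ i j) Θ)
    (hpd : ∀ θ ∈ Θ, (G θ).PosDef) (k0 : ℝ) (X : Matrix m (Fin p) ℝ) (y : m → ℝ)
    (β b : Fin p → ℝ) (c : Fin q → ℝ) {θ : Fin q → ℝ} (hθ : θ ∈ Θ) :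
    AuxHD (auxL k0 G X y) (β, θ) (b, c) (auxF G X y b c (β, θ)) := by
  have hG := aux_HD_G hΘ hC β b c hθ
  have hd := aux_det_ne (hpd θ hθ)
  have hi := hG.inv (isUnit_iff_ne_zero.2 hd)
  have hr := aux_HD_r X y β b θ c
  have h := ((AuxHD.const k0).sub ((hG.logdet hd).const_mul (1 / 2))).sub
    ((hi.bilin hr hr).const_mul (1 / 2))
  refine AuxHD.congr h ?_
  have hs : ((G θ)⁻¹)ᵀ = (G θ)⁻¹ := by
    rw [transpose_nonsing_inv]; congr 1; exact (hpd θ hθ).1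
  simp only [auxF, mulVec_neg, dotProduct_neg, neg_dotProduct, neg_mulVec]
  rw [aux_symm_dot hs (y - X *ᵥ β) (X *ᵥ b)]
  ring

/-- Quadratic-form matrix of the Hessian. -/
def auxA2 (G : (Fin q → ℝ) → Matrix m m ℝ) (c2 c θ : Fin q → ℝ) : Matrix m m ℝ :=
  -((G θ)⁻¹ * auxGd G c2 θ * (G θ)⁻¹ * auxGd G c θ * (G θ)⁻¹)
    + (G θ)⁻¹ * auxGdd G c2 c θ * (G θ)⁻¹
    - (G θ)⁻¹ * auxGd G c θ * (G θ)⁻¹ * auxGd G c2 θ * (G θ)⁻¹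

/-- Linear-form vector of the Hessian. -/
def auxu2 (G : (Fin q → ℝ) → Matrix m m ℝ) (X : Matrix m (Fin p) ℝ) (b2 b : Fin p → ℝ) (c2 c θ : Fin q → ℝ) : m → ℝ :=
  -(((G θ)⁻¹ * auxGd G c2 θ * (G θ)⁻¹) *ᵥ (X *ᵥ b) + ((G θ)⁻¹ * auxGd G c θ * (G θ)⁻¹) *ᵥ (X *ᵥ b2))

lemma aux_A2_symm (hΘ : IsOpen Θ) (hpd : ∀ θ ∈ Θ, (G θ).PosDef) (c2 c : Fin q → ℝ) {θ : Fin q → ℝ} (hθ : θ ∈ Θ) :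
    (auxA2 G c2 c θ)ᵀ = auxA2 G c2 c θ := by
  have hs : ((G θ)⁻¹)ᵀ = (G θ)⁻¹ := by
    rw [transpose_nonsing_inv]; congr 1; exact (hpd θ hθ).1
  simp only [auxA2, transpose_add, transpose_sub, transpose_neg, transpose_mul, hs,
    aux_Gd_symm hΘ hpd _ hθ, aux_Gdd_symm hΘ hpd _ _ hθ, Matrix.mul_assoc]
  abel

lemma aux_A1_symm (hΘ : IsOpen Θ) (hpd : ∀ θ ∈ Θ, (G θ).PosDef) (c : Fin q → ℝ) {θ : Fin q → ℝ} (hθ : θ ∈ Θ) :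
    ((G θ)⁻¹ * auxGd G c θ * (G θ)⁻¹)ᵀ = (G θ)⁻¹ * auxGd G c θ * (G θ)⁻¹ := by
  have hs : ((G θ)⁻¹)ᵀ = (G θ)⁻¹ := by
    rw [transpose_nonsing_inv]; congr 1; exact (hpd θ hθ).1
  simp only [transpose_mul, hs, aux_Gd_symm hΘ hpd _ hθ, Matrix.mul_assoc]

lemma aux_F_eq (hpd : ∀ θ ∈ Θ, (G θ).PosDef) (X : Matrix m (Fin p) ℝ) (y : m → ℝ)
    (β b : Fin p → ℝ) (c : Fin q → ℝ) {θ : Fin q → ℝ} (hθ : θ ∈ Θ) :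
    auxF G X y b c (β, θ) = ((G θ)⁻¹ *ᵥ (X *ᵥ b)) ⬝ᵥ (y - X *ᵥ β) + 1 / 2 * ((y - X *ᵥ β) ⬝ᵥ
      ((G θ)⁻¹ * auxGd G c θ * (G θ)⁻¹) *ᵥ (y - X *ᵥ β) - ((G θ)⁻¹ * auxGd G c θ * (G θ)⁻¹ * G θ).trace) := by
  have hs : ((G θ)⁻¹)ᵀ = (G θ)⁻¹ := by
    rw [transpose_nonsing_inv]; congr 1; exact (hpd θ hθ).1
  have hd := isUnit_iff_ne_zero.2 (aux_det_ne (hpd θ hθ))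
  simp only [auxF]
  rw [aux_symm_dot hs, dotProduct_comm (y - X *ᵥ β), Matrix.mul_assoc _ _ (G θ), nonsing_inv_mul _ hd,
    Matrix.mul_one]
  ring

lemma aux_HD_F (hΘ : IsOpen Θ) (hC : ∀ i j, ContDiffOn ℝ 2 (fun θ => G θ i j) Θ)
    (hpd : ∀ θ ∈ Θ, (G θ).PosDef) (X : Matrix m (Fin p) ℝ) (y : m → ℝ)
    (β b2 b : Fin p → ℝ) (c2 c : Fin q → ℝ) {θ : Fin q → ℝ} (hθ : θ ∈ Θ) :
    AuxHD (auxF G X y b c) (β, θ) (b2, c2)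
      (-(1 / 2) * ((G θ)⁻¹ * auxGd G c2 θ * (G θ)⁻¹ * auxGd G c θ).trace - (X *ᵥ b) ⬝ᵥ (G θ)⁻¹ *ᵥ (X *ᵥ b2)
      + (auxu2 G X b2 b c2 c θ ⬝ᵥ (y - X *ᵥ β) + 1 / 2 * ((y - X *ᵥ β) ⬝ᵥ auxA2 G c2 c θ *ᵥ (y - X *ᵥ β)
        - (auxA2 G c2 c θ * G θ).trace))) := by
  have hG := aux_HD_G hΘ hC β b2 c2 hθ
  have hGd := aux_HD_Gd hΘ hC β b2 c2 c hθ
  have hd := isUnit_iff_ne_zero.2 (aux_det_ne (hpd θ hθ))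
  have hi := hG.inv hd
  have hr := aux_HD_r X y β b2 θ c2
  have h1 := (hi.mul hGd).trace.const_mul (-(1 / 2))
  have h2 := hi.bilin (r := fun _ => X *ᵥ b) (r' := 0) (fun i => AuxHD.const ((X *ᵥ b) i)) hr
  have h3 := (((hi.mul hGd).mul hi).bilin hr hr).const_mul (1 / 2)
  refine AuxHD.congr ((h1.add h2).add h3) ?_
  have hs : ((G θ)⁻¹)ᵀ = (G θ)⁻¹ := by
    rw [transpose_nonsing_inv]; congr 1; exact (hpd θ hθ).1
  have hA := aux_A1_symm hΘ hpd c hθ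
  have hA' := aux_A1_symm hΘ hpd c2 hθ
  have htr : (auxA2 G c2 c θ * G θ).trace = -2 * ((G θ)⁻¹ * auxGd G c2 θ * (G θ)⁻¹ * auxGd G c θ).trace
      + ((G θ)⁻¹ * auxGdd G c2 c θ).trace := by
    have e : auxA2 G c2 c θ * G θ = -((G θ)⁻¹ * auxGd G c2 θ * (G θ)⁻¹ * auxGd G c θ)
        + (G θ)⁻¹ * auxGdd G c2 c θ - (G θ)⁻¹ * auxGd G c θ * (G θ)⁻¹ * auxGd G c2 θ := by
      simp only [auxA2, Matrix.add_mul, Matrix.sub_mul, Matrix.neg_mul, Matrix.mul_assoc,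
        nonsing_inv_mul _ hd, Matrix.mul_one]
    rw [e, trace_sub, trace_add, trace_neg]
    have e2 : ((G θ)⁻¹ * auxGd G c θ * (G θ)⁻¹ * auxGd G c2 θ).trace =
        ((G θ)⁻¹ * auxGd G c2 θ * (G θ)⁻¹ * auxGd G c θ).trace := by
      rw [Matrix.mul_assoc, trace_mul_comm, ← Matrix.mul_assoc]
    rw [e2]; ring
  have hB : (-((G θ)⁻¹ * auxGd G c2 θ * (G θ)⁻¹) * auxGd G c θ + (G θ)⁻¹ * auxGdd G c2 c θ) * (G θ)⁻¹ +
      (G θ)⁻¹ * auxGd G c θ * -((G θ)⁻¹ * auxGd G c2 θ * (G θ)⁻¹) = auxA2 G c2 c θ := by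
    simp only [auxA2, Matrix.add_mul, Matrix.neg_mul, Matrix.mul_neg, Matrix.mul_assoc]
    abel
  dsimp only
  rw [hB, htr]
  simp only [trace_add, Matrix.neg_mul, trace_neg]
  simp only [auxu2, mulVec_neg, dotProduct_neg, neg_dotProduct, neg_mulVec, zero_dotProduct, add_dotProduct]
  rw [dotProduct_comm (((G θ)⁻¹ * auxGd G c θ * (G θ)⁻¹) *ᵥ (X *ᵥ b2)) (y - X *ᵥ β),
    dotProduct_comm (((G θ)⁻¹ * auxGd G c2 θ * (G θ)⁻¹) *ᵥ (X *ᵥ b)) (y - X *ᵥ β),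
    aux_symm_dot hA (X *ᵥ b2), aux_symm_dot hA' (X *ᵥ b)]
  ring

lemma aux_hess_eq (hΘ : IsOpen Θ) (hC : ∀ i j, ContDiffOn ℝ 2 (fun θ => G θ i j) Θ)
    (hpd : ∀ θ ∈ Θ, (G θ).PosDef) (k0 : ℝ) (X : Matrix m (Fin p) ℝ) (y : m → ℝ)
    (β b2 b : Fin p → ℝ) (c2 c : Fin q → ℝ) {θ : Fin q → ℝ} (hθ : θ ∈ Θ) :
    fderiv ℝ (fun η' => fderiv ℝ (auxL k0 G X y) η' (b, c)) (β, θ) (b2, c2) =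
      (-(1 / 2) * ((G θ)⁻¹ * auxGd G c2 θ * (G θ)⁻¹ * auxGd G c θ).trace - (X *ᵥ b) ⬝ᵥ (G θ)⁻¹ *ᵥ (X *ᵥ b2)
      + (auxu2 G X b2 b c2 c θ ⬝ᵥ (y - X *ᵥ β) + 1 / 2 * ((y - X *ᵥ β) ⬝ᵥ auxA2 G c2 c θ *ᵥ (y - X *ᵥ β)
        - (auxA2 G c2 c θ * G θ).trace))) := by
  rw [← (aux_HD_F hΘ hC hpd X y β b2 b c2 c hθ).fderiv_eq]
  congr 1
  apply Filter.EventuallyEq.fderiv_eq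
  have : ∀ᶠ η in 𝓝 (β, θ), η.2 ∈ Θ := (continuous_snd.tendsto (β, θ)).eventually (hΘ.mem_nhds hθ)
  filter_upwards [this] with η hη
  exact (aux_HD_L hΘ hC hpd k0 X y η.1 b c hη).fderiv_eq

end likm


section modelm
open scoped Matrix.Norms.L2Operator

/-- Eventually bounded sequence of matrices. -/
def AuxBdd {N : ℕ → ℕ} (A : ∀ n, Matrix (Fin (N n)) (Fin (N n)) ℝ) : Prop :=
  ∃ K : ℝ, 0 ≤ K ∧ ∀ᶠ n in atTop, ‖A n‖ ≤ K

/-- Vectors with squared length of order `N n`. -/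
def AuxVB {N : ℕ → ℕ} (u : ∀ n, Fin (N n) → ℝ) : Prop :=
  ∃ K : ℝ, 0 ≤ K ∧ ∀ᶠ n in atTop, u n ⬝ᵥ u n ≤ K * (N n : ℝ)

namespace AuxBdd
variable {N : ℕ → ℕ} {A B : ∀ n, Matrix (Fin (N n)) (Fin (N n)) ℝ}

lemma mul (hA : AuxBdd A) (hB : AuxBdd B) : AuxBdd (fun n => A n * B n) := by
  obtain ⟨K, hK, h⟩ := hA
  obtain ⟨K', hK', h'⟩ := hB
  refine ⟨K * K', by positivity, ?_⟩
  filter_upwards [h, h'] with n a b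
  exact (l2_opNorm_mul _ _).trans (mul_le_mul a b (norm_nonneg _) hK)

lemma add (hA : AuxBdd A) (hB : AuxBdd B) : AuxBdd (fun n => A n + B n) := by
  obtain ⟨K, hK, h⟩ := hA
  obtain ⟨K', hK', h'⟩ := hB
  refine ⟨K + K', by positivity, ?_⟩
  filter_upwards [h, h'] with n a b
  exact (norm_add_le _ _).trans (add_le_add a b)

lemma neg (hA : AuxBdd A) : AuxBdd (fun n => -A n) := by
  obtain ⟨K, hK, h⟩ := hA
  refine ⟨K, hK, ?_⟩
  filter_upwards [h] with n a
  rwa [norm_neg]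

lemma smul (hA : AuxBdd A) (c : ℝ) : AuxBdd (fun n => c • A n) := by
  obtain ⟨K, hK, h⟩ := hA
  refine ⟨|c| * K, by positivity, ?_⟩
  filter_upwards [h] with n a
  rw [norm_smul, Real.norm_eq_abs]
  gcongr

lemma zero : AuxBdd (fun n => (0 : Matrix (Fin (N n)) (Fin (N n)) ℝ)) :=
  ⟨0, le_rfl, Eventually.of_forall fun n => by simp⟩

lemma sum {ι : Type*} (s : Finset ι) {A : ι → ∀ n, Matrix (Fin (N n)) (Fin (N n)) ℝ}
    (h : ∀ i ∈ s, AuxBdd (A i)) : AuxBdd (fun n => ∑ i ∈ s, A i n) := by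
  classical
  induction s using Finset.induction_on with
  | empty => simpa using zero
  | insert a s ha ih =>
    simp_rw [Finset.sum_insert ha]
    exact (h a (Finset.mem_insert_self _ _)).add (ih fun i hi => h i (Finset.mem_insert_of_mem hi))

lemma of_spec (hA : ∀ n, (A n).IsHermitian) {C : ℝ}
    (h : Tendsto (fun n => sSup ((fun x => |x|) '' spectrum ℝ (A n))) atTop (𝓝 C)) : AuxBdd A := by
  refine ⟨|C| + 1, by positivity, ?_⟩
  filter_upwards [h.eventually (gt_mem_nhds (show C < |C| + 1 by linarith [le_abs_self C]))] with n hn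
  refine aux_norm_le _ (hA n) _ (by positivity) fun x hx => ?_
  refine le_trans ?_ hn.le
  refine le_csSup ?_ (Set.mem_image_of_mem _ hx)
  rw [(hA n).spectrum_real_eq_range_eigenvalues]
  exact ((Set.finite_range _).image _).bddAbove

end AuxBdd

namespace AuxVB
variable {N : ℕ → ℕ} {u v : ∀ n, Fin (N n) → ℝ}

lemma add (hu : AuxVB u) (hv : AuxVB v) : AuxVB (fun n => u n + v n) := by
  obtain ⟨K, hK, h⟩ := hu
  obtain ⟨K', hK', h'⟩ := hv
  refine ⟨2 * K + 2 * K', by positivity, ?_⟩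
  filter_upwards [h, h'] with n a b
  have h0 : 0 ≤ (u n - v n) ⬝ᵥ (u n - v n) := by
    simpa [dotProduct] using Finset.sum_nonneg fun i _ => mul_self_nonneg ((u n - v n) i)
  have e : (u n + v n) ⬝ᵥ (u n + v n) + (u n - v n) ⬝ᵥ (u n - v n) = 2 * (u n ⬝ᵥ u n) + 2 * (v n ⬝ᵥ v n) := by
    simp only [dotProduct_add, add_dotProduct, dotProduct_sub, sub_dotProduct, dotProduct_comm (v n) (u n)]
    ring
  nlinarith

lemma neg (hu : AuxVB u) : AuxVB (fun n => -u n) := by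
  obtain ⟨K, hK, h⟩ := hu
  refine ⟨K, hK, ?_⟩
  filter_upwards [h] with n a
  simpa using a

lemma mulVec {A : ∀ n, Matrix (Fin (N n)) (Fin (N n)) ℝ} (hA : AuxBdd A) (hu : AuxVB u) :
    AuxVB (fun n => A n *ᵥ u n) := by
  obtain ⟨K, hK, h⟩ := hA
  obtain ⟨K', hK', h'⟩ := hu
  refine ⟨K ^ 2 * K', by positivity, ?_⟩
  filter_upwards [h, h'] with n a b
  refine (aux_mulVec_sq _ _).trans ?_
  have h0 : 0 ≤ u n ⬝ᵥ u n := by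
    simpa [dotProduct] using Finset.sum_nonneg fun i _ => mul_self_nonneg (u n i)
  rw [mul_assoc]
  exact mul_le_mul (pow_le_pow_left₀ (norm_nonneg _) a 2) b h0 (by positivity)

lemma quad {A : ∀ n, Matrix (Fin (N n)) (Fin (N n)) ℝ} (hA : AuxBdd A) (hu : AuxVB u) :
    ∃ K : ℝ, 0 ≤ K ∧ ∀ᶠ n in atTop, 2 * (u n ⬝ᵥ A n *ᵥ u n) ≤ K * (N n : ℝ) := by
  obtain ⟨K, hK, h⟩ := hu.mulVec hA
  obtain ⟨K', hK', h'⟩ := hu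
  refine ⟨K + K', by positivity, ?_⟩
  filter_upwards [h, h'] with n a b
  set w := A n *ᵥ u n
  have h0 : 0 ≤ (u n - w) ⬝ᵥ (u n - w) := by
    simpa [dotProduct] using Finset.sum_nonneg fun i _ => mul_self_nonneg ((u n - w) i)
  simp only [dotProduct_sub, sub_dotProduct, dotProduct_comm w (u n)] at h0
  nlinarith

lemma design {p : ℕ} {X : ∀ n, Matrix (Fin (N n)) (Fin p) ℝ} {B : ℝ} (hB : ∀ n i j, |X n i j| ≤ B)
    (b : Fin p → ℝ) : AuxVB (fun n => X n *ᵥ b) := by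
  refine ⟨(∑ j, |B| * |b j|) ^ 2, by positivity, Eventually.of_forall fun n => ?_⟩
  have h : ∀ i, (X n *ᵥ b) i * (X n *ᵥ b) i ≤ (∑ j, |B| * |b j|) ^ 2 := by
    intro i
    rw [← sq, ← sq_abs]
    refine pow_le_pow_left₀ (abs_nonneg _) ?_ 2
    have h3 : |(X n *ᵥ b) i| ≤ ∑ j, |X n i j * b j| := by
      simp only [Matrix.mulVec, dotProduct]
      exact Finset.abs_sum_le_sum_abs _ _
    refine h3.trans (Finset.sum_le_sum fun j _ => ?_)
    rw [abs_mul]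
    exact mul_le_mul_of_nonneg_right ((hB n i j).trans (le_abs_self _)) (abs_nonneg _)
  have h2 : (X n *ᵥ b) ⬝ᵥ (X n *ᵥ b) ≤ ∑ _i : Fin (N n), (∑ j, |B| * |b j|) ^ 2 :=
    Finset.sum_le_sum fun i _ => h i
  refine h2.trans (le_of_eq ?_)
  rw [Finset.sum_const, Finset.card_univ, Fintype.card_fin, nsmul_eq_mul, mul_comm]

end AuxVB

section mods
variable {d p q : ℕ} (M : SpatialModel d p q)

lemma aux_bdd_Γ (hA1 : M.A1) (hA2 : M.A2) : AuxBdd (fun n => M.Γ n M.θ0) := by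
  obtain ⟨C, hC⟩ := hA2.1
  refine AuxBdd.of_spec (fun n => (hA1.2 n _ M.hθ0).1) (C := C) ?_
  refine hC.congr fun n => ?_
  congr 1
  have hp := hA1.2 n _ M.hθ0
  have : ∀ x ∈ spectrum ℝ (M.Γ n M.θ0), |x| = x := by
    intro x hx
    rw [hp.1.spectrum_real_eq_range_eigenvalues] at hx
    obtain ⟨i, rfl⟩ := hx
    exact abs_of_pos (hp.eigenvalues_pos i)
  rw [Set.image_congr this, Set.image_id']

lemma aux_bdd_inv (hA1 : M.A1) (hA6 : M.A6) : AuxBdd (fun n => (M.Γ n M.θ0)⁻¹) := by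
  obtain ⟨C, hC⟩ := hA6
  refine ⟨|C|, abs_nonneg _, Eventually.of_forall fun n => ?_⟩
  exact aux_norm_le _ (hA1.2 n _ M.hθ0).1.inv _ (abs_nonneg _) fun x hx => (hC n x hx).le.trans (le_abs_self _)

lemma aux_herm_of {m : Type*} {A : Matrix m m ℝ} (h : Aᵀ = A) : A.IsHermitian := by
  rw [Matrix.IsHermitian, conjTranspose_eq_transpose_of_trivial, h]

lemma aux_Gd_lin (n : ℕ) (c : Fin q → ℝ) :
    auxGd (M.Γ n) c M.θ0 = ∑ k, c k • M.Γd n k M.θ0 := by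
  ext i j
  rw [Matrix.sum_apply]
  simp only [auxGd, of_apply, Matrix.smul_apply, SpatialModel.Γd, smul_eq_mul]
  conv_lhs => rw [pi_eq_sum_univ' c]
  rw [map_sum]
  refine Finset.sum_congr rfl fun k _ => ?_
  rw [map_smul, smul_eq_mul]
  rfl

lemma aux_bdd_Gd (hA1 : M.A1) (hA2 : M.A2) (c : Fin q → ℝ) : AuxBdd (fun n => auxGd (M.Γ n) c M.θ0) := by
  simp_rw [aux_Gd_lin]
  refine AuxBdd.sum _ fun k _ => AuxBdd.smul ?_ _
  obtain ⟨C, hC⟩ := hA2.2.1 k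
  exact AuxBdd.of_spec (fun n => aux_herm_of (aux_Gd_symm M.hΘ (hA1.2 n) (Pi.single k 1) M.hθ0)) hC

lemma aux_bdd_Gdd (hA1 : M.A1) (hA2 : M.A2) (k k' : Fin q) :
    AuxBdd (fun n => auxGdd (M.Γ n) (Pi.single k 1) (Pi.single k' 1) M.θ0) := by
  obtain ⟨C, hC⟩ := hA2.2.2 k k'
  exact AuxBdd.of_spec (fun n => aux_herm_of (aux_Gdd_symm M.hΘ (hA1.2 n) (Pi.single k 1) (Pi.single k' 1) M.hθ0)) hC

lemma aux_bdd_Gdd' (hA1 : M.A1) (hA2 : M.A2) (i i' : Fin p ⊕ Fin q) :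
    AuxBdd (fun n => auxGdd (M.Γ n) (paramBasis p q i).2 (paramBasis p q i').2 M.θ0) := by
  rcases i with i | i
  · have : ∀ n, auxGdd (M.Γ n) (paramBasis p q (Sum.inl i)).2 (paramBasis p q i').2 M.θ0 = 0 := by
      intro n; ext a b; simp [auxGdd, paramBasis]
    simp_rw [this]; exact AuxBdd.zero
  rcases i' with i' | i'
  · have : ∀ n, auxGdd (M.Γ n) (paramBasis p q (Sum.inr i)).2 (paramBasis p q (Sum.inl i')).2 M.θ0 = 0 := by
      intro n; ext a b; simp [auxGdd, paramBasis]
    simp_rw [this]; exact AuxBdd.zero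
  exact aux_bdd_Gdd M hA1 hA2 i i'

end mods
end modelm


section hessm
open scoped Matrix.Norms.L2Operator
variable {d p q : ℕ} (M : SpatialModel d p q)

lemma aux_XX (n : ℕ) (b b2 : Fin p → ℝ) :
    (M.X n *ᵥ b) ⬝ᵥ (M.Γ n M.θ0)⁻¹ *ᵥ (M.X n *ᵥ b2) = b ⬝ᵥ M.Iβ n *ᵥ b2 := by
  rw [SpatialModel.Iβ, ← mulVec_mulVec, ← mulVec_mulVec, dotProduct_mulVec b, vecMul_transpose]

lemma aux_hess_det (Jβ : Matrix (Fin p) (Fin p) ℝ) (Jθ : Matrix (Fin q) (Fin q) ℝ)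
    (hA7 : M.A7 Jβ Jθ) (i i' : Fin p ⊕ Fin q) :
    Tendsto (fun n => (M.N n : ℝ)⁻¹ * (-(1 / 2) * ((M.Γ n M.θ0)⁻¹ * auxGd (M.Γ n) (paramBasis p q i).2 M.θ0 *
      (M.Γ n M.θ0)⁻¹ * auxGd (M.Γ n) (paramBasis p q i').2 M.θ0).trace -
      (M.X n *ᵥ (paramBasis p q i').1) ⬝ᵥ (M.Γ n M.θ0)⁻¹ *ᵥ (M.X n *ᵥ (paramBasis p q i).1)))
      atTop (𝓝 ((-(Matrix.fromBlocks Jβ 0 0 Jθ)) i i')) := by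
  obtain ⟨hJβ, hJθ, h1, h2⟩ := hA7
  simp_rw [aux_XX]
  have z : ∀ n, auxGd (M.Γ n) 0 M.θ0 = 0 := by
    intro n; ext a b; simp [auxGd]
  rcases i with i | i <;> rcases i' with i' | i'
  · have h3 := (tendsto_pi_nhds.1 (tendsto_pi_nhds.1 h1 i') i).neg
    have e : Jβ i' i = Jβ i i' := by simpa using hJβ.1.apply i i'
    rw [e] at h3
    simpa [paramBasis, z] using h3
  · simp [paramBasis, z]
  · simp [paramBasis, z]
  · have h3 := (tendsto_pi_nhds.1 (tendsto_pi_nhds.1 h2 i) i').neg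
    simp only [neg_apply, fromBlocks_apply₂₂, paramBasis, zero_dotProduct, sub_zero]
    refine h3.congr fun n => ?_
    simp only [Matrix.smul_apply, smul_eq_mul, SpatialModel.Iθ, of_apply, SpatialModel.tmat]
    change -((M.N n : ℝ)⁻¹ * (((M.Γ n M.θ0)⁻¹ * M.Γd n i M.θ0 * (M.Γ n M.θ0)⁻¹ * M.Γd n i' M.θ0).trace / 2)) =
      (M.N n : ℝ)⁻¹ * (-(1 / 2) * ((M.Γ n M.θ0)⁻¹ * M.Γd n i M.θ0 * (M.Γ n M.θ0)⁻¹ * M.Γd n i' M.θ0).trace)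
    ring

lemma aux_hess_main (hdata : M.GaussianData)
    (Jβ : Matrix (Fin p) (Fin p) ℝ) (Jθ : Matrix (Fin q) (Fin q) ℝ)
    (hA1 : M.A1) (hA2 : M.A2) (hA5 : M.A5) (hA6 : M.A6) (hA7 : M.A7 Jβ Jθ) :
    TendstoInProbMatrix M.P
      (fun n ω => (M.N n : ℝ)⁻¹ • M.hess n (M.β0, M.θ0) ω)
      (-(Matrix.fromBlocks Jβ 0 0 Jθ)) := by
  intro ε hε i i'
  have hD := aux_hess_det M Jβ Jθ hA7 i i'
  set D : ℕ → ℝ := fun n => -(1 / 2) * ((M.Γ n M.θ0)⁻¹ * auxGd (M.Γ n) (paramBasis p q i).2 M.θ0 *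
      (M.Γ n M.θ0)⁻¹ * auxGd (M.Γ n) (paramBasis p q i').2 M.θ0).trace -
      (M.X n *ᵥ (paramBasis p q i').1) ⬝ᵥ (M.Γ n M.θ0)⁻¹ *ᵥ (M.X n *ᵥ (paramBasis p q i).1) with hDdef
  set u : ∀ n, Fin (M.N n) → ℝ := fun n => auxu2 (M.Γ n) (M.X n) (paramBasis p q i).1 (paramBasis p q i').1
    (paramBasis p q i).2 (paramBasis p q i').2 M.θ0 with hu
  set A : ∀ n, Matrix (Fin (M.N n)) (Fin (M.N n)) ℝ := fun n =>
    auxA2 (M.Γ n) (paramBasis p q i).2 (paramBasis p q i').2 M.θ0 with hA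
  have hh : ∀ n ω, M.hess n (M.β0, M.θ0) ω i i' = D n + (u n ⬝ᵥ (M.y n ω - M.X n *ᵥ M.β0) +
      1 / 2 * ((M.y n ω - M.X n *ᵥ M.β0) ⬝ᵥ A n *ᵥ (M.y n ω - M.X n *ᵥ M.β0) - (A n * M.Γ n M.θ0).trace)) := by
    intro n ω
    exact aux_hess_eq M.hΘ (hA1.1 n) (hA1.2 n) (-((M.N n : ℝ) / 2) * Real.log (2 * Real.pi)) (M.X n) (M.y n ω)
      M.β0 (paramBasis p q i).1 (paramBasis p q i').1 (paramBasis p q i).2 (paramBasis p q i').2 M.hθ0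
  have bΓ := aux_bdd_Γ M hA1 hA2
  have bI := aux_bdd_inv M hA1 hA6
  have b1 := aux_bdd_Gd M hA1 hA2 (paramBasis p q i).2
  have b2 := aux_bdd_Gd M hA1 hA2 (paramBasis p q i').2
  have b3 := aux_bdd_Gdd' M hA1 hA2 i i'
  obtain ⟨B, hB⟩ := hA5.2.1
  have v1 := AuxVB.design (N := M.N) (X := M.X) hB (paramBasis p q i).1
  have v2 := AuxVB.design (N := M.N) (X := M.X) hB (paramBasis p q i').1
  have hub : AuxVB u := ((v2.mulVec ((bI.mul b1).mul bI)).add (v1.mulVec ((bI.mul b2).mul bI))).neg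
  have hAb : AuxBdd A := by
    have := ((((((bI.mul b1).mul bI).mul b2).mul bI).neg).add ((bI.mul b3).mul bI)).add
      ((((bI.mul b2).mul bI).mul b1).mul bI).neg
    refine (iff_of_eq (congrArg AuxBdd ?_)).1 this
    ext1 n
    simp only [hA, auxA2, sub_eq_add_neg]
  obtain ⟨K1, hK1, h1⟩ := hub.quad bΓ
  obtain ⟨K2, hK2, h2⟩ := hAb
  obtain ⟨K3, hK3, h3⟩ := bΓ
  set K0 := ∫ x : ℝ, (x ^ 2 - 1) ^ 2 ∂(gaussianReal 0 1) with hK0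
  have hK00 : 0 ≤ K0 := integral_nonneg fun x => sq_nonneg _
  have hNt : Tendsto (fun n => (M.N n : ℝ)) atTop atTop := tendsto_natCast_atTop_atTop.comp M.hN
  have hlim : Tendsto (fun n => (K1 + K0 * (K2 * K3) ^ 2) * 4 / ε ^ 2 * (M.N n : ℝ)⁻¹) atTop (𝓝 0) := by
    simpa using hNt.inv_tendsto_atTop.const_mul ((K1 + K0 * (K2 * K3) ^ 2) * 4 / ε ^ 2)
  refine squeeze_zero' (Eventually.of_forall fun n => ENNReal.toReal_nonneg) ?_ hlim
  have hDe := hD.eventually (Metric.ball_mem_nhds _ (half_pos hε))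
  filter_upwards [h1, h2, h3, hNt.eventually_gt_atTop 0, hDe] with n e1 e2 e3 e4 e5
  replace e5 : |(M.N n : ℝ)⁻¹ * D n - (-(Matrix.fromBlocks Jβ 0 0 Jθ)) i i'| < ε / 2 := e5
  have hpd := hA1.2 n _ M.hθ0
  have hc := aux_cheb _ _ _ (A n) (hdata.2 n) hpd.posSemidef
    (aux_herm_of (aux_A2_symm M.hΘ (hA1.2 n) _ _ M.hθ0)) (u n) (ε / 2 * M.N n) (by positivity)
  rw [Measure.map_apply (hdata.1 n) (by
    refine (isClosed_le continuous_const ?_).measurableSet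
    fun_prop)] at hc
  have hsub : (M.P {ω | ε ≤ |((M.N n : ℝ)⁻¹ • M.hess n (M.β0, M.θ0) ω) i i' - (-(Matrix.fromBlocks Jβ 0 0 Jθ)) i i'|}).toReal ≤
      (M.P (M.y n ⁻¹' {y | ε / 2 * (M.N n) ≤ |u n ⬝ᵥ (y - M.X n *ᵥ M.β0) +
      1 / 2 * ((y - M.X n *ᵥ M.β0) ⬝ᵥ A n *ᵥ (y - M.X n *ᵥ M.β0) - (A n * M.Γ n M.θ0).trace)|})).toReal := by
    refine ENNReal.toReal_mono (measure_ne_top _ _) (measure_mono ?_)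
    intro ω hω
    simp only [Set.mem_setOf_eq, Set.mem_preimage, Matrix.smul_apply, smul_eq_mul] at hω ⊢
    rw [hh, mul_add] at hω
    set Z := u n ⬝ᵥ (M.y n ω - M.X n *ᵥ M.β0) +
      1 / 2 * ((M.y n ω - M.X n *ᵥ M.β0) ⬝ᵥ A n *ᵥ (M.y n ω - M.X n *ᵥ M.β0) - (A n * M.Γ n M.θ0).trace)
    have t1 : ε ≤ |(M.N n : ℝ)⁻¹ * D n - (-(Matrix.fromBlocks Jβ 0 0 Jθ)) i i'| + |(M.N n : ℝ)⁻¹ * Z| := by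
      refine hω.trans (le_trans (le_of_eq ?_) (abs_add_le _ _))
      congr 1; ring
    have t2 : ε / 2 ≤ (M.N n : ℝ)⁻¹ * |Z| := by
      rw [abs_mul, abs_of_pos (inv_pos.2 e4)] at t1
      linarith
    rw [inv_mul_eq_div, le_div_iff₀ e4] at t2
    exact t2
  refine hsub.trans (hc.trans ?_)
  have e6 : (‖A n‖ * ‖M.Γ n M.θ0‖) ^ 2 ≤ (K2 * K3) ^ 2 :=
    pow_le_pow_left₀ (by positivity) (mul_le_mul e2 e3 (norm_nonneg _) hK2) 2
  rw [Fintype.card_fin]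
  calc _ ≤ (K1 * (M.N n : ℝ) + K0 * ((M.N n : ℝ) * (K2 * K3) ^ 2)) / (ε / 2 * (M.N n : ℝ)) ^ 2 := by
        gcongr
    _ = _ := by
        field_simp
        ring

end hessm


section levym

lemma aux_mvg {ι : Type} [Fintype ι] [DecidableEq ι] (S : Matrix ι ι ℝ) (hS : S.PosSemidef) :
    IsGaussianVector ((multivariateGaussian 0 S).map (WithLp.ofLp : EuclideanSpace ℝ ι → ι → ℝ)) 0 S := by
  have hm : Measurable (WithLp.ofLp : EuclideanSpace ℝ ι → ι → ℝ) :=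
    (PiLp.continuous_ofLp 2 _).measurable
  refine ⟨Measure.isProbabilityMeasure_map hm.aemeasurable, fun a => ?_⟩
  have hf : Measurable (fun x : ι → ℝ => ∑ i, a i * x i) := by
    apply Continuous.measurable; fun_prop
  rw [Measure.map_map hf hm]
  have : IsProbabilityMeasure (Measure.map ((fun x : ι → ℝ => ∑ i, a i * x i) ∘ WithLp.ofLp)
      (multivariateGaussian (0 : EuclideanSpace ℝ ι) S)) :=
    Measure.isProbabilityMeasure_map (hf.comp hm).aemeasurable
  apply Measure.ext_of_charFun
  ext t
  rw [charFun_gaussianReal, charFun_apply_real, integral_map (hf.comp hm).aemeasurable (by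
    apply Continuous.aestronglyMeasurable; fun_prop)]
  have h := charFun_multivariateGaussian (μ := (0 : EuclideanSpace ℝ ι)) hS (WithLp.toLp 2 (t • a))
  rw [charFun_apply] at h
  have h0 : 0 ≤ a ⬝ᵥ S *ᵥ a := by
    simpa using hS.dotProduct_mulVec_nonneg a
  refine (Eq.trans ?_ h).trans ?_
  · congr 1
    ext x
    congr 1
    simp only [Function.comp, PiLp.inner_apply, RCLike.inner_apply, conj_trivial]
    push_cast
    rw [Finset.mul_sum]
    congr 1
    refine Finset.sum_congr rfl fun i _ => ?_
    simp [mul_assoc]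
  · congr 1
    rw [Real.coe_toNNReal _ h0]
    simp only [inner_zero_right, Complex.ofReal_zero, zero_mul, Pi.zero_apply, mul_zero,
      Finset.sum_const_zero, mulVec_smul, smul_dotProduct, dotProduct_smul, smul_eq_mul]
    push_cast
    ring

lemma aux_levy {Ωs : Type*} [MeasurableSpace Ωs] (P : Measure Ωs) [IsProbabilityMeasure P]
    {ι : Type} [Fintype ι] [DecidableEq ι] (Z : ℕ → Ωs → ι → ℝ) (hZ : ∀ n, Measurable (Z n))
    (S : Matrix ι ι ℝ) (hS : S.PosSemidef)
    (h : ∀ a : ι → ℝ, Tendsto (fun n => ∫ ω, Complex.exp (Complex.I * ((∑ i, a i * Z n ω i : ℝ) : ℂ)) ∂P) atTop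
      (𝓝 (Complex.exp ((-((a ⬝ᵥ S *ᵥ a) / 2) : ℝ) : ℂ)))) :
    _root_.TendstoInDistribution P Z
      ((multivariateGaussian 0 S).map (WithLp.ofLp : EuclideanSpace ℝ ι → ι → ℝ)) := by
  have hm : Measurable (WithLp.ofLp : EuclideanSpace ℝ ι → ι → ℝ) :=
    (PiLp.continuous_ofLp 2 _).measurable
  have hl : Measurable (WithLp.toLp 2 : (ι → ℝ) → EuclideanSpace ℝ ι) :=
    (PiLp.continuous_toLp 2 _).measurable
  have hW : ∀ n, Measurable (fun ω => WithLp.toLp 2 (Z n ω) : Ωs → EuclideanSpace ℝ ι) := fun n => hl.comp (hZ n)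
  let μs : ℕ → ProbabilityMeasure (EuclideanSpace ℝ ι) := fun n =>
    ⟨P.map (fun ω => WithLp.toLp 2 (Z n ω)), Measure.isProbabilityMeasure_map (hW n).aemeasurable⟩
  let μ0 : ProbabilityMeasure (EuclideanSpace ℝ ι) := ⟨multivariateGaussian 0 S, inferInstance⟩
  have ht : Tendsto μs atTop (𝓝 μ0) := by
    apply ProbabilityMeasure.tendsto_of_tendsto_charFun
    intro t
    have e0 : charFun (μ0 : Measure (EuclideanSpace ℝ ι)) t =
        Complex.exp ((-((t.ofLp ⬝ᵥ S *ᵥ t.ofLp) / 2) : ℝ) : ℂ) := by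
      change charFun (multivariateGaussian 0 S) t = _
      rw [charFun_multivariateGaussian hS]
      congr 1
      simp
    rw [e0]
    refine (h t.ofLp).congr fun n => ?_
    change _ = charFun (P.map (fun ω => WithLp.toLp 2 (Z n ω))) t
    rw [charFun_apply, integral_map (hW n).aemeasurable (by
      apply Continuous.aestronglyMeasurable; fun_prop)]
    congr 1
    ext ω
    rw [mul_comm]
    congr 3
  rw [ProbabilityMeasure.tendsto_iff_forall_integral_tendsto] at ht
  intro f
  have h1 := ht (f.compContinuous ⟨WithLp.ofLp, PiLp.continuous_ofLp 2 _⟩)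
  have e0 : ∫ x, f x ∂((multivariateGaussian 0 S).map (WithLp.ofLp : EuclideanSpace ℝ ι → ι → ℝ)) =
      ∫ x, (f.compContinuous ⟨WithLp.ofLp, PiLp.continuous_ofLp 2 _⟩) x ∂(μ0 : Measure (EuclideanSpace ℝ ι)) := by
    rw [integral_map hm.aemeasurable f.continuous.aestronglyMeasurable]
    rfl
  rw [e0]
  refine h1.congr fun n => ?_
  change ∫ x, _ ∂(P.map (fun ω => WithLp.toLp 2 (Z n ω))) = _
  rw [integral_map (hW n).aemeasurable (BoundedContinuousFunction.continuous _).aestronglyMeasurable]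
  rfl

end levym


section scorem
open scoped Matrix.Norms.L2Operator
variable {d p q : ℕ} (M : SpatialModel d p q)

lemma aux_param_sum (a : Fin p ⊕ Fin q → ℝ) :
    ∑ i, a i • paramBasis p q i = ((fun j => a (Sum.inl j)), (fun k => a (Sum.inr k))) := by
  rw [Fintype.sum_sum_type]
  ext j
  · simp [paramBasis, Prod.fst_sum, Finset.sum_apply, Pi.single_apply]
  · simp [paramBasis, Prod.snd_sum, Finset.sum_apply, Pi.single_apply]

lemma aux_score_dir (hA1 : M.A1) (n : ℕ) (ω : M.Ωs) (b : Fin p → ℝ) (c : Fin q → ℝ) :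
    fderiv ℝ (fun η' => M.loglik n η' ω) (M.β0, M.θ0) (b, c) =
      ((M.Γ n M.θ0)⁻¹ *ᵥ (M.X n *ᵥ b)) ⬝ᵥ (M.y n ω - M.X n *ᵥ M.β0) + 1 / 2 * ((M.y n ω - M.X n *ᵥ M.β0) ⬝ᵥ
      ((M.Γ n M.θ0)⁻¹ * auxGd (M.Γ n) c M.θ0 * (M.Γ n M.θ0)⁻¹) *ᵥ (M.y n ω - M.X n *ᵥ M.β0)
        - ((M.Γ n M.θ0)⁻¹ * auxGd (M.Γ n) c M.θ0 * (M.Γ n M.θ0)⁻¹ * M.Γ n M.θ0).trace) := by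
  rw [← aux_F_eq (hA1.2 n) (M.X n) (M.y n ω) M.β0 b c M.hθ0]
  exact (aux_HD_L M.hΘ (hA1.1 n) (hA1.2 n) (-((M.N n : ℝ) / 2) * Real.log (2 * Real.pi)) (M.X n) (M.y n ω)
      M.β0 b c M.hθ0).fderiv_eq

lemma aux_score_meas (hdata : M.GaussianData) (hA1 : M.A1) (n : ℕ) :
    Measurable (fun ω => (Real.sqrt (M.N n))⁻¹ • M.score n (M.β0, M.θ0) ω) := by
  refine measurable_pi_lambda _ fun i => ?_
  simp only [Pi.smul_apply, smul_eq_mul, SpatialModel.score]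
  have : ∀ ω, fderiv ℝ (fun η' => M.loglik n η' ω) (M.β0, M.θ0) (paramBasis p q i) = _ := fun ω =>
    aux_score_dir M hA1 n ω (paramBasis p q i).1 (paramBasis p q i).2
  simp_rw [this]
  refine Measurable.const_mul ?_ _
  refine Measurable.comp (g := fun y : Fin (M.N n) → ℝ =>
    ((M.Γ n M.θ0)⁻¹ *ᵥ (M.X n *ᵥ (paramBasis p q i).1)) ⬝ᵥ (y - M.X n *ᵥ M.β0) + 1 / 2 * ((y - M.X n *ᵥ M.β0) ⬝ᵥ
      ((M.Γ n M.θ0)⁻¹ * auxGd (M.Γ n) (paramBasis p q i).2 M.θ0 * (M.Γ n M.θ0)⁻¹) *ᵥ (y - M.X n *ᵥ M.β0)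
        - ((M.Γ n M.θ0)⁻¹ * auxGd (M.Γ n) (paramBasis p q i).2 M.θ0 * (M.Γ n M.θ0)⁻¹ * M.Γ n M.θ0).trace))
    (Continuous.measurable (by fun_prop)) (hdata.1 n)

lemma aux_score_char (hdata : M.GaussianData)
    (Jβ : Matrix (Fin p) (Fin p) ℝ) (Jθ : Matrix (Fin q) (Fin q) ℝ)
    (hA1 : M.A1) (hA2 : M.A2) (hA6 : M.A6) (hA7 : M.A7 Jβ Jθ) (a : Fin p ⊕ Fin q → ℝ) :
    Tendsto (fun n => ∫ ω, Complex.exp (Complex.I * ((∑ i, a i *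
      ((Real.sqrt (M.N n))⁻¹ • M.score n (M.β0, M.θ0) ω) i : ℝ) : ℂ)) ∂M.P) atTop
      (𝓝 (Complex.exp ((-((a ⬝ᵥ (Matrix.fromBlocks Jβ 0 0 Jθ) *ᵥ a) / 2) : ℝ) : ℂ))) := by
  obtain ⟨hJβ, hJθ, h1, h2⟩ := hA7
  set b : Fin p → ℝ := fun j => a (Sum.inl j) with hb
  set c : Fin q → ℝ := fun k => a (Sum.inr k) with hc
  set ρ : ℕ → ℝ := fun n => (Real.sqrt (M.N n))⁻¹ with hρ
  set A1 : ∀ n, Matrix (Fin (M.N n)) (Fin (M.N n)) ℝ := fun n =>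
    (M.Γ n M.θ0)⁻¹ * auxGd (M.Γ n) c M.θ0 * (M.Γ n M.θ0)⁻¹ with hA1d
  set u1 : ∀ n, Fin (M.N n) → ℝ := fun n => (M.Γ n M.θ0)⁻¹ *ᵥ (M.X n *ᵥ b) with hu1
  have hform : ∀ n ω, ∑ i, a i * (ρ n • M.score n (M.β0, M.θ0) ω) i =
      (ρ n • u1 n) ⬝ᵥ (M.y n ω - M.X n *ᵥ M.β0) + 1 / 2 * ((M.y n ω - M.X n *ᵥ M.β0) ⬝ᵥ
      (ρ n • A1 n) *ᵥ (M.y n ω - M.X n *ᵥ M.β0) - ((ρ n • A1 n) * M.Γ n M.θ0).trace) := by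
    intro n ω
    have e1 : ∑ i, a i * (ρ n • M.score n (M.β0, M.θ0) ω) i =
        ρ n * fderiv ℝ (fun η' => M.loglik n η' ω) (M.β0, M.θ0) (b, c) := by
      have : ((b, c) : (Fin p → ℝ) × (Fin q → ℝ)) = ∑ i, a i • paramBasis p q i := (aux_param_sum a).symm
      rw [this, map_sum, Finset.mul_sum]
      refine Finset.sum_congr rfl fun i _ => ?_
      rw [map_smul]
      simp only [Pi.smul_apply, smul_eq_mul, SpatialModel.score]
      ring
    rw [e1, aux_score_dir M hA1]
    simp only [smul_dotProduct, smul_mulVec, dotProduct_smul, Matrix.smul_mul, trace_smul, smul_eq_mul,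
      hA1d, hu1]
    ring
  have hpd := fun n => hA1.2 n _ M.hθ0
  have hdu := fun n => isUnit_iff_ne_zero.2 (aux_det_ne (hpd n))
  have hherm : ∀ n, (ρ n • A1 n).IsHermitian := fun n => by
    apply aux_herm_of
    rw [transpose_smul, aux_A1_symm M.hΘ (hA1.2 n) c M.hθ0]
  choose v lam hv hlam hlb hint using fun n =>
    aux_char _ _ _ (ρ n • A1 n) (hdata.2 n) (hpd n).posSemidef (hherm n) (ρ n • u1 n)
  have hint' : ∀ n, ∫ ω, Complex.exp (Complex.I * ((∑ i, a i *
      (ρ n • M.score n (M.β0, M.θ0) ω) i : ℝ) : ℂ)) ∂M.P =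
      ∏ i, Complex.exp (-(1 / 2) * Complex.log (1 - Complex.I * lam n i) - Complex.I * lam n i / 2 -
        v n i ^ 2 / (2 * (1 - Complex.I * lam n i))) := by
    intro n
    rw [← hint n, integral_map (hdata.1 n).aemeasurable (by
      apply Continuous.aestronglyMeasurable; fun_prop)]
    simp_rw [hform]
  have hρ2 : ∀ n, ρ n * ρ n = (M.N n : ℝ)⁻¹ := by
    intro n
    simp only [hρ]
    rw [← mul_inv, Real.mul_self_sqrt (Nat.cast_nonneg _)]
  have hNt : Tendsto (fun n => (M.N n : ℝ)) atTop atTop := tendsto_natCast_atTop_atTop.comp M.hN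
  have hρ0 : Tendsto ρ atTop (𝓝 0) := (Real.tendsto_sqrt_atTop.comp hNt).inv_tendsto_atTop
  have bΓ := aux_bdd_Γ M hA1 hA2
  have bI := aux_bdd_inv M hA1 hA6
  have b1 := aux_bdd_Gd M hA1 hA2 c
  obtain ⟨K, hK, hKe⟩ := (bI.mul b1).mul bI
  obtain ⟨K', hK', hKe'⟩ := bΓ
  have hm : Tendsto (fun n => ρ n * (K * K')) atTop (𝓝 0) := by
    simpa using hρ0.mul_const (K * K')
  have hrr : Tendsto (fun n => ∑ i, v n i ^ 2) atTop (𝓝 (b ⬝ᵥ Jβ *ᵥ b)) := by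
    have : Tendsto (fun n => b ⬝ᵥ ((M.N n : ℝ)⁻¹ • M.Iβ n) *ᵥ b) atTop (𝓝 (b ⬝ᵥ Jβ *ᵥ b)) := by
      have hcont : Continuous (fun A : Matrix (Fin p) (Fin p) ℝ => b ⬝ᵥ A *ᵥ b) := by fun_prop
      exact (hcont.tendsto _).comp h1
    refine this.congr fun n => ?_
    rw [hv n]
    simp only [smul_mulVec, mulVec_smul, dotProduct_smul, smul_dotProduct, smul_eq_mul, hu1]
    rw [mulVec_mulVec _ (M.Γ n M.θ0) (M.Γ n M.θ0)⁻¹, mul_nonsing_inv _ (hdu n), one_mulVec, ← mul_assoc, hρ2, dotProduct_comm _ (M.X n *ᵥ b), aux_XX]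
  have hss : Tendsto (fun n => ∑ i, lam n i ^ 2) atTop (𝓝 (2 * (c ⬝ᵥ Jθ *ᵥ c))) := by
    have : Tendsto (fun n => 2 * (c ⬝ᵥ ((M.N n : ℝ)⁻¹ • M.Iθ n) *ᵥ c)) atTop (𝓝 (2 * (c ⬝ᵥ Jθ *ᵥ c))) := by
      have hcont : Continuous (fun A : Matrix (Fin q) (Fin q) ℝ => 2 * (c ⬝ᵥ A *ᵥ c)) := by fun_prop
      exact (hcont.tendsto _).comp h2
    refine this.congr fun n => ?_
    rw [hlam n]
    have e1 : (ρ n • A1 n) * M.Γ n M.θ0 = ρ n • ((M.Γ n M.θ0)⁻¹ * auxGd (M.Γ n) c M.θ0) := by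
      rw [Matrix.smul_mul]
      simp only [hA1d]
      rw [Matrix.mul_assoc _ _ (M.Γ n M.θ0), nonsing_inv_mul _ (hdu n), Matrix.mul_one]
    rw [Matrix.mul_assoc _ _ (M.Γ n M.θ0), e1, Matrix.smul_mul, Matrix.mul_smul, smul_smul, hρ2, trace_smul,
      aux_Gd_lin]
    simp only [Matrix.mul_sum, Matrix.sum_mul, Matrix.mul_smul, Matrix.smul_mul, trace_sum, trace_smul,
      smul_mulVec, dotProduct_smul, smul_eq_mul]
    simp only [dotProduct, mulVec, SpatialModel.Iθ, of_apply, SpatialModel.tmat, Finset.mul_sum]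
    rw [Finset.sum_comm]
    refine Finset.sum_congr rfl fun k _ => Finset.sum_congr rfl fun l _ => ?_
    simp only [Matrix.mul_assoc]
    ring
  have hlim := aux_char_limit v lam _ hm (by
    filter_upwards [hKe, hKe'] with n e1 e2 i
    refine (hlb n i).trans ?_
    rw [norm_smul, mul_assoc, Real.norm_of_nonneg (by positivity)]
    exact mul_le_mul_of_nonneg_left (mul_le_mul e1 e2 (norm_nonneg _) hK) (by positivity)) _ _ hss hrr
  have e : a ⬝ᵥ (Matrix.fromBlocks Jβ 0 0 Jθ) *ᵥ a = c ⬝ᵥ Jθ *ᵥ c + b ⬝ᵥ Jβ *ᵥ b := by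
    have ha : a = Sum.elim b c := by ext i; rcases i with i | i <;> rfl
    rw [ha, fromBlocks_mulVec]
    simp [dotProduct, add_comm]
  rw [e]
  exact hlim.congr fun n => (hint' n).symm

end scorem


/-- **Lemma 1 (asymptotics of the score and Hessian).**
Under (A.1)–(A.7), for data generated from the model with parameter `η = (β, θ)`,
`N_n^{−1/2} ℓ'(η) →d N(0, J(η))` and `N_n^{−1} ℓ''(η) →p −J(η)`, where
`J(η) = diag{J(β), J(θ)}`. -/
theorem score_and_hessian_asymptotics
    {d p q : ℕ} (M : SpatialModel d p q) (hdata : M.GaussianData)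
    (Jβ : Matrix (Fin p) (Fin p) ℝ) (Jθ : Matrix (Fin q) (Fin q) ℝ)
    (hA1 : M.A1) (hA2 : M.A2) (hA3 : M.A3) (hA4 : M.A4) (hA5 : M.A5) (hA6 : M.A6)
    (hA7 : M.A7 Jβ Jθ) :
    (∃ μ : Measure ((Fin p ⊕ Fin q) → ℝ),
      IsGaussianVector μ 0 (Matrix.fromBlocks Jβ 0 0 Jθ) ∧
      TendstoInDistribution M.P
        (fun n ω => (Real.sqrt (M.N n))⁻¹ • M.score n (M.β0, M.θ0) ω) μ) ∧
    TendstoInProbMatrix M.P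
      (fun n ω => (M.N n : ℝ)⁻¹ • M.hess n (M.β0, M.θ0) ω)
      (-(Matrix.fromBlocks Jβ 0 0 Jθ)) := by
  have hJ : (Matrix.fromBlocks Jβ 0 0 Jθ).PosSemidef := by
    have h1 := hA7.1.posSemidef
    have h2 := hA7.2.1.posSemidef
    refine Matrix.PosSemidef.of_dotProduct_mulVec_nonneg ?_ ?_
    · exact Matrix.IsHermitian.fromBlocks h1.1 (by simp) h2.1
    · intro x
      have e : x = Sum.elim (fun i => x (Sum.inl i)) (fun i => x (Sum.inr i)) := by
        ext i; rcases i with i | i <;> rfl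
      have k1 := h1.dotProduct_mulVec_nonneg (fun i => x (Sum.inl i))
      have k2 := h2.dotProduct_mulVec_nonneg (fun i => x (Sum.inr i))
      rw [e, Matrix.fromBlocks_mulVec]
      simp only [dotProduct, Fintype.sum_sum_type, Pi.star_apply, star_trivial, Sum.elim_inl, Sum.elim_inr,
        Matrix.zero_mulVec, add_zero, zero_add, Function.comp_def] at k1 k2 ⊢
      exact add_nonneg k1 k2
  exact ⟨⟨_, aux_mvg _ hJ, aux_levy M.P _ (aux_score_meas M hdata hA1) _ hJ
    (aux_score_char M hdata Jβ Jθ hA1 hA2 hA6 hA7)⟩, aux_hess_main M hdata Jβ Jθ hA1 hA2 hA5 hA6 hA7⟩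
end
end

section
/- Under conditions (A.12)–(A.13), the tapered covariance matrices satisfy: (i) ‖Γ − Γ_T‖_∞ = O(N_n^{−1/2}); (ii) ‖Γ_k − Γ_{k,T}‖_∞ = O(N_n^{−1/2}) for each k = 1,…,q; (iii) ‖Γ_{kk'} − Γ_{kk',T}‖_∞ = O(N_n^{−1/2}) for each k, k' = 1,…,q, where ‖A‖_∞ = max_i ∑_j |a_{ij}| is the maximum absolute row sum norm. -/
open MeasureTheory Filter Matrix Asymptotics
open scoped ENNReal NNReal Topology BigOperators

noncomputable section

lemma packing_sum_bound (γ0 : ℝ → ℝ) (h0 : ∀ u, 0 ≤ γ0 u) (hanti : AntitoneOn γ0 (Set.Ioi 0))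
    (hint : IntegrableOn (fun u => u ^ 2 * γ0 u) (Set.Ioi 0)) (c : ℝ) (hc : 0 < c) :
    ∃ C : ℝ, 0 ≤ C ∧ ∀ (M : ℕ) (p : Fin M → EuclideanSpace ℝ (Fin 2)),
      (∀ i j, i ≠ j → c ≤ dist (p i) (p j)) → ∀ i,
        ∑ j ∈ Finset.univ.erase i, dist (p i) (p j) * γ0 (dist (p i) (p j)) ≤ C := by
  have hI : Integrable (fun x : EuclideanSpace ℝ (Fin 2) => ‖x‖ * γ0 ‖x‖) := by
    have := (integrable_fun_norm_addHaar (volume : Measure (EuclideanSpace ℝ (Fin 2)))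
      (f := fun u => u * γ0 u)).2
    apply this
    refine hint.congr_fun ?_ measurableSet_Ioi
    intro u _
    simp
    ring
  set v : ℝ := volume.real (Metric.ball (0 : EuclideanSpace ℝ (Fin 2)) (c / 4)) with hv
  have hvpos : 0 < v := by
    rw [hv]
    exact ENNReal.toReal_pos (Metric.measure_ball_pos _ _ (by positivity)).ne' measure_ball_lt_top.ne
  set J := ∫ x : EuclideanSpace ℝ (Fin 2), ‖x‖ * γ0 ‖x‖ with hJ
  have hnn : ∀ x : EuclideanSpace ℝ (Fin 2), 0 ≤ ‖x‖ * γ0 ‖x‖ := fun x =>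
    mul_nonneg (norm_nonneg _) (h0 _)
  have hJ0 : 0 ≤ J := integral_nonneg hnn
  refine ⟨2 / v * J, by positivity, ?_⟩
  intro M p hp i
  let y : Fin M → EuclideanSpace ℝ (Fin 2) := fun j =>
    (1 - c / (4 * dist (p i) (p j))) • (p j - p i)
  have hd : ∀ j, j ≠ i → c ≤ dist (p i) (p j) := fun j hj => hp i j hj.symm
  have hnorm : ∀ j, ‖p j - p i‖ = dist (p i) (p j) := fun j => by
    rw [dist_comm, dist_eq_norm]
  have hy : ∀ j, j ≠ i → ‖y j‖ = dist (p i) (p j) - c / 4 := by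
    intro j hj
    have h1 := hd j hj
    have hpos : 0 < dist (p i) (p j) := by linarith
    simp only [y]
    rw [norm_smul, hnorm, Real.norm_of_nonneg]
    · field_simp
    · rw [sub_nonneg, div_le_one (by positivity)]; linarith
  have hy2 : ∀ j, j ≠ i → ‖y j - (p j - p i)‖ = c / 4 := by
    intro j hj
    have h1 := hd j hj
    have hpos : 0 < dist (p i) (p j) := by linarith
    have : y j - (p j - p i) = (- (c / (4 * dist (p i) (p j)))) • (p j - p i) := by
      simp only [y]; rw [sub_smul, one_smul, neg_smul]; abel
    rw [this, norm_smul, hnorm, norm_neg, Real.norm_of_nonneg (by positivity)]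
    field_simp
  have hxn : ∀ j, j ≠ i → ∀ x ∈ Metric.ball (y j) (c / 4),
      dist (p i) (p j) / 2 ≤ ‖x‖ ∧ ‖x‖ ≤ dist (p i) (p j) ∧ 0 < ‖x‖ := by
    intro j hj x hx
    have h1 := hd j hj
    rw [mem_ball_iff_norm] at hx
    have h2 := hy j hj
    have h3 := abs_le.1 (abs_norm_sub_norm_le x (y j))
    refine ⟨by linarith, by linarith, by linarith⟩
  have hterm : ∀ j ∈ Finset.univ.erase i,
      v * (dist (p i) (p j) * γ0 (dist (p i) (p j))) ≤
        2 * ∫ x in Metric.ball (y j) (c / 4), ‖x‖ * γ0 ‖x‖ := by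
    intro j hj
    have hj := Finset.ne_of_mem_erase hj
    have hvj : volume.real (Metric.ball (y j) (c / 4)) = v := by
      rw [hv, measureReal_def, measureReal_def, Measure.addHaar_ball_center]
    rw [← hvj, ← smul_eq_mul (volume.real _), ← setIntegral_const, ← integral_const_mul]
    refine setIntegral_mono_on (integrableOn_const measure_ball_lt_top.ne)
      (hI.integrableOn.const_mul 2) measurableSet_ball ?_
    intro x hx
    obtain ⟨a, b, e⟩ := hxn j hj x hx
    have hm : γ0 (dist (p i) (p j)) ≤ γ0 ‖x‖ := hanti e (lt_of_lt_of_le e b) b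
    calc _ ≤ (2 * ‖x‖) * γ0 ‖x‖ := mul_le_mul (by linarith) hm (h0 _) (by positivity)
      _ = _ := by ring
  have hdisj : Set.Pairwise (↑(Finset.univ.erase i) : Set (Fin M))
      (Function.onFun Disjoint fun j => Metric.ball (y j) (c / 4)) := by
    intro j hj k hk hjk
    have hj := Finset.ne_of_mem_erase hj
    have hk := Finset.ne_of_mem_erase hk
    rw [Function.onFun, Set.disjoint_left]
    intro x hxj hxk
    rw [mem_ball_iff_norm] at hxj hxk
    have h1 := hp j k hjk
    rw [dist_eq_norm] at h1
    have h2 : p j - p k = -(y j - (p j - p i)) - (x - y j) + (x - y k) + (y k - (p k - p i)) := by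
      abel
    have h3 : ‖p j - p k‖ ≤ ‖y j - (p j - p i)‖ + ‖x - y j‖ + ‖x - y k‖ + ‖y k - (p k - p i)‖ := by
      rw [h2]
      refine (norm_add_le _ _).trans (add_le_add_left ((norm_add_le _ _).trans
        (add_le_add_left ((norm_sub_le _ _).trans ?_) _)) _)
      rw [norm_neg]
    rw [hy2 j hj, hy2 k hk] at h3
    linarith
  have hsum : v * ∑ j ∈ Finset.univ.erase i, dist (p i) (p j) * γ0 (dist (p i) (p j)) ≤ 2 * J := by
    rw [Finset.mul_sum]
    refine (Finset.sum_le_sum hterm).trans ?_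
    rw [← Finset.mul_sum, ← integral_biUnion_finset _ (fun _ _ => measurableSet_ball) hdisj
      (fun _ _ => hI.integrableOn)]
    exact mul_le_mul_of_nonneg_left
      (setIntegral_le_integral hI (Eventually.of_forall hnn)) (by norm_num)
  rw [div_mul_eq_mul_div, le_div_iff₀ hvpos, mul_comm]
  exact hsum

lemma taper_bigO (N : ℕ → ℕ)
    (sites : ∀ n, Fin (N n) → EuclideanSpace ℝ (Fin 2))
    (hsep : ∃ c : ℝ, 0 < c ∧ ∀ n, ∀ i j : Fin (N n), i ≠ j →
      c ≤ dist (sites n i) (sites n j))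
    (ω : ℕ → ℝ)
    (hA12 : ∃ c1 c2 : ℝ, 0 < c1 ∧ ∀ n,
      c1 ≤ ω n * (Real.sqrt (N n))⁻¹ ∧ ω n * (Real.sqrt (N n))⁻¹ ≤ c2)
    (γ0 : ℝ → ℝ) (h0 : ∀ u, 0 ≤ γ0 u) (hanti : AntitoneOn γ0 (Set.Ioi 0))
    (hint : IntegrableOn (fun u => u ^ 2 * γ0 u) (Set.Ioi 0))
    (g : ℝ → ℝ) (hg : ∀ u, 0 < u → |g u| ≤ γ0 u) :
    (fun n => ⨆ i : Fin (N n), ∑ j : Fin (N n),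
        |g (dist (sites n i) (sites n j)) -
          g (dist (sites n i) (sites n j)) *
            max (1 - dist (sites n i) (sites n j) / ω n) 0|)
      =O[atTop] fun n => (Real.sqrt (N n))⁻¹ := by
  obtain ⟨c, hc, hsep⟩ := hsep
  obtain ⟨c1, c2, hc1, hω⟩ := hA12
  obtain ⟨C, hC, hb⟩ := packing_sum_bound γ0 h0 hanti hint c hc
  refine IsBigO.of_bound (C / c1) (Eventually.of_forall fun n => ?_)
  have hs0 : 0 ≤ (Real.sqrt (N n))⁻¹ := by positivity
  have h1 := (hω n).1
  have hspos : 0 < (Real.sqrt (N n))⁻¹ := by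
    rcases hs0.lt_or_eq with h | h
    · exact h
    · rw [← h] at h1; linarith
  have hωpos : 0 < ω n := by
    by_contra h
    have := mul_nonpos_of_nonpos_of_nonneg (not_lt.1 h) hs0
    linarith
  rw [Real.norm_of_nonneg hs0, Real.norm_of_nonneg
    (Real.iSup_nonneg fun i => Finset.sum_nonneg fun j _ => abs_nonneg _)]
  have hfin : (ω n)⁻¹ * C ≤ C / c1 * (Real.sqrt (N n))⁻¹ := by
    have : (ω n)⁻¹ ≤ (Real.sqrt (N n))⁻¹ / c1 := by
      rw [le_div_iff₀ hc1, inv_mul_le_iff₀ hωpos]; exact h1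
    calc _ ≤ (Real.sqrt (N n))⁻¹ / c1 * C := mul_le_mul_of_nonneg_right this hC
      _ = _ := by ring
  refine Real.iSup_le (fun i => ?_) (by positivity)
  refine le_trans ?_ hfin
  refine le_trans ?_ (mul_le_mul_of_nonneg_left (hb (N n) (sites n) (hsep n) i) (by positivity))
  rw [← Finset.add_sum_erase _ _ (Finset.mem_univ i), Finset.mul_sum]
  simp only [dist_self, zero_div, sub_zero, zero_le_one, sup_of_le_left, mul_one, sub_self,
    abs_zero, zero_add]
  refine Finset.sum_le_sum fun j hj => ?_
  have hj := Finset.ne_of_mem_erase hj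
  have hd := hsep n i j hj.symm
  set d := dist (sites n i) (sites n j)
  have hdpos : 0 < d := by linarith
  have hq : 0 < d / ω n := by positivity
  have h2 : |1 - max (1 - d / ω n) 0| ≤ d / ω n := by
    rw [abs_le]
    constructor
    · have : max (1 - d / ω n) 0 ≤ 1 := max_le (by linarith) (by norm_num)
      linarith
    · have := le_max_left (1 - d / ω n) 0
      linarith
  calc |g d - g d * max (1 - d / ω n) 0| = |g d| * |1 - max (1 - d / ω n) 0| := by
        rw [← abs_mul]; congr 1; ring
    _ ≤ γ0 d * (d / ω n) := mul_le_mul (hg d hdpos) h2 (abs_nonneg _) (h0 _)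
    _ = _ := by rw [div_eq_mul_inv]; ring

/-- **Lemma 2 (tapering error in the maximum absolute row sum norm).**
Under (A.12)–(A.13), for a second-order stationary isotropic covariance function on `ℝ²`
with minimum-separated sampling sites, the difference between the covariance matrix
(resp. its first and second parameter derivatives) and its tapered version, measured in
the maximum absolute row sum norm `‖A‖_∞ = max_i ∑_j |a_{ij}|`, is `O(N_n^{−1/2})`. -/
theorem tapering_error_rowsum_norm
    (q : ℕ) (N : ℕ → ℕ) (hN : Tendsto N atTop atTop)
    (sites : ∀ n, Fin (N n) → EuclideanSpace ℝ (Fin 2))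
    (hsep : ∃ c : ℝ, 0 < c ∧ ∀ n, ∀ i j : Fin (N n), i ≠ j →
      c ≤ dist (sites n i) (sites n j))
    (γr : ℝ → (Fin q → ℝ) → ℝ) (θ : Fin q → ℝ)
    (ω : ℕ → ℝ)
    -- (A.12)
    (hA12 : ∃ c1 c2 : ℝ, 0 < c1 ∧ ∀ n,
      c1 ≤ ω n * (Real.sqrt (N n))⁻¹ ∧ ω n * (Real.sqrt (N n))⁻¹ ≤ c2)
    -- (A.13)
    (hA13 : ∃ γ0 : ℝ → ℝ,
      (∀ u, 0 ≤ γ0 u) ∧ AntitoneOn γ0 (Set.Ioi 0) ∧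
      IntegrableOn (fun u => u ^ 2 * γ0 u) (Set.Ioi 0) ∧
      ∀ u : ℝ, 0 < u →
        |γr u θ| ≤ γ0 u ∧
        ∀ k k' : Fin q,
          |fderiv ℝ (fun t => γr u t) θ (Pi.single k 1)| ≤ γ0 u ∧
          |fderiv ℝ (fun t =>
              fderiv ℝ (fun t' => γr u t') t (Pi.single k' 1)) θ (Pi.single k 1)| ≤ γ0 u) :
    -- (i) ‖Γ − Γ_T‖_∞ = O(N_n^{−1/2})
    ((fun n => ⨆ i : Fin (N n), ∑ j : Fin (N n),
        |γr (dist (sites n i) (sites n j)) θ -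
          γr (dist (sites n i) (sites n j)) θ *
            max (1 - dist (sites n i) (sites n j) / ω n) 0|)
      =O[atTop] fun n => (Real.sqrt (N n))⁻¹) ∧
    -- (ii) ‖Γ_k − Γ_{k,T}‖_∞ = O(N_n^{−1/2})
    (∀ k : Fin q,
      (fun n => ⨆ i : Fin (N n), ∑ j : Fin (N n),
        |fderiv ℝ (fun t => γr (dist (sites n i) (sites n j)) t) θ (Pi.single k 1) -
          fderiv ℝ (fun t => γr (dist (sites n i) (sites n j)) t) θ (Pi.single k 1) *
            max (1 - dist (sites n i) (sites n j) / ω n) 0|)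
      =O[atTop] fun n => (Real.sqrt (N n))⁻¹) ∧
    -- (iii) ‖Γ_{kk'} − Γ_{kk',T}‖_∞ = O(N_n^{−1/2})
    (∀ k k' : Fin q,
      (fun n => ⨆ i : Fin (N n), ∑ j : Fin (N n),
        |fderiv ℝ (fun t => fderiv ℝ (fun t' => γr (dist (sites n i) (sites n j)) t') t
              (Pi.single k' 1)) θ (Pi.single k 1) -
          fderiv ℝ (fun t => fderiv ℝ (fun t' => γr (dist (sites n i) (sites n j)) t') t
              (Pi.single k' 1)) θ (Pi.single k 1) *
            max (1 - dist (sites n i) (sites n j) / ω n) 0|)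
      =O[atTop] fun n => (Real.sqrt (N n))⁻¹) := by
  obtain ⟨γ0, h0, hanti, hint, hb⟩ := hA13
  refine ⟨?_, fun k => ?_, fun k k' => ?_⟩
  · exact taper_bigO N sites hsep ω hA12 γ0 h0 hanti hint (fun u => γr u θ)
      (fun u hu => (hb u hu).1)
  · exact taper_bigO N sites hsep ω hA12 γ0 h0 hanti hint
      (fun u => fderiv ℝ (fun t => γr u t) θ (Pi.single k 1))
      (fun u hu => ((hb u hu).2 k k).1)
  · exact taper_bigO N sites hsep ω hA12 γ0 h0 hanti hint
      (fun u => fderiv ℝ (fun t => fderiv ℝ (fun t' => γr u t') t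
        (Pi.single k' 1)) θ (Pi.single k 1))
      (fun u hu => ((hb u hu).2 k k').2)
end
end

section
/- Under conditions (A.1)–(A.4), (A.6) and (A.12)–(A.13), the tapered covariance matrices satisfy: (C.1) the largest eigenvalue of Γ_T and the largest absolute eigenvalues of Γ_{k,T} and Γ_{kk',T} converge to the same finite constants C, C_k, C_{kk'} as the corresponding untapered matrices; (C.2) ‖Γ_{k,T}‖_F^{−2} = O(N_n^{−1/2−δ}) for each k, with the same δ > 0 as in (A.3); (C.3) the spectral norm of Γ_T^{−1} is bounded by a finite constant uniformly in n; (C.4) for each k, k', a_{kk',T} = lim_n t_{kk',T}(t_{kk,T} t_{k'k',T})^{−1/2} exists and equals a_{kk'} = lim_n t_{kk'}(t_{kk} t_{k'k'})^{−1/2}; that is, the matrix A_T = (a_{kk',T}) equals A = (a_{kk'}) and is nonsingular. -/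
open MeasureTheory Filter Matrix Asymptotics
open scoped ENNReal NNReal Topology BigOperators

noncomputable section

/-- The covariance matrix generated by an isotropic covariance function `γr` at the
sampling sites. -/
def covMat {q m : ℕ} (sites : Fin m → EuclideanSpace ℝ (Fin 2))
    (γr : ℝ → (Fin q → ℝ) → ℝ) (θ : Fin q → ℝ) : Matrix (Fin m) (Fin m) ℝ :=
  Matrix.of fun i j => γr (dist (sites i) (sites j)) θ

/-- The entrywise partial derivative `Γ_k = ∂Γ/∂θ_k`. -/
def covMatD {q m : ℕ} (sites : Fin m → EuclideanSpace ℝ (Fin 2))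
    (γr : ℝ → (Fin q → ℝ) → ℝ) (k : Fin q) (θ : Fin q → ℝ) : Matrix (Fin m) (Fin m) ℝ :=
  Matrix.of fun i j =>
    fderiv ℝ (fun t => γr (dist (sites i) (sites j)) t) θ (Pi.single k 1)

/-- The entrywise second partial derivative `Γ_{kk'} = ∂²Γ/∂θ_k∂θ_{k'}`. -/
def covMatDD {q m : ℕ} (sites : Fin m → EuclideanSpace ℝ (Fin 2))
    (γr : ℝ → (Fin q → ℝ) → ℝ) (k k' : Fin q) (θ : Fin q → ℝ) : Matrix (Fin m) (Fin m) ℝ :=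
  Matrix.of fun i j =>
    fderiv ℝ (fun t => fderiv ℝ (fun t' => γr (dist (sites i) (sites j)) t') t
      (Pi.single k' 1)) θ (Pi.single k 1)

/-- The tapering matrix `Δ(ω)` built from `K_T(d, ω) = (1 − d/ω)₊`. -/
def taperMat {m : ℕ} (sites : Fin m → EuclideanSpace ℝ (Fin 2)) (ω : ℝ) :
    Matrix (Fin m) (Fin m) ℝ :=
  Matrix.of fun i j => max (1 - dist (sites i) (sites j) / ω) 0

/-- `tr(Γ⁻¹ Γ_k Γ⁻¹ Γ_{k'})`. -/
def tQuad {m : ℕ} (G Gk Gk' : Matrix (Fin m) (Fin m) ℝ) : ℝ :=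
  (G⁻¹ * Gk * G⁻¹ * Gk').trace

/-- The spectral (l2 operator) norm. -/
def opN {m : ℕ} (A : Matrix (Fin m) (Fin m) ℝ) : ℝ :=
  ‖Matrix.toEuclideanCLM (n := Fin m) (𝕜 := ℝ) A‖

lemma opN_nonneg {m : ℕ} (A : Matrix (Fin m) (Fin m) ℝ) : 0 ≤ opN A := norm_nonneg _

lemma opN_mul {m : ℕ} (A B : Matrix (Fin m) (Fin m) ℝ) : opN (A * B) ≤ opN A * opN B := by
  unfold opN
  rw [map_mul]
  exact norm_mul_le _ _

lemma opN_neg {m : ℕ} (A : Matrix (Fin m) (Fin m) ℝ) : opN (-A) = opN A := by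
  unfold opN
  rw [map_neg, norm_neg]

lemma opN_mulVec {m : ℕ} (A : Matrix (Fin m) (Fin m) ℝ) (x : Fin m → ℝ) :
    ∑ i, ((A *ᵥ x) i) ^ 2 ≤ opN A ^ 2 * ∑ i, (x i) ^ 2 := by
  have h := (Matrix.toEuclideanCLM (n := Fin m) (𝕜 := ℝ) A).le_opNorm (WithLp.toLp 2 x)
  rw [Matrix.toEuclideanCLM_toLp] at h
  have h2 := pow_le_pow_left₀ (norm_nonneg _) h 2
  rw [mul_pow, EuclideanSpace.norm_sq_eq, EuclideanSpace.norm_sq_eq] at h2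
  simpa [opN] using h2

lemma opN_transpose {m : ℕ} (A : Matrix (Fin m) (Fin m) ℝ) : opN Aᵀ = opN A := by
  open scoped Matrix.Norms.L2Operator in
  have := Matrix.l2_opNorm_conjTranspose (𝕜 := ℝ) A
  rw [Matrix.conjTranspose_eq_transpose_of_trivial] at this
  exact this

lemma opN_transpose_mul_self {m : ℕ} (A : Matrix (Fin m) (Fin m) ℝ) :
    opN (Aᵀ * A) = opN A * opN A := by
  open scoped Matrix.Norms.L2Operator in
  have := Matrix.l2_opNorm_conjTranspose_mul_self (𝕜 := ℝ) A
  rw [Matrix.conjTranspose_eq_transpose_of_trivial] at this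
  exact this

lemma opN_unitary_conj {m : ℕ} (U : unitary (Matrix (Fin m) (Fin m) ℝ)) (v : Fin m → ℝ) :
    opN ((U : Matrix (Fin m) (Fin m) ℝ) * diagonal v * star (U : Matrix (Fin m) (Fin m) ℝ))
      = ‖v‖ := by
  open scoped Matrix.Norms.L2Operator in
  have h : ‖(U : Matrix (Fin m) (Fin m) ℝ) * diagonal v * star (U : Matrix (Fin m) (Fin m) ℝ)‖
      = ‖v‖ := by
    rw [← Unitary.coe_star, CStarRing.norm_mul_coe_unitary, CStarRing.norm_coe_unitary_mul,
      Matrix.l2_opNorm_diagonal]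
  exact h

lemma isUnit_one_sub_of_opN {m : ℕ} (A : Matrix (Fin m) (Fin m) ℝ) (h : opN A < 1) :
    IsUnit (1 - A) := by
  have h1 := isUnit_one_sub_of_norm_lt_one
    (x := Matrix.toEuclideanCLM (n := Fin m) (𝕜 := ℝ) A) h
  rw [← map_one (Matrix.toEuclideanCLM (n := Fin m) (𝕜 := ℝ)), ← map_sub] at h1
  exact (MulEquiv.isUnit_map (Matrix.toEuclideanCLM (n := Fin m) (𝕜 := ℝ))).1 h1

lemma opN_le_of_spec {m : ℕ} {A : Matrix (Fin m) (Fin m) ℝ} (hA : A.IsHermitian) {r : ℝ}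
    (hr : 0 ≤ r) (h : ∀ x ∈ spectrum ℝ A, |x| ≤ r) : opN A ≤ r := by
  have hs := hA.spectral_theorem
  rw [Unitary.conjStarAlgAut_apply] at hs
  rw [hs, opN_unitary_conj]
  rw [pi_norm_le_iff_of_nonneg hr]
  intro i
  simpa using h _ (hA.eigenvalues_mem_spectrum_real i)

lemma spec_nonempty {m : ℕ} (hm : 0 < m) {A : Matrix (Fin m) (Fin m) ℝ} (hA : A.IsHermitian) :
    (spectrum ℝ A).Nonempty := ⟨_, hA.eigenvalues_mem_spectrum_real ⟨0, hm⟩⟩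

/-- Lower bound of spectrum gives inverse bound. -/
lemma inv_bound {m : ℕ} {M : Matrix (Fin m) (Fin m) ℝ} (hM : M.IsHermitian) {r : ℝ}
    (hr : 0 < r) (h : ∀ x ∈ spectrum ℝ M, r ≤ |x|) :
    IsUnit M ∧ (∀ x ∈ spectrum ℝ M⁻¹, |x| ≤ r⁻¹) ∧ opN M⁻¹ ≤ r⁻¹ := by
  have h0 : IsUnit M := by
    rw [← spectrum.zero_notMem_iff ℝ]
    intro h1
    have := h 0 h1
    simp at this
    linarith
  have h2 : ∀ x ∈ spectrum ℝ M⁻¹, |x| ≤ r⁻¹ := by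
    intro x hx
    obtain ⟨u, rfl⟩ := h0
    rw [← Matrix.coe_units_inv, ← spectrum.map_inv, Set.mem_inv] at hx
    have := h _ hx
    rw [abs_inv] at this
    exact (le_inv_comm₀ hr (by
      by_contra hc
      have : |x| = 0 := le_antisymm (not_lt.1 hc) (abs_nonneg _)
      simp [this] at *; linarith)).1 this
  exact ⟨h0, h2, opN_le_of_spec hM.inv (inv_nonneg.2 hr.le) h2⟩

lemma spec_perturb {m : ℕ} {A E : Matrix (Fin m) (Fin m) ℝ} (hA : A.IsHermitian) {r : ℝ}
    (hE : opN E < r) {x : ℝ} (hx : x ∈ spectrum ℝ (A + E)) :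
    ∃ y ∈ spectrum ℝ A, |y - x| < r := by
  by_contra! hc
  have hr : 0 < r := (opN_nonneg E).trans_lt hE
  have hH : (algebraMap ℝ (Matrix (Fin m) (Fin m) ℝ) x - A).IsHermitian := by
    refine Matrix.IsHermitian.sub ?_ hA
    rw [Algebra.algebraMap_eq_smul_one]
    simp [Matrix.IsHermitian]
  obtain ⟨hu, -, hb⟩ := inv_bound hH hr (by
    intro z hz
    rw [← spectrum.singleton_sub_eq] at hz
    obtain ⟨w, hw, y, hy, rfl⟩ := hz
    rw [Set.mem_singleton_iff.1 hw, abs_sub_comm]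
    exact hc y hy)
  set M := algebraMap ℝ (Matrix (Fin m) (Fin m) ℝ) x - A with hMdef
  apply hx
  have h1 : IsUnit (1 - M⁻¹ * E) := by
    apply isUnit_one_sub_of_opN
    calc opN (M⁻¹ * E) ≤ opN M⁻¹ * opN E := opN_mul _ _
      _ ≤ r⁻¹ * opN E := by gcongr; exact opN_nonneg _
      _ < r⁻¹ * r := by gcongr
      _ = 1 := inv_mul_cancel₀ hr.ne'
  have h2 : algebraMap ℝ (Matrix (Fin m) (Fin m) ℝ) x - (A + E) = M * (1 - M⁻¹ * E) := by
    have hd : IsUnit M.det := (Matrix.isUnit_iff_isUnit_det _).1 hu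
    rw [mul_sub, ← mul_assoc, Matrix.mul_nonsing_inv _ hd, hMdef]
    simp [sub_sub]
  rw [spectrum.mem_resolventSet_iff, h2]
  exact hu.mul h1

lemma spec_sSup_perturb {m : ℕ} (hm : 0 < m) {A B : Matrix (Fin m) (Fin m) ℝ}
    (hA : A.IsHermitian) (hB : B.IsHermitian) {r : ℝ} (hE : opN (B - A) < r) (f : ℝ → ℝ)
    (hf : ∀ x y, f x ≤ f y + |y - x|) :
    |sSup (f '' spectrum ℝ B) - sSup (f '' spectrum ℝ A)| ≤ r := by
  have key : ∀ {A B : Matrix (Fin m) (Fin m) ℝ}, A.IsHermitian → B.IsHermitian →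
      opN (B - A) < r → sSup (f '' spectrum ℝ B) ≤ sSup (f '' spectrum ℝ A) + r := by
    intro A B hA hB hE
    apply csSup_le ((spec_nonempty hm hB).image f)
    rintro _ ⟨x, hx, rfl⟩
    have hx' : x ∈ spectrum ℝ (A + (B - A)) := by simpa using hx
    obtain ⟨y, hy, hyx⟩ := spec_perturb hA hE hx'
    have hbdd : BddAbove (f '' spectrum ℝ A) := (Matrix.finite_real_spectrum.image f).bddAbove
    have := le_csSup hbdd (Set.mem_image_of_mem f hy)
    have := hf x y
    linarith
  rw [abs_sub_le_iff]
  have h1 := key hA hB hE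
  have h2 := key hB hA (by rw [← opN_neg, neg_sub]; exact hE)
  constructor <;> linarith

/-- Gershgorin bound. -/
lemma opN_le_rows {m : ℕ} {E : Matrix (Fin m) (Fin m) ℝ} (hE : E.IsHermitian)
    (hd : ∀ i, E i i = 0) {r : ℝ} (hr : 0 ≤ r)
    (h : ∀ i, ∑ j ∈ Finset.univ.erase i, |E i j| ≤ r) : opN E ≤ r := by
  apply opN_le_of_spec hE hr
  intro x hx
  rw [← Matrix.spectrum_toLin', ← Module.End.hasEigenvalue_iff_mem_spectrum] at hx
  obtain ⟨k, hk⟩ := eigenvalue_mem_ball hx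
  rw [hd k, mem_closedBall_zero_iff] at hk
  exact hk.trans (h k)

lemma frob_nonneg {m : ℕ} (A : Matrix (Fin m) (Fin m) ℝ) : 0 ≤ frobNorm A := Real.sqrt_nonneg _

lemma frob_sq {m : ℕ} (A : Matrix (Fin m) (Fin m) ℝ) :
    frobNorm A ^ 2 = ∑ i, ∑ j, (A i j) ^ 2 :=
  Real.sq_sqrt (Finset.sum_nonneg fun _ _ => Finset.sum_nonneg fun _ _ => sq_nonneg _)

lemma frob_transpose {m : ℕ} (A : Matrix (Fin m) (Fin m) ℝ) : frobNorm Aᵀ = frobNorm A := by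
  unfold frobNorm
  rw [Finset.sum_comm]
  rfl

lemma frob_mul_le {m : ℕ} (A B : Matrix (Fin m) (Fin m) ℝ) :
    frobNorm (A * B) ≤ opN A * frobNorm B := by
  refine le_of_abs_le (abs_le_of_sq_le_sq ?_ (mul_nonneg (opN_nonneg _) (frob_nonneg _)))
  rw [mul_pow, frob_sq, frob_sq, Finset.sum_comm, Finset.sum_comm (f := fun i j => B i j ^ 2),
    Finset.mul_sum]
  refine Finset.sum_le_sum fun j _ => ?_
  exact opN_mulVec A (fun i => B i j)

lemma frob_mul_le' {m : ℕ} (A B : Matrix (Fin m) (Fin m) ℝ) :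
    frobNorm (A * B) ≤ frobNorm A * opN B := by
  rw [← frob_transpose, Matrix.transpose_mul, mul_comm, ← opN_transpose B, ← frob_transpose A]
  exact frob_mul_le _ _

lemma frob_le_opN {m : ℕ} (A : Matrix (Fin m) (Fin m) ℝ) :
    frobNorm A ≤ opN A * Real.sqrt m := by
  have h := frob_mul_le A 1
  rw [mul_one] at h
  convert h using 2
  unfold frobNorm
  congr 1
  simp [Matrix.one_apply]

lemma frob_add_le {m : ℕ} (A B : Matrix (Fin m) (Fin m) ℝ) :
    frobNorm (A + B) ≤ frobNorm A + frobNorm B := by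
  open scoped Matrix.Norms.Frobenius in
  have h : ∀ A : Matrix (Fin m) (Fin m) ℝ, frobNorm A = ‖A‖ := by
    intro A
    rw [Matrix.frobenius_norm_def, frobNorm, Real.sqrt_eq_rpow]
    simp
  rw [h, h, h]
  exact norm_add_le _ _

lemma trace_mul_le {m : ℕ} (P Q : Matrix (Fin m) (Fin m) ℝ) :
    |(P * Q).trace| ≤ frobNorm P * frobNorm Q := by
  apply abs_le_of_sq_le_sq _ (mul_nonneg (frob_nonneg _) (frob_nonneg _))
  rw [mul_pow, ← frob_transpose Q, frob_sq, frob_sq]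
  simp only [Matrix.trace, Matrix.diag, Matrix.mul_apply, Matrix.transpose_apply,
    ← Finset.sum_product', Finset.univ_product_univ]
  exact Finset.sum_mul_sq_le_sq_mul_sq Finset.univ (fun p : Fin m × Fin m => P p.1 p.2)
    (fun p => Q p.2 p.1)

lemma trace4_le {m : ℕ} (A X B Y : Matrix (Fin m) (Fin m) ℝ) :
    |(A * X * B * Y).trace| ≤ opN A * frobNorm X * (opN B * frobNorm Y) := by
  rw [mul_assoc]
  exact (trace_mul_le _ _).trans (mul_le_mul (frob_mul_le _ _) (frob_mul_le _ _)
    (frob_nonneg _) (mul_nonneg (opN_nonneg _) (frob_nonneg _)))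

lemma posSemidef_factor {m : ℕ} {G : Matrix (Fin m) (Fin m) ℝ} (hG : G.PosSemidef) :
    ∃ L : Matrix (Fin m) (Fin m) ℝ, G = Lᴴ * L := by
  open scoped MatrixOrder Matrix.Norms.L2Operator in
  exact CStarAlgebra.nonneg_iff_eq_star_mul_self.mp hG.nonneg

lemma tQuad_lower {m : ℕ} {G X : Matrix (Fin m) (Fin m) ℝ} (hG : G.PosDef)
    (hX : X.IsHermitian) : frobNorm X ^ 2 ≤ opN G ^ 2 * tQuad G X X := by
  obtain ⟨L, hL⟩ := posSemidef_factor hG.posSemidef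
  rw [Matrix.conjTranspose_eq_transpose_of_trivial] at hL
  have hX' : Xᵀ = X := by
    rw [← Matrix.conjTranspose_eq_transpose_of_trivial]; exact hX
  have hdet : IsUnit L.det := by
    have h := hG.det_pos
    rw [hL, Matrix.det_mul, Matrix.det_transpose] at h
    refine isUnit_iff_ne_zero.2 fun h0 => ?_
    simp [h0] at h
  have hdet' : IsUnit Lᵀ.det := by rwa [Matrix.det_transpose]
  set Y := (Lᵀ)⁻¹ * X * L⁻¹ with hY
  have hXY : X = Lᵀ * Y * L := by
    rw [hY]
    simp only [mul_assoc]
    rw [Matrix.nonsing_inv_mul _ hdet, mul_one, ← mul_assoc, Matrix.mul_nonsing_inv _ hdet',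
      one_mul]
  have hYt : Yᵀ = Y := by
    rw [hY, Matrix.transpose_mul, Matrix.transpose_mul, hX', Matrix.transpose_nonsing_inv,
      Matrix.transpose_nonsing_inv, Matrix.transpose_transpose, mul_assoc]
  have ht : tQuad G X X = frobNorm Y ^ 2 := by
    have h1 : tQuad G X X = (Y * Y).trace := by
      unfold tQuad
      rw [hL, Matrix.mul_inv_rev]
      have : L⁻¹ * (Lᵀ)⁻¹ * X * (L⁻¹ * (Lᵀ)⁻¹) * X = L⁻¹ * (Y * ((Lᵀ)⁻¹ * X)) := by
        rw [hY]; simp only [mul_assoc]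
      rw [this, Matrix.trace_mul_comm]
      congr 1
      rw [hY]; simp only [mul_assoc]
    rw [h1, frob_sq]
    nth_rewrite 2 [← hYt]
    simp [Matrix.trace, Matrix.mul_apply, sq]
  have hb : frobNorm X ≤ opN G * frobNorm Y := by
    calc frobNorm X = frobNorm (Lᵀ * Y * L) := by rw [← hXY]
      _ ≤ frobNorm (Lᵀ * Y) * opN L := frob_mul_le' _ _
      _ ≤ (opN Lᵀ * frobNorm Y) * opN L := by
        gcongr
        · exact opN_nonneg _
        · exact frob_mul_le _ _
      _ = opN G * frobNorm Y := by
        rw [hL, opN_transpose_mul_self, opN_transpose]; ring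
  rw [ht, ← mul_pow]
  exact pow_le_pow_left₀ (frob_nonneg _) hb 2

lemma tQuad_diff {m : ℕ} {G G' X X' Y Y' : Matrix (Fin m) (Fin m) ℝ} {M e b : ℝ}
    (hG : IsUnit G) (hG' : IsUnit G') (hM : opN G⁻¹ ≤ M) (hM' : opN G'⁻¹ ≤ M)
    (he : opN (G' - G) ≤ e) (hX : frobNorm (X' - X) ≤ b) (hY : frobNorm (Y' - Y) ≤ b)
    (hbX : b ≤ frobNorm X) (hbY : b ≤ frobNorm Y) :
    |tQuad G' X' Y' - tQuad G X Y| ≤ 8 * M ^ 3 * e * (frobNorm X * frobNorm Y)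
      + 2 * M ^ 2 * b * frobNorm Y + M ^ 2 * b * frobNorm X := by
  have hM0 : 0 ≤ M := (opN_nonneg _).trans hM
  have he0 : 0 ≤ e := (opN_nonneg _).trans he
  have hb0 : 0 ≤ b := (frob_nonneg _).trans hX
  have hd : IsUnit G.det := (Matrix.isUnit_iff_isUnit_det _).1 hG
  have hd' : IsUnit G'.det := (Matrix.isUnit_iff_isUnit_det _).1 hG'
  have hX2 : frobNorm X' ≤ 2 * frobNorm X := by
    have := frob_add_le (X' - X) X
    rw [sub_add_cancel] at this
    linarith
  have hY2 : frobNorm Y' ≤ 2 * frobNorm Y := by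
    have := frob_add_le (Y' - Y) Y
    rw [sub_add_cancel] at this
    linarith
  have hH : opN (G'⁻¹ - G⁻¹) ≤ M ^ 2 * e := by
    have h1 : G'⁻¹ - G⁻¹ = -(G'⁻¹ * (G' - G) * G⁻¹) := by
      rw [mul_sub, Matrix.nonsing_inv_mul _ hd', sub_mul, one_mul, mul_assoc,
        Matrix.mul_nonsing_inv _ hd, mul_one, neg_sub]
    rw [h1, opN_neg]
    calc _ ≤ opN (G'⁻¹ * (G' - G)) * opN G⁻¹ := opN_mul _ _
      _ ≤ (opN G'⁻¹ * opN (G' - G)) * opN G⁻¹ := by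
        gcongr
        · exact opN_nonneg _
        · exact opN_mul _ _
      _ ≤ (M * e) * M := by
        have := opN_nonneg (G' - G)
        have := opN_nonneg G⁻¹
        gcongr
      _ = M ^ 2 * e := by ring
  have hsplit : tQuad G' X' Y' - tQuad G X Y =
      ((G'⁻¹ - G⁻¹) * X' * G'⁻¹ * Y').trace + (G⁻¹ * X' * (G'⁻¹ - G⁻¹) * Y').trace
      + (G⁻¹ * (X' - X) * G⁻¹ * Y').trace + (G⁻¹ * X * G⁻¹ * (Y' - Y)).trace := by
    unfold tQuad
    simp only [mul_sub, sub_mul, Matrix.trace_sub]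
    ring
  have fX := frob_nonneg X
  have fY := frob_nonneg Y
  have fX' := frob_nonneg X'
  have fY' := frob_nonneg Y'
  have fd1 := frob_nonneg (X' - X)
  have fd2 := frob_nonneg (Y' - Y)
  have o1 := opN_nonneg G⁻¹
  have o2 := opN_nonneg G'⁻¹
  have o3 := opN_nonneg (G'⁻¹ - G⁻¹)
  have b1 : |((G'⁻¹ - G⁻¹) * X' * G'⁻¹ * Y').trace| ≤
      (M ^ 2 * e) * (2 * frobNorm X) * (M * (2 * frobNorm Y)) :=
    (trace4_le _ _ _ _).trans (by gcongr)
  have b2 : |(G⁻¹ * X' * (G'⁻¹ - G⁻¹) * Y').trace| ≤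
      M * (2 * frobNorm X) * ((M ^ 2 * e) * (2 * frobNorm Y)) :=
    (trace4_le _ _ _ _).trans (by gcongr)
  have b3 : |(G⁻¹ * (X' - X) * G⁻¹ * Y').trace| ≤ M * b * (M * (2 * frobNorm Y)) :=
    (trace4_le _ _ _ _).trans (by gcongr)
  have b4 : |(G⁻¹ * X * G⁻¹ * (Y' - Y)).trace| ≤ M * frobNorm X * (M * b) :=
    (trace4_le _ _ _ _).trans (by gcongr)
  rw [hsplit]
  refine (abs_add_le _ _).trans ?_
  refine (add_le_add_left (abs_add_le _ _) _).trans ?_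
  refine (add_le_add_left (add_le_add_left (abs_add_le _ _) _) _).trans ?_
  linarith

lemma geom_bound (c : ℝ) (hc : 0 < c) (γ0 : ℝ → ℝ) (h0 : ∀ u, 0 ≤ γ0 u)
    (hanti : AntitoneOn γ0 (Set.Ioi 0))
    (hint : IntegrableOn (fun u => u ^ 2 * γ0 u) (Set.Ioi 0)) :
    ∃ K : ℝ, 0 ≤ K ∧ ∀ (m : ℕ) (s : Fin m → EuclideanSpace ℝ (Fin 2)),
      (∀ i j, i ≠ j → c ≤ dist (s i) (s j)) → ∀ i,
        ∑ j ∈ Finset.univ.erase i, dist (s i) (s j) * γ0 (dist (s i) (s j)) ≤ K := by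
  set g : EuclideanSpace ℝ (Fin 2) → ℝ := fun y => ‖y‖ * γ0 ‖y‖ with hg
  have hgi : Integrable g := by
    have := (MeasureTheory.integrable_fun_norm_addHaar
      (volume : Measure (EuclideanSpace ℝ (Fin 2))) (f := fun u => u * γ0 u)).2 (by
        refine hint.congr_fun (fun u _ => ?_) measurableSet_Ioi
        simp only [finrank_euclideanSpace, Fintype.card_fin, smul_eq_mul]
        norm_num; ring)
    exact this
  have hg0 : ∀ y, 0 ≤ g y := fun y => mul_nonneg (norm_nonneg _) (h0 _)
  set v : ℝ := (volume : Measure (EuclideanSpace ℝ (Fin 2))).real (Metric.ball 0 (c / 4)) with hv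
  have hvpos : 0 < v := by
    rw [hv, measureReal_def]
    exact ENNReal.toReal_pos (Metric.measure_ball_pos volume _ (by positivity)).ne'
      measure_ball_lt_top.ne
  refine ⟨2 / v * ∫ y, g y, mul_nonneg (by positivity) (integral_nonneg hg0), ?_⟩
  intro m s hs i
  have hvb : ∀ p : EuclideanSpace ℝ (Fin 2), volume.real (Metric.ball p (c / 4)) = v := by
    intro p
    rw [hv, measureReal_def, measureReal_def, Measure.addHaar_ball_center]
  set gi : EuclideanSpace ℝ (Fin 2) → ℝ := fun y => g (y - s i) with hgidef
  have hgii : Integrable gi := hgi.comp_sub_right (s i)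
  set d : Fin m → ℝ := fun j => dist (s i) (s j) with hd
  set p : Fin m → EuclideanSpace ℝ (Fin 2) := fun j => s j + (c / 4 / d j) • (s i - s j) with hp
  have hdj : ∀ j ∈ Finset.univ.erase i, c ≤ d j := fun j hj =>
    hs i j (Finset.ne_of_mem_erase hj).symm
  have hps : ∀ j ∈ Finset.univ.erase i, dist (p j) (s j) = c / 4 := by
    intro j hj
    have := hdj j hj
    have hdp : 0 < d j := hc.trans_le this
    rw [hp, dist_eq_norm, add_sub_cancel_left, norm_smul, ← dist_eq_norm, Real.norm_eq_abs,
      abs_of_pos (by positivity)]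
    change c / 4 / d j * d j = c / 4
    field_simp
  have hpi : ∀ j ∈ Finset.univ.erase i, dist (p j) (s i) = d j - c / 4 := by
    intro j hj
    have := hdj j hj
    have hdp : 0 < d j := hc.trans_le this
    have h1 : p j - s i = -((1 - c / 4 / d j) • (s i - s j)) := by
      rw [hp]; module
    have h2 : c / 4 / d j ≤ 1 := by rw [div_le_one hdp]; linarith
    rw [dist_eq_norm, h1, norm_neg, norm_smul, ← dist_eq_norm (s i) (s j), Real.norm_eq_abs,
      abs_of_nonneg (by linarith)]
    change (1 - c / 4 / d j) * d j = d j - c / 4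
    field_simp
  have hpt : ∀ j ∈ Finset.univ.erase i, d j * γ0 (d j) ≤
      2 / v * ∫ y in Metric.ball (p j) (c / 4), gi y := by
    intro j hj
    have hcd := hdj j hj
    have hdp : 0 < d j := hc.trans_le hcd
    have h1 : ∫ y in Metric.ball (p j) (c / 4), (d j * γ0 (d j) / 2) ≤
        ∫ y in Metric.ball (p j) (c / 4), gi y := by
      apply setIntegral_mono_on
      · exact integrableOn_const measure_ball_lt_top.ne
      · exact hgii.integrableOn
      · exact measurableSet_ball
      intro y hy
      rw [Metric.mem_ball] at hy
      have hup : ‖y - s i‖ ≤ d j := by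
        rw [← dist_eq_norm]
        have := dist_triangle y (p j) (s i)
        rw [hpi j hj] at this
        linarith
      have hlo : d j / 2 ≤ ‖y - s i‖ := by
        rw [← dist_eq_norm]
        have := dist_triangle (p j) y (s i)
        rw [hpi j hj, dist_comm (p j) y] at this
        linarith
      have hpos : 0 < ‖y - s i‖ := by linarith
      have h3 : γ0 (d j) ≤ γ0 ‖y - s i‖ := hanti hpos hdp hup
      change d j * γ0 (d j) / 2 ≤ ‖y - s i‖ * γ0 ‖y - s i‖
      have := mul_le_mul hlo h3 (h0 _) hpos.le
      linarith
    rw [setIntegral_const, hvb, smul_eq_mul] at h1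
    rw [div_mul_eq_mul_div, le_div_iff₀ hvpos]
    linarith
  calc ∑ j ∈ Finset.univ.erase i, d j * γ0 (d j)
      ≤ ∑ j ∈ Finset.univ.erase i, 2 / v * ∫ y in Metric.ball (p j) (c / 4), gi y :=
        Finset.sum_le_sum hpt
    _ = 2 / v * ∫ y in ⋃ j ∈ Finset.univ.erase i, Metric.ball (p j) (c / 4), gi y := by
        rw [← Finset.mul_sum, integral_biUnion_finset]
        · exact fun _ _ => measurableSet_ball
        · intro j hj k hk hjk
          apply Metric.ball_disjoint_ball
          have h1 := hps j hj
          have h2 := hps k hk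
          have h3 := hs j k hjk
          have h4 := dist_triangle4 (s j) (p j) (p k) (s k)
          rw [dist_comm (s j) (p j)] at h4
          linarith
        · exact fun _ _ => hgii.integrableOn
    _ ≤ 2 / v * ∫ y, gi y := by
        exact mul_le_mul_of_nonneg_left
          (setIntegral_le_integral hgii (Eventually.of_forall fun y => hg0 _)) (by positivity)
    _ = 2 / v * ∫ y, g y := by
        rw [hgidef, integral_sub_right_eq_self g (s i)]

lemma taper_bound {m : ℕ} (s : Fin m → EuclideanSpace ℝ (Fin 2)) (γ0 φ : ℝ → ℝ)
    (F : Matrix (Fin m) (Fin m) ℝ) (hF : ∀ i j, F i j = φ (dist (s i) (s j)))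
    (hφ : ∀ u, 0 < u → |φ u| ≤ γ0 u) (w K : ℝ) (hw : 0 < w) (hK : 0 ≤ K)
    (hs : ∀ i j, i ≠ j → 0 < dist (s i) (s j))
    (hb : ∀ i, ∑ j ∈ Finset.univ.erase i, dist (s i) (s j) * γ0 (dist (s i) (s j)) ≤ K) :
    F.IsHermitian ∧ (Matrix.hadamard F (taperMat s w)).IsHermitian ∧
      opN (Matrix.hadamard F (taperMat s w) - F) ≤ K / w := by
  have h1 : F.IsHermitian := by
    ext i j
    simp [hF, dist_comm]
  have h2 : (Matrix.hadamard F (taperMat s w)).IsHermitian := by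
    ext i j
    simp [hF, taperMat, dist_comm]
  refine ⟨h1, h2, opN_le_rows (h2.sub h1) (fun i => by simp [taperMat]) (by positivity) ?_⟩
  intro i
  rw [le_div_iff₀ hw, Finset.sum_mul]
  refine le_trans (Finset.sum_le_sum fun j hj => ?_) (hb i)
  have hd := hs i j (Finset.ne_of_mem_erase hj).symm
  have h3 := hφ _ hd
  set d := dist (s i) (s j) with hdd
  have h4 : (Matrix.hadamard F (taperMat s w) - F) i j = φ d * (max (1 - d / w) 0 - 1) := by
    simp [hF, taperMat, ← hdd]; ring
  rw [h4, abs_mul]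
  have hdw : 0 < d / w := by positivity
  have h5 : |max (1 - d / w) 0 - 1| ≤ d / w := by
    rw [abs_le]
    constructor
    · have := le_max_left (1 - d / w) 0
      linarith
    · have : max (1 - d / w) 0 ≤ 1 := max_le (by linarith) zero_le_one
      linarith
  calc |φ d| * |max (1 - d / w) 0 - 1| * w ≤ γ0 d * (d / w) * w := by
        have := (abs_nonneg _).trans h3
        gcongr
    _ = d * γ0 d := by field_simp

lemma sup_tendsto {N : ℕ → ℕ} (hN0 : ∀ n, 0 < N n)
    {A B : ∀ n, Matrix (Fin (N n)) (Fin (N n)) ℝ} (hA : ∀ n, (A n).IsHermitian)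
    (hB : ∀ n, (B n).IsHermitian) {e : ℕ → ℝ} (he : Tendsto e atTop (𝓝 0))
    (hE : ∀ n, opN (B n - A n) ≤ e n) (f : ℝ → ℝ) (hf : ∀ x y, f x ≤ f y + |y - x|) {C : ℝ}
    (h : Tendsto (fun n => sSup (f '' spectrum ℝ (A n))) atTop (𝓝 C)) :
    Tendsto (fun n => sSup (f '' spectrum ℝ (B n))) atTop (𝓝 C) := by
  have h1 : Tendsto (fun n => sSup (f '' spectrum ℝ (B n)) - sSup (f '' spectrum ℝ (A n)))
      atTop (𝓝 0) := by
    apply squeeze_zero_norm (a := fun n => 2 * e n + 1 / ((n : ℝ) + 1))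
    · intro n
      rw [Real.norm_eq_abs]
      apply spec_sSup_perturb (hN0 n) (hA n) (hB n) _ f hf
      have := hE n
      have h0 : 0 ≤ e n := (opN_nonneg _).trans this
      have : 0 < 1 / ((n : ℝ) + 1) := by positivity
      linarith
    · have := (he.const_mul 2).add tendsto_one_div_add_atTop_nhds_zero_nat
      simpa using this
  simpa using h1.add h

lemma ratio_lim {a b x a' b' x' : ℕ → ℝ} {L : ℝ} (ha : ∀ᶠ n in atTop, 0 < a n)
    (hb : ∀ᶠ n in atTop, 0 < b n)
    (hx : Tendsto (fun n => x n / Real.sqrt (a n * b n)) atTop (𝓝 L))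
    (hx' : Tendsto (fun n => (x' n - x n) / Real.sqrt (a n * b n)) atTop (𝓝 0))
    (ha' : Tendsto (fun n => (a' n - a n) / Real.sqrt (a n * a n)) atTop (𝓝 0))
    (hb' : Tendsto (fun n => (b' n - b n) / Real.sqrt (b n * b n)) atTop (𝓝 0)) :
    Tendsto (fun n => x' n / Real.sqrt (a' n * b' n)) atTop (𝓝 L) := by
  have h1 : Tendsto (fun n => (x n / Real.sqrt (a n * b n) + (x' n - x n) / Real.sqrt (a n * b n))
      / Real.sqrt ((1 + (a' n - a n) / Real.sqrt (a n * a n)) *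
        (1 + (b' n - b n) / Real.sqrt (b n * b n)))) atTop
      (𝓝 ((L + 0) / Real.sqrt ((1 + 0) * (1 + 0)))) := by
    refine (hx.add hx').div ?_ (by simp)
    exact (((ha'.const_add 1).mul (hb'.const_add 1)).sqrt)
  have h2 : (L + 0) / Real.sqrt ((1 + 0) * (1 + 0)) = L := by simp
  rw [h2] at h1
  refine h1.congr' ?_
  filter_upwards [ha, hb] with n han hbn
  have e1 : 1 + (a' n - a n) / Real.sqrt (a n * a n) = a' n / a n := by
    rw [Real.sqrt_mul_self han.le]; field_simp; ring
  have e2 : 1 + (b' n - b n) / Real.sqrt (b n * b n) = b' n / b n := by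
    rw [Real.sqrt_mul_self hbn.le]; field_simp; ring
  have e3 : a' n / a n * (b' n / b n) = (a' n * b' n) / (a n * b n) := by field_simp
  have hs : 0 < Real.sqrt (a n * b n) := Real.sqrt_pos.2 (mul_pos han hbn)
  rw [e1, e2, e3, Real.sqrt_div' _ (mul_pos han hbn).le, ← add_div, add_sub_cancel,
    div_div_div_cancel_right₀ hs.ne']

lemma frob_tendsto {N : ℕ → ℕ} (hN : Tendsto N atTop atTop) (hN0 : ∀ n, 0 < N n)
    {f : ℕ → ℝ} (hf : ∀ n, 0 ≤ f n) {D δ : ℝ} (hD : 0 < D) (hδ : 0 < δ)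
    (h : ∀ n, (f n)⁻¹ ^ 2 = D * (N n : ℝ) ^ (-(1 / 2) - δ : ℝ)) :
    (∀ n, 0 < f n) ∧ Tendsto f atTop atTop := by
  have hpos : ∀ n, 0 < f n := by
    intro n
    refine lt_of_le_of_ne (hf n) fun h0 => ?_
    have h1 := h n
    rw [← h0] at h1
    have : 0 < D * (N n : ℝ) ^ (-(1 / 2) - δ : ℝ) := by
      have : 0 < (N n : ℝ) := by exact_mod_cast hN0 n
      positivity
    rw [← h1] at this
    simp at this
  refine ⟨hpos, ?_⟩
  have h1 : Tendsto (fun n => (f n)⁻¹ ^ 2) atTop (𝓝 0) := by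
    simp_rw [h]
    have h2 : Tendsto (fun y : ℝ => y ^ (-(1 / 2 + δ))) atTop (𝓝 0) :=
      tendsto_rpow_neg_atTop (by positivity)
    have h3 := (h2.comp (tendsto_natCast_atTop_atTop.comp hN)).const_mul D
    rw [mul_zero] at h3
    refine h3.congr fun n => ?_
    simp only [Function.comp]
    ring_nf
  have h2 : Tendsto (fun n => (f n)⁻¹) atTop (𝓝 0) := by
    have := h1.sqrt
    simp only [Real.sqrt_zero] at this
    refine this.congr fun n => ?_
    exact Real.sqrt_sq (inv_nonneg.2 (hf n))
  have h3 : Tendsto (fun n => (f n)⁻¹) atTop (𝓝[>] 0) :=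
    tendsto_nhdsWithin_iff.2 ⟨h2, Eventually.of_forall fun n => inv_pos.2 (hpos n)⟩
  have := h3.inv_tendsto_nhdsGT_zero
  refine this.congr fun n => ?_
  simp

lemma tq_tendsto {N : ℕ → ℕ} {G G' X X' Y Y' : ∀ n, Matrix (Fin (N n)) (Fin (N n)) ℝ}
    {M b Λ : ℝ} {e : ℕ → ℝ} (he : Tendsto e atTop (𝓝 0)) (hΛ : 0 < Λ)
    (hGp : ∀ n, (G n).PosDef) (hXh : ∀ n, (X n).IsHermitian) (hYh : ∀ n, (Y n).IsHermitian)
    (hG' : ∀ᶠ n in atTop, IsUnit (G' n))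
    (hM : ∀ᶠ n in atTop, opN (G n)⁻¹ ≤ M) (hM' : ∀ᶠ n in atTop, opN (G' n)⁻¹ ≤ M)
    (hGΛ : ∀ᶠ n in atTop, opN (G n) ≤ Λ)
    (hE : ∀ n, opN (G' n - G n) ≤ e n) (hX : ∀ n, frobNorm (X' n - X n) ≤ b)
    (hY : ∀ n, frobNorm (Y' n - Y n) ≤ b)
    (hfX : Tendsto (fun n => frobNorm (X n)) atTop atTop)
    (hfY : Tendsto (fun n => frobNorm (Y n)) atTop atTop) :
    Tendsto (fun n => (tQuad (G' n) (X' n) (Y' n) - tQuad (G n) (X n) (Y n)) /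
      Real.sqrt (tQuad (G n) (X n) (X n) * tQuad (G n) (Y n) (Y n))) atTop (𝓝 0) := by
  apply squeeze_zero_norm' (a := fun n => Λ ^ 2 * (8 * M ^ 3 * e n +
    2 * M ^ 2 * b * (frobNorm (X n))⁻¹ + M ^ 2 * b * (frobNorm (Y n))⁻¹))
  · filter_upwards [hG', hM, hM', hGΛ, hfX.eventually_ge_atTop b, hfY.eventually_ge_atTop b,
      hfX.eventually_gt_atTop 0, hfY.eventually_gt_atTop 0] with n h1 h2 h3 h4 h5 h6 h7 h8
    have hd := tQuad_diff (hGp n).isUnit h1 h2 h3 (hE n) (hX n) (hY n) h5 h6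
    have low : ∀ {Z : Matrix (Fin (N n)) (Fin (N n)) ℝ}, Z.IsHermitian → 0 < frobNorm Z →
        frobNorm Z ^ 2 ≤ Λ ^ 2 * tQuad (G n) Z Z ∧ 0 < tQuad (G n) Z Z := by
      intro Z hZ hpos
      have l1 := tQuad_lower (hGp n) hZ
      have l2 : 0 < opN (G n) ^ 2 * tQuad (G n) Z Z := lt_of_lt_of_le (by positivity) l1
      have l3 : 0 < tQuad (G n) Z Z := pos_of_mul_pos_right l2 (sq_nonneg _)
      refine ⟨l1.trans ?_, l3⟩
      have := opN_nonneg (G n)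
      gcongr
    obtain ⟨lX, pX⟩ := low (hXh n) h7
    obtain ⟨lY, pY⟩ := low (hYh n) h8
    set a := frobNorm (X n)
    set c := frobNorm (Y n)
    set tX := tQuad (G n) (X n) (X n)
    set tY := tQuad (G n) (Y n) (Y n)
    have hs : 0 < Real.sqrt (tX * tY) := Real.sqrt_pos.2 (mul_pos pX pY)
    have hac : a * c ≤ Λ ^ 2 * Real.sqrt (tX * tY) := by
      refine le_of_abs_le (abs_le_of_sq_le_sq ?_ (by positivity))
      rw [mul_pow, mul_pow, Real.sq_sqrt (mul_pos pX pY).le]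
      calc a ^ 2 * c ^ 2 ≤ (Λ ^ 2 * tX) * (Λ ^ 2 * tY) := by gcongr
        _ = _ := by ring
    rw [Real.norm_eq_abs, abs_div, abs_of_pos hs, div_le_iff₀ hs]
    have hM0 : 0 ≤ M := (opN_nonneg _).trans h2
    have he0 : 0 ≤ e n := (opN_nonneg _).trans (hE n)
    have hb0 : 0 ≤ b := (frob_nonneg _).trans (hX n)
    calc _ ≤ _ := hd
      _ = (8 * M ^ 3 * e n + 2 * M ^ 2 * b * a⁻¹ + M ^ 2 * b * c⁻¹) * (a * c) := by
        field_simp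
      _ ≤ (8 * M ^ 3 * e n + 2 * M ^ 2 * b * a⁻¹ + M ^ 2 * b * c⁻¹) *
          (Λ ^ 2 * Real.sqrt (tX * tY)) := by gcongr
      _ = _ := by ring
  · have h1 := he.const_mul (8 * M ^ 3)
    have h2 := hfX.inv_tendsto_atTop.const_mul (2 * M ^ 2 * b)
    have h3 := hfY.inv_tendsto_atTop.const_mul (M ^ 2 * b)
    have := ((h1.add h2).add h3).const_mul (Λ ^ 2)
    simpa using this

lemma tq_pos {m : ℕ} {G X : Matrix (Fin m) (Fin m) ℝ} (hG : G.PosDef)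
    (hX : X.IsHermitian) (h : 0 < frobNorm X) : 0 < tQuad G X X :=
  pos_of_mul_pos_right (lt_of_lt_of_le (by positivity) (tQuad_lower hG hX)) (sq_nonneg _)

/-- **Lemma 3 (the tapered covariance matrices inherit (A.2), (A.3)(i), (A.4)(i), (A.6)).**
Under (A.1)–(A.4), (A.6) and (A.12)–(A.13): (C.1) the extreme (absolute) eigenvalues of
`Γ_T`, `Γ_{k,T}`, `Γ_{kk',T}` converge to the same constants as the untapered versions;
(C.2) `‖Γ_{k,T}‖_F^{−2} = O(N_n^{−1/2−δ})`; (C.3) the spectral norm of `Γ_T⁻¹` is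
uniformly bounded; (C.4) `a_{kk',T} = lim t_{kk',T}(t_{kk,T}t_{k'k',T})^{−1/2}` exists and
equals `a_{kk'}`, so `A_T = A` is nonsingular. -/
theorem tapered_matrices_inherit_conditions
    (q : ℕ) (N : ℕ → ℕ) (hN : Tendsto N atTop atTop)
    (sites : ∀ n, Fin (N n) → EuclideanSpace ℝ (Fin 2))
    (hsep : ∃ c : ℝ, 0 < c ∧ ∀ n, ∀ i j : Fin (N n), i ≠ j →
      c ≤ dist (sites n i) (sites n j))
    (γr : ℝ → (Fin q → ℝ) → ℝ)
    (Θ : Set (Fin q → ℝ)) (hΘ : IsOpen Θ) (θ0 : Fin q → ℝ) (hθ0 : θ0 ∈ Θ)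
    (ω : ℕ → ℝ)
    -- (A.1)
    (hA1 : (∀ n (i j : Fin (N n)),
        ContDiffOn ℝ 2 (fun θ => γr (dist (sites n i) (sites n j)) θ) Θ) ∧
      ∀ n, ∀ θ ∈ Θ, (covMat (sites n) γr θ).PosDef)
    -- (A.2), with limiting constants C, Ck, Ckk
    (C : ℝ) (Ck : Fin q → ℝ) (Ckk : Fin q → Fin q → ℝ)
    (hA2 : Tendsto (fun n => sSup (spectrum ℝ (covMat (sites n) γr θ0))) atTop (𝓝 C) ∧
      (∀ k, Tendsto (fun n => sSup ((fun x => |x|) ''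
        spectrum ℝ (covMatD (sites n) γr k θ0))) atTop (𝓝 (Ck k))) ∧
      ∀ k k', Tendsto (fun n => sSup ((fun x => |x|) ''
        spectrum ℝ (covMatDD (sites n) γr k k' θ0))) atTop (𝓝 (Ckk k k')))
    -- (A.3), with exponent δ
    (δ : ℝ) (hδ : 0 < δ)
    (hA3 : (∀ k, ∃ D : ℝ, 0 < D ∧ ∀ n,
        (frobNorm (covMatD (sites n) γr k θ0))⁻¹ ^ 2 =
          D * (N n : ℝ) ^ (-(1 / 2) - δ : ℝ)) ∧
      ∀ k k', k ≠ k' →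
        (∃ D : ℝ, 0 < D ∧ ∀ n,
          (frobNorm (covMatD (sites n) γr k θ0 + covMatD (sites n) γr k' θ0))⁻¹ ^ 2 =
            D * (N n : ℝ) ^ (-(1 / 2) - δ : ℝ)) ∨
        (∃ D : ℝ, 0 < D ∧ ∀ n,
          (frobNorm (covMatD (sites n) γr k θ0 - covMatD (sites n) γr k' θ0))⁻¹ ^ 2 =
            D * (N n : ℝ) ^ (-(1 / 2) - δ : ℝ)))
    -- (A.4), with limiting matrix A
    (Amat : Matrix (Fin q) (Fin q) ℝ)
    (hA4 : Amat.det ≠ 0 ∧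
      (∀ k k', Tendsto (fun n =>
          tQuad (covMat (sites n) γr θ0) (covMatD (sites n) γr k θ0)
              (covMatD (sites n) γr k' θ0) /
            Real.sqrt
              (tQuad (covMat (sites n) γr θ0) (covMatD (sites n) γr k θ0)
                  (covMatD (sites n) γr k θ0) *
                tQuad (covMat (sites n) γr θ0) (covMatD (sites n) γr k' θ0)
                  (covMatD (sites n) γr k' θ0))) atTop (𝓝 (Amat k k'))) ∧
      ∀ k k', ∃ B : ℝ, ∀ n,
        |tQuad (covMat (sites n) γr θ0) (covMatD (sites n) γr k θ0)
            (covMatD (sites n) γr k θ0) /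
          tQuad (covMat (sites n) γr θ0) (covMatD (sites n) γr k' θ0)
            (covMatD (sites n) γr k' θ0)| ≤ B)
    -- (A.6)
    (hA6 : ∃ C0 : ℝ, ∀ n, ∀ x ∈ spectrum ℝ ((covMat (sites n) γr θ0)⁻¹), |x| < C0)
    -- (A.12)
    (hA12 : ∃ c1 c2 : ℝ, 0 < c1 ∧ ∀ n,
      c1 ≤ ω n * (Real.sqrt (N n))⁻¹ ∧ ω n * (Real.sqrt (N n))⁻¹ ≤ c2)
    -- (A.13)
    (hA13 : ∃ γ0 : ℝ → ℝ,
      (∀ u, 0 ≤ γ0 u) ∧ AntitoneOn γ0 (Set.Ioi 0) ∧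
      IntegrableOn (fun u => u ^ 2 * γ0 u) (Set.Ioi 0) ∧
      ∀ u : ℝ, 0 < u →
        |γr u θ0| ≤ γ0 u ∧
        ∀ k k' : Fin q,
          |fderiv ℝ (fun t => γr u t) θ0 (Pi.single k 1)| ≤ γ0 u ∧
          |fderiv ℝ (fun t =>
              fderiv ℝ (fun t' => γr u t') t (Pi.single k' 1)) θ0 (Pi.single k 1)| ≤ γ0 u) :
    -- (C.1)
    (Tendsto (fun n => sSup (spectrum ℝ
        (Matrix.hadamard (covMat (sites n) γr θ0) (taperMat (sites n) (ω n))))) atTop (𝓝 C) ∧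
      (∀ k, Tendsto (fun n => sSup ((fun x => |x|) '' spectrum ℝ
        (Matrix.hadamard (covMatD (sites n) γr k θ0) (taperMat (sites n) (ω n))))) atTop (𝓝 (Ck k))) ∧
      ∀ k k', Tendsto (fun n => sSup ((fun x => |x|) '' spectrum ℝ
        (Matrix.hadamard (covMatDD (sites n) γr k k' θ0) (taperMat (sites n) (ω n))))) atTop
        (𝓝 (Ckk k k'))) ∧
    -- (C.2)
    (∀ k, (fun n =>
        (frobNorm (Matrix.hadamard (covMatD (sites n) γr k θ0) (taperMat (sites n) (ω n))))⁻¹ ^ 2)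
      =O[atTop] fun n => (N n : ℝ) ^ (-(1 / 2) - δ : ℝ)) ∧
    -- (C.3)
    (∃ C0 : ℝ, ∀ n, ∀ x ∈
      spectrum ℝ ((Matrix.hadamard (covMat (sites n) γr θ0) (taperMat (sites n) (ω n)))⁻¹), |x| ≤ C0) ∧
    -- (C.4): the tapered ratios converge to the same nonsingular matrix A
    (∀ k k', Tendsto (fun n =>
        tQuad (Matrix.hadamard (covMat (sites n) γr θ0) (taperMat (sites n) (ω n)))
            (Matrix.hadamard (covMatD (sites n) γr k θ0) (taperMat (sites n) (ω n)))
            (Matrix.hadamard (covMatD (sites n) γr k' θ0) (taperMat (sites n) (ω n))) /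
          Real.sqrt
            (tQuad (Matrix.hadamard (covMat (sites n) γr θ0) (taperMat (sites n) (ω n)))
                (Matrix.hadamard (covMatD (sites n) γr k θ0) (taperMat (sites n) (ω n)))
                (Matrix.hadamard (covMatD (sites n) γr k θ0) (taperMat (sites n) (ω n))) *
              tQuad (Matrix.hadamard (covMat (sites n) γr θ0) (taperMat (sites n) (ω n)))
                (Matrix.hadamard (covMatD (sites n) γr k' θ0) (taperMat (sites n) (ω n)))
                (Matrix.hadamard (covMatD (sites n) γr k' θ0) (taperMat (sites n) (ω n)))))
        atTop (𝓝 (Amat k k'))) := by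
  obtain ⟨c, hc, hsep⟩ := hsep
  obtain ⟨c1, c2, hc1, hω⟩ := hA12
  obtain ⟨γ0, hγ0, hanti, hint, hbd⟩ := hA13
  obtain ⟨K, hK0, hK⟩ := geom_bound c hc γ0 hγ0 hanti hint
  obtain ⟨-, hPD⟩ := hA1
  obtain ⟨hA2a, hA2b, hA2c⟩ := hA2
  obtain ⟨hA3, -⟩ := hA3
  obtain ⟨-, hA4, -⟩ := hA4
  obtain ⟨C0, hC0⟩ := hA6
  have hN0 : ∀ n, 0 < N n := by
    intro n
    rcases Nat.eq_zero_or_pos (N n) with h | h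
    · have := (hω n).1
      simp [h] at this
      linarith
    · exact h
  have hsN : ∀ n, 0 < Real.sqrt (N n) := fun n =>
    Real.sqrt_pos.2 (by exact_mod_cast hN0 n)
  have hωl : ∀ n, c1 * Real.sqrt (N n) ≤ ω n := by
    intro n
    have := (hω n).1
    rwa [← div_eq_mul_inv, le_div_iff₀ (hsN n)] at this
  have hω0 : ∀ n, 0 < ω n := fun n => (mul_pos hc1 (hsN n)).trans_le (hωl n)
  set e : ℕ → ℝ := fun n => K / ω n with he_def
  have hsNt : Tendsto (fun n => Real.sqrt (N n)) atTop atTop :=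
    Real.tendsto_sqrt_atTop.comp (tendsto_natCast_atTop_atTop.comp hN)
  have hωt : Tendsto ω atTop atTop := tendsto_atTop_mono hωl (hsNt.const_mul_atTop hc1)
  have he : Tendsto e atTop (𝓝 0) := hωt.const_div_atTop K
  have hdp : ∀ n, ∀ i j : Fin (N n), i ≠ j → 0 < dist (sites n i) (sites n j) :=
    fun n i j hij => hc.trans_le (hsep n i j hij)
  have tb : ∀ (φ : ℝ → ℝ) (F : ∀ n, Matrix (Fin (N n)) (Fin (N n)) ℝ),
      (∀ n i j, F n i j = φ (dist (sites n i) (sites n j))) → (∀ u, 0 < u → |φ u| ≤ γ0 u) →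
      ∀ n, (F n).IsHermitian ∧ (Matrix.hadamard (F n) (taperMat (sites n) (ω n))).IsHermitian ∧
      opN (Matrix.hadamard (F n) (taperMat (sites n) (ω n)) - F n) ≤ e n :=
    fun φ F h1 h2 n => taper_bound (sites n) γ0 φ (F n) (h1 n) h2 (ω n) K (hω0 n) hK0 (hdp n)
      (hK _ (sites n) (hsep n))
  have tG := tb (fun u => γr u θ0) (fun n => covMat (sites n) γr θ0) (fun n i j => rfl)
    (fun u hu => (hbd u hu).1)
  have tD := fun k => tb (fun u => fderiv ℝ (fun t => γr u t) θ0 (Pi.single k 1))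
    (fun n => covMatD (sites n) γr k θ0) (fun n i j => rfl)
    (fun u hu => ((hbd u hu).2 k k).1)
  have tDD := fun k k' => tb (fun u => fderiv ℝ (fun t =>
      fderiv ℝ (fun t' => γr u t') t (Pi.single k' 1)) θ0 (Pi.single k 1))
    (fun n => covMatDD (sites n) γr k k' θ0) (fun n i j => rfl)
    (fun u hu => ((hbd u hu).2 k k').2)
  clear tb
  have hGp : ∀ n, (covMat (sites n) γr θ0).PosDef := fun n => hPD n θ0 hθ0
  have habs : ∀ x y : ℝ, |x| ≤ |y| + |y - x| := by
    intro x y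
    have := abs_sub_abs_le_abs_sub x y
    rw [abs_sub_comm] at this
    linarith
  -- inverse bounds
  set M0 : ℝ := max C0 1 with hM0
  have hM0p : 0 < M0 := lt_of_lt_of_le one_pos (le_max_right _ _)
  have hspecG : ∀ n, ∀ y ∈ spectrum ℝ (covMat (sites n) γr θ0), M0⁻¹ ≤ |y| := by
    intro n y hy
    have hy0 : y ≠ 0 := by
      rintro rfl
      exact (spectrum.zero_notMem_iff ℝ).2 (hGp n).isUnit hy
    have h1 : y⁻¹ ∈ spectrum ℝ (covMat (sites n) γr θ0)⁻¹ := by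
      obtain ⟨u, hu⟩ := (hGp n).isUnit
      rw [← hu] at hy ⊢
      rw [← Matrix.coe_units_inv, ← spectrum.map_inv, Set.mem_inv, inv_inv]
      exact hy
    have h2 := (hC0 n _ h1).le.trans (le_max_left C0 1)
    rw [abs_inv] at h2
    exact inv_le_of_inv_le₀ (abs_pos.2 hy0) h2
  have hMG : ∀ n, opN (covMat (sites n) γr θ0)⁻¹ ≤ 2 * M0 := by
    intro n
    have := (inv_bound (tG n).1 (inv_pos.2 hM0p) (hspecG n)).2.2
    rw [inv_inv] at this
    linarith
  have hGT : ∀ᶠ n in atTop,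
      IsUnit (Matrix.hadamard (covMat (sites n) γr θ0) (taperMat (sites n) (ω n))) ∧
      (∀ x ∈ spectrum ℝ (Matrix.hadamard (covMat (sites n) γr θ0) (taperMat (sites n) (ω n)))⁻¹,
        |x| ≤ 2 * M0) ∧
      opN (Matrix.hadamard (covMat (sites n) γr θ0) (taperMat (sites n) (ω n)))⁻¹ ≤ 2 * M0 := by
    filter_upwards [he.eventually_lt_const (show 0 < (2 * M0)⁻¹ by positivity)] with n hn
    have := inv_bound (tG n).2.1 (show 0 < (2 * M0)⁻¹ by positivity) (by
      intro x hx
      obtain ⟨y, hy, hyx⟩ := spec_perturb (tG n).1 ((tG n).2.2.trans_lt hn)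
        (x := x) (by simpa using hx)
      have h1 := hspecG n y hy
      have h2 := habs y x
      rw [abs_sub_comm] at h2
      rw [mul_inv] at hyx ⊢
      linarith)
    rwa [inv_inv] at this
  -- frobenius
  have hfr : ∀ k, (∀ n, 0 < frobNorm (covMatD (sites n) γr k θ0)) ∧
      Tendsto (fun n => frobNorm (covMatD (sites n) γr k θ0)) atTop atTop := by
    intro k
    obtain ⟨D, hD, h⟩ := hA3 k
    exact frob_tendsto hN hN0 (fun n => frob_nonneg _) hD hδ h
  have hfd : ∀ k n, frobNorm (Matrix.hadamard (covMatD (sites n) γr k θ0)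
      (taperMat (sites n) (ω n)) - covMatD (sites n) γr k θ0) ≤ K / c1 := by
    intro k n
    refine (frob_le_opN _).trans ?_
    calc _ ≤ e n * Real.sqrt (N n) := by gcongr; exact (tD k n).2.2
      _ ≤ K / (c1 * Real.sqrt (N n)) * Real.sqrt (N n) := by
        have := hsN n
        have := hωl n
        change K / ω n * Real.sqrt (N n) ≤ _
        gcongr
      _ = K / c1 := by have := (hsN n).ne'; field_simp
  refine ⟨⟨?_, ?_, ?_⟩, ?_, ?_, ?_⟩
  · have := sup_tendsto hN0 (fun n => (tG n).1) (fun n => (tG n).2.1) he (fun n => (tG n).2.2)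
      (fun x => x) (fun x y => by have := neg_abs_le (y - x); linarith) (C := C)
      (by simpa using hA2a)
    simpa using this
  · intro k
    exact sup_tendsto hN0 (fun n => (tD k n).1) (fun n => (tD k n).2.1) he
      (fun n => (tD k n).2.2) (fun x => |x|) habs (hA2b k)
  · intro k k'
    exact sup_tendsto hN0 (fun n => (tDD k k' n).1) (fun n => (tDD k k' n).2.1) he
      (fun n => (tDD k k' n).2.2) (fun x => |x|) habs (hA2c k k')
  · intro k
    obtain ⟨D, hD, h⟩ := hA3 k
    refine IsBigO.of_bound (4 * D) ?_
    filter_upwards [(hfr k).2.eventually_ge_atTop (2 * (K / c1))] with n hn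
    have hp := (hfr k).1 n
    have hN1 : 0 ≤ (N n : ℝ) ^ (-(1 / 2) - δ : ℝ) := by positivity
    rw [Real.norm_of_nonneg (sq_nonneg _), Real.norm_of_nonneg hN1, mul_assoc, ← h n]
    have h1 : frobNorm (covMatD (sites n) γr k θ0) / 2 ≤
        frobNorm (Matrix.hadamard (covMatD (sites n) γr k θ0) (taperMat (sites n) (ω n))) := by
      have h2 := frob_add_le (covMatD (sites n) γr k θ0 -
        Matrix.hadamard (covMatD (sites n) γr k θ0) (taperMat (sites n) (ω n)))
        (Matrix.hadamard (covMatD (sites n) γr k θ0) (taperMat (sites n) (ω n)))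
      rw [sub_add_cancel] at h2
      have h3 : frobNorm (covMatD (sites n) γr k θ0 -
        Matrix.hadamard (covMatD (sites n) γr k θ0) (taperMat (sites n) (ω n))) =
        frobNorm (Matrix.hadamard (covMatD (sites n) γr k θ0) (taperMat (sites n) (ω n)) -
          covMatD (sites n) γr k θ0) := by
        unfold frobNorm
        congr 1
        refine Finset.sum_congr rfl fun i _ => Finset.sum_congr rfl fun j _ => ?_
        simp only [Matrix.sub_apply]
        ring
      rw [h3] at h2
      have := hfd k n
      linarith
    calc _ ≤ (frobNorm (covMatD (sites n) γr k θ0) / 2)⁻¹ ^ 2 := by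
          have h0 := inv_nonneg.2 (frob_nonneg (Matrix.hadamard (covMatD (sites n) γr k θ0)
            (taperMat (sites n) (ω n))))
          gcongr
      _ = 4 * (frobNorm (covMatD (sites n) γr k θ0))⁻¹ ^ 2 := by
        rw [inv_div]; field_simp; norm_num
  · have hfin : ∀ n, ∃ B : ℝ, ∀ x ∈ spectrum ℝ ((Matrix.hadamard (covMat (sites n) γr θ0)
        (taperMat (sites n) (ω n)))⁻¹), |x| ≤ B := by
      intro n
      obtain ⟨B, hB⟩ := ((Matrix.finite_real_spectrum (A := (Matrix.hadamard
        (covMat (sites n) γr θ0) (taperMat (sites n) (ω n)))⁻¹)).image (fun x => |x|)).bddAbove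
      exact ⟨B, fun x hx => hB ⟨x, hx, rfl⟩⟩
    choose B hB using hfin
    obtain ⟨n0, hn0⟩ := eventually_atTop.1 hGT
    refine ⟨2 * M0 + ∑ n ∈ Finset.range n0, |B n|, fun n x hx => ?_⟩
    rcases le_or_gt n0 n with h | h
    · have h1 := (hn0 n h).2.1 x hx
      have h2 : 0 ≤ ∑ n ∈ Finset.range n0, |B n| := Finset.sum_nonneg fun _ _ => abs_nonneg _
      linarith
    · have h1 := hB n x hx
      have h2 := Finset.single_le_sum (f := fun n => |B n|) (fun _ _ => abs_nonneg _)
        (Finset.mem_range.2 h)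
      have h3 := le_abs_self (B n)
      linarith
  · intro k k'
    have hΛ : 0 < |C| + 1 := by positivity
    have hGΛ : ∀ᶠ n in atTop, opN (covMat (sites n) γr θ0) ≤ |C| + 1 := by
      filter_upwards [hA2a.eventually_lt_const (show C < |C| + 1 by
        have := le_abs_self C; linarith)] with n hn
      refine opN_le_of_spec (tG n).1 hΛ.le fun x hx => ?_
      have h1 := le_csSup Matrix.finite_real_spectrum.bddAbove hx
      have h2 : 0 < x := by
        have hx' := hx
        rw [(tG n).1.spectrum_real_eq_range_eigenvalues] at hx'
        obtain ⟨i, rfl⟩ := hx'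
        exact (hGp n).eigenvalues_pos i
      rw [abs_of_pos h2]
      linarith
    have tq := fun k k' => tq_tendsto (M := 2 * M0) he hΛ hGp (fun n => (tD k n).1)
      (fun n => (tD k' n).1) (hGT.mono fun n h => h.1) (Eventually.of_forall hMG)
      (hGT.mono fun n h => h.2.2) hGΛ (fun n => (tG n).2.2) (hfd k) (hfd k') (hfr k).2 (hfr k').2
    exact ratio_lim
      (Eventually.of_forall fun n => tq_pos (hGp n) (tD k n).1 ((hfr k).1 n))
      (Eventually.of_forall fun n => tq_pos (hGp n) (tD k' n).1 ((hfr k').1 n))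
      (hA4 k k') (tq k k') (tq k k) (tq k' k')
end
end

section
/- Let c > 0 and let γ₀ : (0,∞) → [0,∞) be nonincreasing with ∫₀^∞ u²γ₀(u)du < ∞. Then there exists a constant C, depending only on c and γ₀ (not on N or the configuration of points), such that for any finite set of points s_1,…,s_N ∈ ℝ² with ‖s_i − s_j‖ ≥ c for all i ≠ j: (i) max_i ∑_{j ≠ i} ‖s_i − s_j‖ γ₀(‖s_i − s_j‖) ≤ C; and consequently (ii) for every ω > 0, max_i ∑_{j ≠ i} γ₀(‖s_i − s_j‖)·(1 − (1 − ‖s_i − s_j‖/ω)_+) ≤ C/ω, where (x)_+ = max{x, 0}. -/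
open MeasureTheory Filter
open scoped Topology BigOperators

noncomputable section

/-- **Row-sum bound for tapering under minimum separation.**
Let `c > 0` and let `γ₀ : (0,∞) → [0,∞)` be nonincreasing with `∫₀^∞ u²γ₀(u)du < ∞`.
Then there is a constant `C`, depending only on `c` and `γ₀`, such that for any finite
configuration of points in `ℝ²` with pairwise distances at least `c`:
(i) `max_i ∑_{j≠i} ‖s_i−s_j‖ γ₀(‖s_i−s_j‖) ≤ C`, and consequently
(ii) for every `ω > 0`,
`max_i ∑_{j≠i} γ₀(‖s_i−s_j‖)(1 − (1 − ‖s_i−s_j‖/ω)₊) ≤ C/ω`. -/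
theorem rowsum_taper_bound
    (c : ℝ) (hc : 0 < c) (γ0 : ℝ → ℝ)
    (hmono : AntitoneOn γ0 (Set.Ioi 0))
    (hnonneg : ∀ u : ℝ, 0 < u → 0 ≤ γ0 u)
    (hint : IntegrableOn (fun u => u ^ 2 * γ0 u) (Set.Ioi 0)) :
    ∃ C : ℝ, ∀ (N : ℕ) (sites : Fin N → EuclideanSpace ℝ (Fin 2)),
      (∀ i j : Fin N, i ≠ j → c ≤ dist (sites i) (sites j)) →
      (∀ i : Fin N,
        ∑ j ∈ Finset.univ.erase i,
          dist (sites i) (sites j) * γ0 (dist (sites i) (sites j)) ≤ C) ∧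
      ∀ ω : ℝ, 0 < ω → ∀ i : Fin N,
        ∑ j ∈ Finset.univ.erase i,
          γ0 (dist (sites i) (sites j)) *
            (1 - max (1 - dist (sites i) (sites j) / ω) 0) ≤ C / ω := by
  have hF : Integrable (fun y : EuclideanSpace ℝ (Fin 2) => 2 * ‖y‖ * γ0 (‖y‖ / 2)) := by
    have h := (integrable_fun_norm_addHaar (volume : Measure (EuclideanSpace ℝ (Fin 2)))
      (f := fun r : ℝ => 2 * r * γ0 (r / 2))).2
    apply h
    have h2 := (integrableOn_Ioi_comp_mul_left_iff (fun u => u ^ 2 * γ0 u) 0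
      (a := (1 / 2 : ℝ)) (by norm_num)).2 (by simpa using hint)
    have h3 := h2.const_mul 8
    refine (integrableOn_congr_fun ?_ measurableSet_Ioi).1 h3
    intro r _
    have : r / 2 = 1 / 2 * r := by ring
    simp [this]
    ring
  have hF0 : ∀ y : EuclideanSpace ℝ (Fin 2), 0 ≤ 2 * ‖y‖ * γ0 (‖y‖ / 2) := by
    intro y
    rcases (norm_nonneg y).eq_or_lt with h | h
    · simp [← h]
    · have := hnonneg (‖y‖ / 2) (by positivity)
      positivity
  set V : ℝ := volume.real (Metric.ball (0 : EuclideanSpace ℝ (Fin 2)) (c / 2)) with hV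
  have hVpos : 0 < V := by
    apply ENNReal.toReal_pos
    · exact (Metric.measure_ball_pos _ _ (by positivity)).ne'
    · exact measure_ball_lt_top.ne
  have hVx : ∀ x : EuclideanSpace ℝ (Fin 2), volume.real (Metric.ball x (c / 2)) = V := by
    intro x
    rw [hV, measureReal_def, measureReal_def, Measure.addHaar_ball_center]
  refine ⟨(∫ y : EuclideanSpace ℝ (Fin 2), 2 * ‖y‖ * γ0 (‖y‖ / 2)) / V, ?_⟩
  intro N sites hsep
  have key : ∀ i : Fin N,
        ∑ j ∈ Finset.univ.erase i,
          dist (sites i) (sites j) * γ0 (dist (sites i) (sites j)) ≤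
        (∫ y : EuclideanSpace ℝ (Fin 2), 2 * ‖y‖ * γ0 (‖y‖ / 2)) / V := by
    intro i
    rw [le_div_iff₀ hVpos, Finset.sum_mul]
    have hdisj : Set.Pairwise (↑(Finset.univ.erase i) : Set (Fin N))
        (Function.onFun Disjoint fun j => Metric.ball (sites j - sites i) (c / 2)) := by
      intro j _ k _ hjk
      apply Metric.ball_disjoint_ball
      rw [dist_sub_right]
      linarith [hsep j k hjk]
    calc _ ≤ ∑ j ∈ Finset.univ.erase i, ∫ y in Metric.ball (sites j - sites i) (c / 2),
              2 * ‖y‖ * γ0 (‖y‖ / 2) := by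
          apply Finset.sum_le_sum
          intro j hj
          have hd := hsep i j (Finset.ne_of_mem_erase hj).symm
          have hn : ‖sites j - sites i‖ = dist (sites i) (sites j) := by
            rw [dist_comm, dist_eq_norm]
          set d := dist (sites i) (sites j) with hdd
          have e : d * γ0 d * V = ∫ y in Metric.ball (sites j - sites i) (c / 2), d * γ0 d := by
            rw [setIntegral_const, hVx, smul_eq_mul, mul_comm]
          rw [e]
          apply setIntegral_mono_on _ hF.integrableOn measurableSet_ball
          · intro y hy
            rw [Metric.mem_ball, dist_eq_norm] at hy
            have h1 := abs_norm_sub_norm_le y (sites j - sites i)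
            rw [hn] at h1
            have h2 := abs_le.1 (h1.trans hy.le)
            have h3 : γ0 d ≤ γ0 (‖y‖ / 2) :=
              hmono (Set.mem_Ioi.2 (by linarith)) (Set.mem_Ioi.2 (by linarith)) (by linarith)
            have h4 := hnonneg d (by linarith)
            exact mul_le_mul (by linarith) h3 h4 (by positivity)
          · exact integrableOn_const measure_ball_lt_top.ne
      _ = ∫ y in ⋃ j ∈ Finset.univ.erase i, Metric.ball (sites j - sites i) (c / 2),
              2 * ‖y‖ * γ0 (‖y‖ / 2) := by
          rw [integral_biUnion_finset _ (fun _ _ => measurableSet_ball) hdisj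
            (fun _ _ => hF.integrableOn)]
      _ ≤ _ := setIntegral_le_integral hF (Eventually.of_forall hF0)
  refine ⟨key, fun ω hω i => ?_⟩
  refine le_trans ?_ (div_le_div_of_nonneg_right (key i) hω.le)
  rw [Finset.sum_div]
  apply Finset.sum_le_sum
  intro j hj
  have hd := hsep i j (Finset.ne_of_mem_erase hj).symm
  have h4 := hnonneg (dist (sites i) (sites j)) (by linarith)
  rw [mul_comm (dist (sites i) (sites j)), mul_div_assoc]
  apply mul_le_mul_of_nonneg_left _ h4
  linarith [le_max_left (1 - dist (sites i) (sites j) / ω) 0]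
end
end
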